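/- Let M be a compact connected boundaryless topological manifold of dimension 3 or 4 with a compatible metric and let f : M → M be an expansive homeomorphism such that the closure of Per_H equals M. Then all topologically hyperbolic periodic points of f have the same index: there exists r such that Per_H = Per_H^r. -/

import Mathlib

open Metric Set

variable {M : Type*} [MetricSpace M]

/-- Iterates of a homeomorphism, indexed by `ℤ`. -/
def iterZ (f : M ≃ₜ M) (k : ℤ) (x : M) : M := (f.toEquiv ^ k) x

/-- `f` is expansive with expansivity constant `α`. -/
def IsExpansive (f : M ≃ₜ M) (α : ℝ) : Prop :=
  ∀ x y : M, x ≠ y → ∃ k : ℤ, α < dist (iterZ f k x) (iterZ f k y)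

/-- Stable set of `x`. -/
def Ws (f : M ≃ₜ M) (x : M) : Set M :=
  {y | Filter.Tendsto (fun k : ℤ => dist (iterZ f k x) (iterZ f k y)) Filter.atTop (nhds 0)}

/-- Unstable set of `x`. -/
def Wu (f : M ≃ₜ M) (x : M) : Set M :=
  {y | Filter.Tendsto (fun k : ℤ => dist (iterZ f k x) (iterZ f k y)) Filter.atBot (nhds 0)}

/-- Local (`ε`-local) stable set of `x`. -/
def WsLoc (f : M ≃ₜ M) (ε : ℝ) (x : M) : Set M :=
  {y | ∀ k : ℤ, 0 ≤ k → dist (iterZ f k x) (iterZ f k y) ≤ ε}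

/-- Local (`ε`-local) unstable set of `x`. -/
def WuLoc (f : M ≃ₜ M) (ε : ℝ) (x : M) : Set M :=
  {y | ∀ k : ℤ, k ≤ 0 → dist (iterZ f k x) (iterZ f k y) ≤ ε}

/-- The model space `ℝ^r × ℝ^{n-r}`. -/
abbrev ModelSp (n r : ℕ) := (Fin r → ℝ) × (Fin (n - r) → ℝ)

/-- The model hyperbolic linear map `L(a,b) = (a/2, 2b)`. -/
noncomputable def modelL (n r : ℕ) : ModelSp n r → ModelSp n r :=
  fun q => (fun i => q.1 i / 2, fun i => 2 * q.2 i)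

/-- Topologically hyperbolic periodic points of index `r` (`Per_H^r`). -/
def PerHr (f : M ≃ₜ M) (n r : ℕ) : Set M :=
  {p | ∃ l : ℕ, 1 ≤ l ∧ (f.toEquiv ^ l) p = p ∧
    ∃ (U : Set M) (V : Set (ModelSp n r)) (h : U ≃ₜ V),
      IsOpen U ∧ IsOpen V ∧ (0 : ModelSp n r) ∈ V ∧
      ∃ hp : p ∈ U, ((h ⟨p, hp⟩ : V) : ModelSp n r) = 0 ∧
        ∀ z : M, ∀ hz : z ∈ U, ∀ hz' : (f.toEquiv ^ l) z ∈ U,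
          ((h ⟨(f.toEquiv ^ l) z, hz'⟩ : V) : ModelSp n r) = modelL n r (h ⟨z, hz⟩)}

/-- All topologically hyperbolic periodic points (`Per_H`). -/
def PerH (f : M ≃ₜ M) (n : ℕ) : Set M := ⋃ r ∈ Finset.range (n + 1), PerHr f n r

/-- `p` admits a local product structure. -/
def AdmitsLPS (f : M ≃ₜ M) (n : ℕ) (p : M) : Prop :=
  ∃ (k : ℕ) (h : (Fin k → ℝ) × (Fin (n - k) → ℝ) → M) (ε : ℝ),
    0 < ε ∧ Topology.IsEmbedding h ∧ p ∈ Set.range h ∧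
    ∀ x : Fin k → ℝ, ∀ y : Fin (n - k) → ℝ,
      h '' ({x} ×ˢ univ) = WsLoc f ε (h (x, y)) ∩ Set.range h ∧
      h '' (univ ×ˢ {y}) = WuLoc f ε (h (x, y)) ∩ Set.range h

/-!
At a hyperbolic periodic point the stable and unstable plaques cross, and a linking argument shows
that the crossing persists: the index of nearby hyperbolic points is at least that of the given one.
The same holds for `f⁻¹`. In codimension one more is true. Let `P` be the points of index `n - 1`
and `R` those of smaller index. Stable plaques of points of `P` separate small cells, and counting
the pieces into which they cut a cell bounds the number of points of `closure P ∩ closure R` with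
distinct local stable sets; by expansivity that intersection is then finite. A finite set does not
disconnect `M`, so `P` or `R` is empty. Sinks and sources are excluded by the density of periodic
points, so for `n ≤ 4` the only index not of codimension one for `f` or `f⁻¹` is `2`.
-/

open Topology

/-! ### The no-retraction theorem -/

section NoRetraction

open Filter MeasureTheory

variable {E : Type*} [NormedAddCommGroup E] [NormedSpace ℝ E]

theorem exists_matrix_det_one_add_eq_sum {K ι σ : Type*} [Field K] [Fintype ι] [DecidableEq ι]
    [Fintype σ] (hσ : Fintype.card ι < Fintype.card σ) {t : σ → K} (ht : Function.Injective t) :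
    ∃ c : σ → K, ∀ A : Matrix ι ι K, (1 + A).det = ∑ i, c i * (1 + t i • A).det := by
  classical
  refine ⟨fun i => (Lagrange.basis Finset.univ t i).eval 1, fun A => ?_⟩
  let P : Polynomial K :=
    ((Polynomial.X : Polynomial K) • A.map Polynomial.C
      + (1 : Matrix ι ι K).map Polynomial.C).det
  have eval_P (s : K) : P.eval s = (1 + s • A).det := by
    rw [← Polynomial.coe_evalRingHom, RingHom.map_det]
    congr 1
    ext i j
    by_cases hij : i = j <;> simp [RingHom.mapMatrix_apply, hij, add_comm, mul_comm s]
  have degree_P : P.degree < (Finset.univ : Finset σ).card :=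
    Polynomial.degree_le_natDegree.trans_lt <| by
      exact_mod_cast (Polynomial.natDegree_det_X_add_C_le A 1).trans_lt hσ
  calc (1 + A).det = P.eval 1 := by rw [eval_P, one_smul]
    _ = (Lagrange.interpolate Finset.univ t fun i => P.eval (t i)).eval 1 := by
      rw [← Lagrange.eq_interpolate ht.injOn degree_P]
    _ = _ := by
      simp only [Lagrange.interpolate_apply, Polynomial.eval_finsetSum, Polynomial.eval_mul,
        Polynomial.eval_C, eval_P, mul_comm]

theorem exists_linearMap_det_one_add_eq_sum {K V σ : Type*} [Field K] [AddCommGroup V] [Module K V]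
    [FiniteDimensional K V] [Fintype σ] (hσ : Module.finrank K V < Fintype.card σ) {t : σ → K}
    (ht : Function.Injective t) :
    ∃ c : σ → K, ∀ A : Module.End K V,
      LinearMap.det (1 + A) = ∑ i, c i * LinearMap.det (1 + t i • A) := by
  let b := Module.finBasis K V
  obtain ⟨c, hc⟩ := exists_matrix_det_one_add_eq_sum (ι := Fin (Module.finrank K V))
    (by rwa [Fintype.card_fin]) ht
  refine ⟨c, fun A => ?_⟩
  simpa only [← LinearMap.det_toMatrix b, map_add, map_smul, LinearMap.toMatrix_one]
    using hc (LinearMap.toMatrix b b A)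

theorem det_fderiv_eq_zero_of_norm_eq {F : Type*} [NormedAddCommGroup F] [InnerProductSpace ℝ F]
    [FiniteDimensional ℝ F] {R : F → F} {ρ : ℝ} (hρ : ρ ≠ 0) (hnorm : ∀ y, ‖R y‖ = ρ) {x : F}
    (hR : DifferentiableAt ℝ R x) : (fderiv ℝ R x).det = 0 := by
  have orthogonal (v : F) : inner ℝ (R x) (fderiv ℝ R x v) = 0 := by
    have hconst : (fun y => ‖R y‖ ^ 2) = fun _ => ρ ^ 2 := by simp only [hnorm]
    have hderiv := hR.hasFDerivAt.norm_sq
    rw [hconst] at hderiv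
    simpa using DFunLike.congr_fun (hderiv.unique (hasFDerivAt_const _ x)) v
  by_contra hdet
  obtain ⟨v, hv⟩ := (LinearMap.equivOfIsUnitDet (isUnit_iff_ne_zero.2 hdet)).surjective (R x)
  rw [LinearMap.equivOfIsUnitDet_apply, ContinuousLinearMap.coe_coe] at hv
  have hzero := orthogonal v
  rw [hv, inner_self_eq_zero] at hzero
  exact hρ (by rw [← hnorm x, hzero, norm_zero])

theorem image_ball_eq_ball [ProperSpace E] {g : E → E} {c : E} {ρ : ℝ}
    (hg : ContinuousOn g (closedBall c ρ)) (hopen : IsOpen (g '' ball c ρ))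
    (hmaps : MapsTo g (ball c ρ) (ball c ρ)) (hid : EqOn g id (sphere c ρ)) :
    g '' ball c ρ = ball c ρ := by
  refine hmaps.image_subset.antisymm ?_
  rcases (ball c ρ).eq_empty_or_nonempty with hempty | ⟨x, hx⟩
  · rw [hempty, image_empty]
  refine (convex_ball c ρ).isPreconnected.subset_of_closure_inter_subset hopen
    ⟨g x, hmaps hx, mem_image_of_mem g hx⟩ ?_
  rintro y ⟨hy, hyball⟩
  have hclosure : closure (g '' ball c ρ) ⊆ g '' closedBall c ρ :=
    closure_minimal (image_mono ball_subset_closedBall)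
      ((isCompact_closedBall c ρ).image_of_continuousOn hg).isClosed
  obtain ⟨z, hz, rfl⟩ := hclosure hy
  rcases ball_union_sphere.symm.subset hz with hz | hz
  · exact mem_image_of_mem g hz
  · rw [hid hz] at hyball
    exact absurd hz (mem_ball.1 hyball).ne

theorem injOn_and_isOpen_image_add [CompleteSpace E] {u : E → E} {s : Set E} {K : NNReal}
    (hu : LipschitzOnWith K u s) (hK : K < 1) (hs : IsOpen s) :
    InjOn (fun x => x + u x) s ∧ IsOpen ((fun x => x + u x) '' s) := by
  have happrox : ApproximatesLinearOn (fun x => x + u x)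
      (ContinuousLinearEquiv.refl ℝ E : E →L[ℝ] E) s K :=
    ApproximatesLinearOn.approximatesLinearOn_iff_lipschitzOnWith.2 <| by
      convert hu using 1
      ext x
      simp
  have hK' : Subsingleton E ∨ K < ‖((ContinuousLinearEquiv.refl ℝ E).symm : E →L[ℝ] E)‖₊⁻¹ := by
    rcases subsingleton_or_nontrivial E with h | h
    · exact .inl h
    · exact .inr <| by simpa using hK
  exact ⟨happrox.injOn hK', (happrox.toOpenPartialHomeomorph _ s hK' hs).open_target⟩

theorem setIntegral_det_eq_measureReal [FiniteDimensional ℝ E] [MeasurableSpace E] [BorelSpace E]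
    (μ : Measure E) [μ.IsAddHaarMeasure] {s : Set E} {g : E → E} {g' : E → E →L[ℝ] E}
    (hs : MeasurableSet s) (hg : ∀ x ∈ s, HasFDerivWithinAt g (g' x) s x) (hinj : InjOn g s)
    (himage : g '' s = s) (hpos : ∀ x ∈ s, 0 < (g' x).det) :
    ∫ x in s, (g' x).det ∂μ = μ.real s := by
  calc ∫ x in s, (g' x).det ∂μ = ∫ x in s, |(g' x).det| • (1 : ℝ) ∂μ :=
        setIntegral_congr_fun hs fun x hx => by
          simp only [abs_of_pos (hpos x hx), smul_eq_mul, mul_one]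
    _ = ∫ _ in g '' s, (1 : ℝ) ∂μ :=
        (integral_image_eq_integral_abs_det_fderiv_smul μ hs hg hinj fun _ => (1 : ℝ)).symm
    _ = μ.real s := by rw [himage, setIntegral_const, smul_eq_mul, mul_one]

theorem eventually_forall_det_one_add_smul_pos {X : Type*} [TopologicalSpace X] {K : Set X}
    (hK : IsCompact K) [FiniteDimensional ℝ E] {D : X → E →L[ℝ] E} (hD : Continuous D) :
    ∀ᶠ t in 𝓝 (0 : ℝ), ∀ x ∈ K, 0 < (1 + t • D x).det := by
  refine hK.eventually_forall_of_forall_eventually fun x _ => ?_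
  have hcont : Continuous fun z : ℝ × X => (1 + z.1 • D z.2).det :=
    ContinuousLinearMap.continuous_det.comp (by fun_prop)
  refine hcont.continuousAt.eventually (lt_mem_nhds ?_)
  simp [ContinuousLinearMap.det]

theorem eventually_lipschitzOnWith_smul {u : E → E} {s : Set E} {K : NNReal}
    (hu : LipschitzOnWith K u s) :
    ∀ᶠ t in 𝓝 (0 : ℝ), ∃ K' : NNReal, K' < 1 ∧ LipschitzOnWith K' (fun x => t • u x) s := by
  have htendsto : Tendsto (fun t : ℝ => ‖t‖₊ * K) (𝓝 0) (𝓝 0) := by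
    have : Continuous fun t : ℝ => ‖t‖₊ * K := by fun_prop
    simpa using this.tendsto 0
  filter_upwards [htendsto.eventually (gt_mem_nhds zero_lt_one)] with t ht
  exact ⟨_, ht, (lipschitzWith_smul t).comp_lipschitzOnWith hu⟩

theorem mapsTo_ball_add_smul {R : E → E} {ρ t : ℝ} (hR : ∀ x, ‖R x‖ ≤ ρ) (ht₀ : 0 ≤ t)
    (ht₁ : t < 1) : MapsTo (fun x => x + t • (R x - x)) (ball 0 ρ) (ball 0 ρ) := by
  intro x hx
  rw [mem_ball_zero_iff] at hx ⊢
  calc ‖x + t • (R x - x)‖ = ‖(1 - t) • x + t • R x‖ := by congr 1; module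
    _ ≤ (1 - t) * ‖x‖ + t * ‖R x‖ := by
      refine (norm_add_le _ _).trans_eq ?_
      rw [norm_smul, norm_smul, Real.norm_of_nonneg ht₀, Real.norm_of_nonneg (by linarith)]
    _ ≤ (1 - t) * ‖x‖ + t * ρ := by gcongr; exact hR x
    _ < ρ := by nlinarith

theorem eventually_integral_det_eq [FiniteDimensional ℝ E] [MeasurableSpace E] [BorelSpace E]
    (μ : Measure E) [μ.IsAddHaarMeasure] {R : E → E} (hR : ContDiff ℝ 1 R) {ρ : ℝ}
    (hnorm : ∀ x, ‖R x‖ ≤ ρ) (hid : EqOn R id (sphere 0 ρ)) :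
    ∀ᶠ t in 𝓝[>] (0 : ℝ),
      ∫ x in ball 0 ρ, (1 + t • (fderiv ℝ R x - 1)).det ∂μ = μ.real (ball 0 ρ) := by
  have hD : Continuous fun x => fderiv ℝ R x - 1 :=
    (hR.continuous_fderiv one_ne_zero).sub continuous_const
  obtain ⟨K, hK⟩ := (hR.sub contDiff_id).contDiffOn.exists_lipschitzOnWith one_ne_zero
    (convex_closedBall (0 : E) ρ) (isCompact_closedBall 0 ρ)
  filter_upwards [self_mem_nhdsWithin, nhdsWithin_le_nhds (gt_mem_nhds zero_lt_one),
    nhdsWithin_le_nhds (eventually_forall_det_one_add_smul_pos (isCompact_closedBall 0 ρ) hD),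
    nhdsWithin_le_nhds (eventually_lipschitzOnWith_smul (hK.mono ball_subset_closedBall))]
    with t ht₀ ht₁ hdet ⟨K', hK'₁, hK'⟩
  obtain ⟨hinj, hopen⟩ := injOn_and_isOpen_image_add hK' hK'₁ isOpen_ball
  have hcont : Continuous fun x => x + t • (R x - x) := by
    have := hR.continuous
    fun_prop
  have himage := image_ball_eq_ball hcont.continuousOn hopen
    (mapsTo_ball_add_smul hnorm (le_of_lt ht₀) ht₁) fun x hx => by simp [hid hx]
  have hderiv (x : E) : HasFDerivAt (fun x => x + t • (R x - x))
      (1 + t • (fderiv ℝ R x - 1)) x :=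
    (hasFDerivAt_id x).add
      (((hR.differentiable one_ne_zero x).hasFDerivAt.sub (hasFDerivAt_id x)).const_smul t)
  exact setIntegral_det_eq_measureReal μ measurableSet_ball
    (fun x _ => (hderiv x).hasFDerivWithinAt) hinj himage
    fun x hx => hdet x (ball_subset_closedBall hx)

-- `t ↦ ∫ det (1 + t (DR - 1))` is a polynomial: it equals the volume of the ball for small `t > 0`,
-- whereas it vanishes at `t = 1`.
theorem not_eqOn_id_sphere_of_norm_eq {F : Type*} [NormedAddCommGroup F] [InnerProductSpace ℝ F]
    [FiniteDimensional ℝ F] {R : F → F} (hR : ContDiff ℝ 1 R) {ρ : ℝ} (hρ : 0 < ρ)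
    (hnorm : ∀ x, ‖R x‖ = ρ) : ¬ EqOn R id (sphere 0 ρ) := by
  intro hid
  borelize F
  let μ : Measure F := Measure.addHaar
  have hsmall := eventually_integral_det_eq μ hR (fun x => (hnorm x).le) hid
  obtain ⟨ε, hε, hsub⟩ := mem_nhdsGT_iff_exists_Ioo_subset.1 hsmall
  let t : ℕ ↪ Ioo 0 ε := (Ioo_infinite hε).natEmbedding
  obtain ⟨c, hc⟩ := exists_linearMap_det_one_add_eq_sum (K := ℝ) (V := F)
    (σ := Fin (Module.finrank ℝ F + 1)) (by simp) (t := fun i => (t i : ℝ))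
    (Subtype.val_injective.comp (t.injective.comp Fin.val_injective))
  have sum_c : ∑ i, c i = 1 := by simpa using (hc 0).symm
  let D (x : F) : F →L[ℝ] F := fderiv ℝ R x - 1
  have det_D (x : F) : ∑ i, c i * (1 + (t i : ℝ) • D x).det = 0 := by
    have hdet := det_fderiv_eq_zero_of_norm_eq hρ.ne' hnorm (hR.differentiable one_ne_zero x)
    rw [← add_sub_cancel 1 (fderiv ℝ R x)] at hdet
    exact (hc (D x)).symm.trans hdet
  have hintegrable (i : Fin (Module.finrank ℝ F + 1)) :
      IntegrableOn (fun x => c i * (1 + (t i : ℝ) • D x).det) (ball 0 ρ) μ := by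
    have hD : Continuous D := (hR.continuous_fderiv one_ne_zero).sub continuous_const
    have hcont : Continuous fun x => c i * (1 + (t i : ℝ) • D x).det :=
      continuous_const.mul (ContinuousLinearMap.continuous_det.comp (by fun_prop))
    exact (hcont.continuousOn.integrableOn_compact (isCompact_closedBall 0 ρ)).mono_set
      ball_subset_closedBall
  have integral_t (i : ℕ) :
      ∫ x in ball 0 ρ, (1 + (t i : ℝ) • (fderiv ℝ R x - 1)).det ∂μ = μ.real (ball 0 ρ) :=
    hsub (t i).2
  have hvolume : μ.real (ball (0 : F) ρ) = 0 := by
    calc μ.real (ball 0 ρ)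
        = ∑ i, c i * ∫ x in ball 0 ρ, (1 + (t i : ℝ) • D x).det ∂μ := by
          simp_rw [D, integral_t, ← Finset.sum_mul, sum_c, one_mul]
      _ = ∫ x in ball 0 ρ, ∑ i, c i * (1 + (t i : ℝ) • D x).det ∂μ := by
          rw [integral_finsetSum _ fun i _ => hintegrable i]
          simp only [integral_const_mul]
      _ = 0 := by simp only [det_D, integral_zero]
  exact (ENNReal.toReal_pos (measure_ball_pos μ 0 hρ).ne' measure_ball_lt_top.ne).ne' hvolume

theorem exists_eq_zero_of_eventually_eq_self_inner {F : Type*} [NormedAddCommGroup F]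
    [InnerProductSpace ℝ F] [FiniteDimensional ℝ F] {H : F → F} (hH : Continuous H)
    (hid : ∀ᶠ x in cocompact F, H x = x) : ∃ x, H x = 0 := by
  by_contra! hne
  obtain ⟨r, hr, hid⟩ : ∃ r > 1, ∀ x, r - 1 ≤ ‖x‖ → H x = x := by
    rw [← cobounded_eq_cocompact, ← comap_norm_atTop, eventually_comap, eventually_atTop] at hid
    obtain ⟨r, hr⟩ := hid
    exact ⟨max r 1 + 1, by simp, fun x hx => hr ‖x‖ (le_of_max_le_left (by simpa using hx)) x rfl⟩
  have hsmooth : ContDiffOn ℝ 1 H {x | r - 1 < ‖x‖} :=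
    contDiffOn_id.congr fun x hx => hid x (le_of_lt hx)
  obtain ⟨g, hg, hdist, heq, -⟩ := hH.exists_contDiff_approx_and_eqOn 1 hH.norm
    (fun x => norm_pos_iff.2 (hne x)) (isClosed_le continuous_const continuous_norm)
    ((isOpen_lt continuous_const continuous_norm).mem_nhdsSet.2
      (fun x (hx : r ≤ ‖x‖) => (sub_one_lt r).trans_le hx)) hsmooth
  have hg₀ (x : F) : g x ≠ 0 := by
    intro h
    simpa [h] using hdist x
  have hR : ContDiff ℝ 1 fun x => (r / ‖g x‖) • g x :=
    (contDiff_const.div (hg.norm ℝ hg₀) fun x => norm_ne_zero_iff.2 (hg₀ x)).smul hg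
  refine not_eqOn_id_sphere_of_norm_eq hR (ρ := r) (by linarith) (fun x => ?_) fun x hx => ?_
  · rw [norm_smul, norm_div, norm_norm, Real.norm_of_nonneg (by linarith),
      div_mul_cancel₀ _ (norm_ne_zero_iff.2 (hg₀ x))]
  · rw [mem_sphere_zero_iff_norm] at hx
    have hgx : g x = x := (heq hx.ge).trans (hid x (by linarith))
    simp only [hgx, hx, div_self (by linarith : r ≠ 0), one_smul, id_eq]

theorem exists_eq_zero_of_eventually_eq_self [FiniteDimensional ℝ E] {H : E → E}
    (hH : Continuous H) (hid : ∀ᶠ x in cocompact E, H x = x) : ∃ x, H x = 0 := by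
  let L : E ≃L[ℝ] EuclideanSpace ℝ (Fin (Module.finrank ℝ E)) := toEuclidean
  obtain ⟨y, hy⟩ := exists_eq_zero_of_eventually_eq_self_inner
    (H := fun y => L (H (L.symm y))) (by fun_prop) <| by
      filter_upwards [L.symm.toHomeomorph.isClosedEmbedding.tendsto_cocompact.eventually hid]
        with y hy
      exact (congrArg L hy).trans (L.apply_symm_apply y)
  exact ⟨L.symm y, by simpa using hy⟩

/-- The complement of the origin in `E`, as a type. -/
abbrev PuncturedSpace (E : Type*) [Zero E] := {x : E // x ≠ 0}

theorem not_contractibleSpace_puncturedSpace [FiniteDimensional ℝ E] :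
    ¬ ContractibleSpace (PuncturedSpace E) := by
  rw [contractible_iff_id_nullhomotopic]
  rintro ⟨c, ⟨K⟩⟩
  classical
  let T (x : E) : unitInterval := projIcc 0 1 zero_le_one (2 - ‖x‖)
  let H (x : E) : E := if hx : x = 0 then c else K (T x, ⟨x, hx⟩)
  have hH : Continuous H := by
    refine continuous_iff_continuousAt.2 fun x => ?_
    rcases eq_or_ne x 0 with rfl | hx
    · refine (continuousAt_const (y := (c : E))).congr ?_
      filter_upwards [ball_mem_nhds (0 : E) one_pos] with y hy
      have hT : T y = 1 := projIcc_of_right_le _ (by linarith [mem_ball_zero_iff.1 hy])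
      by_cases h : y = 0 <;> simp [H, h, hT]
    · have hdomRestrict :
          ({0}ᶜ : Set E).domRestrict H = fun y : PuncturedSpace E => (K (T y, y) : E) := by
        ext y
        exact dif_neg y.2
      have hT : Continuous T := continuous_projIcc.comp (by fun_prop)
      have hcont : ContinuousOn H {0}ᶜ :=
        continuousOn_iff_continuous_domRestrict.2 (hdomRestrict ▸ by fun_prop)
      exact hcont.continuousAt (isOpen_compl_singleton.mem_nhds hx)
  obtain ⟨x, hx⟩ := exists_eq_zero_of_eventually_eq_self hH <| by
    rw [← cobounded_eq_cocompact]
    filter_upwards [eventually_cobounded_le_norm 2] with x hx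
    have hx₀ : x ≠ 0 := norm_pos_iff.1 (by linarith)
    have hT : T x = 0 := projIcc_of_le_left _ (by linarith)
    simp [H, hx₀, hT]
  by_cases h : x = 0
  · exact c.2 (by simpa [H, h] using hx)
  · exact (K (T x, ⟨x, h⟩)).2 (by simpa [H, h] using hx)

omit [NormedSpace ℝ E] in
theorem homotopic_of_forall_ne_zero {X : Type*} [TopologicalSpace X] {f g : C(X, PuncturedSpace E)}
    {H : unitInterval × X → E} (hH : Continuous H) (hne : ∀ z, H z ≠ 0) (h₀ : ∀ x, H (0, x) = f x)
    (h₁ : ∀ x, H (1, x) = g x) : f.Homotopic g :=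
  ⟨⟨⟨fun z => ⟨H z, hne z⟩, hH.subtype_mk _⟩, fun x => Subtype.ext (h₀ x),
    fun x => Subtype.ext (h₁ x)⟩⟩

theorem homotopic_of_eq_smul {X : Type*} [TopologicalSpace X] {f g : C(X, PuncturedSpace E)}
    {c : X → ℝ} (hc : ∀ x, 0 < c x) (hg : ∀ x, (g x : E) = c x • (f x : E)) : f.Homotopic g := by
  refine homotopic_of_forall_ne_zero
    (H := fun z => (1 - (z.1 : ℝ)) • (f z.2 : E) + (z.1 : ℝ) • (g z.2 : E)) (by fun_prop) ?_
    (by simp) (by simp)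
  rintro ⟨⟨t, ht₀, ht₁⟩, x⟩
  have hpos : 0 < 1 - t + t * c x := by
    rcases ht₀.eq_or_lt with rfl | ht
    · simp
    · nlinarith [mul_pos ht (hc x)]
  have heq : (1 - t) • (f x : E) + t • (g x : E) = (1 - t + t * c x) • (f x : E) := by
    rw [hg]
    module
  exact heq ▸ smul_ne_zero hpos.ne' (f x).2

theorem exists_homotopic_id_smul {c : E → ℝ} (hc : ContinuousOn c {0}ᶜ)
    (hpos : ∀ x, x ≠ 0 → 0 < c x) :
    ∃ g : C(PuncturedSpace E, PuncturedSpace E), (∀ x, (g x : E) = c x • (x : E)) ∧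
      (ContinuousMap.id _).Homotopic g :=
  have hg : Continuous fun x : PuncturedSpace E => c x • (x : E) :=
    (continuousOn_iff_continuous_domRestrict.1 hc).smul continuous_subtype_val
  ⟨⟨fun x => ⟨c x • (x : E), smul_ne_zero (hpos x x.2).ne' x.2⟩, hg.subtype_mk _⟩,
    fun _ => rfl, homotopic_of_eq_smul (fun x => hpos x x.2) fun _ => rfl⟩

end NoRetraction

/-- `g` restricts to an open topological embedding of the open set `s`. -/
structure IsOpenEmbeddingOn {X Y : Type*} [TopologicalSpace X] [TopologicalSpace Y] (g : X → Y)
    (s : Set X) : Prop where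
  isOpen : IsOpen s
  continuousOn : ContinuousOn g s
  injOn : InjOn g s
  isOpen_image {O : Set X} (hO : O ⊆ s) (hO' : IsOpen O) : IsOpen (g '' O)

namespace IsOpenEmbeddingOn

variable {X Y Z : Type*} [TopologicalSpace X] [TopologicalSpace Y] [TopologicalSpace Z] {g : X → Y}
  {s : Set X}

theorem of_homeomorph (e : X ≃ₜ Y) (hs : IsOpen s) : IsOpenEmbeddingOn e s :=
  ⟨hs, e.continuous.continuousOn, e.injective.injOn, fun _ => e.isOpenMap _⟩

theorem mono {t : Set X} (hg : IsOpenEmbeddingOn g s) (ht : IsOpen t) (hts : t ⊆ s) :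
    IsOpenEmbeddingOn g t :=
  ⟨ht, hg.continuousOn.mono hts, hg.injOn.mono hts, fun hO => hg.isOpen_image (hO.trans hts)⟩

theorem comp {k : Y → Z} {t : Set Y} (hk : IsOpenEmbeddingOn k t) (hg : IsOpenEmbeddingOn g s)
    (hst : MapsTo g s t) : IsOpenEmbeddingOn (k ∘ g) s where
  isOpen := hg.isOpen
  continuousOn := hk.continuousOn.comp hg.continuousOn hst
  injOn := hk.injOn.comp hg.injOn hst
  isOpen_image hO hO' := by
    rw [image_comp]
    exact hk.isOpen_image (image_subset_iff.2 fun x hx => hst (hO hx)) (hg.isOpen_image hO hO')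

theorem of_leftInvOn (hg : IsOpenEmbeddingOn g s) {k : Y → X} (hk : LeftInvOn k g s) :
    IsOpenEmbeddingOn k (g '' s) where
  isOpen := hg.isOpen_image Subset.rfl hg.isOpen
  continuousOn := by
    refine continuousOn_iff'.2 fun t ht =>
      ⟨g '' (t ∩ s), hg.isOpen_image inter_subset_right (ht.inter hg.isOpen), ?_⟩
    rw [inter_eq_left.2 (image_mono inter_subset_right)]
    ext y
    constructor
    · rintro ⟨hy, x, hx, rfl⟩
      exact ⟨x, ⟨by rwa [mem_preimage, hk hx] at hy, hx⟩, rfl⟩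
    · rintro ⟨x, ⟨hxt, hxs⟩, rfl⟩
      exact ⟨by rwa [mem_preimage, hk hxs], x, hxs, rfl⟩
  injOn := hk.rightInvOn_image.injOn
  isOpen_image {O} hO hO' := by
    have himage : k '' O = s ∩ g ⁻¹' O := by
      ext x
      constructor
      · rintro ⟨y, hy, rfl⟩
        obtain ⟨x, hx, rfl⟩ := hO hy
        rw [hk hx]
        exact ⟨hx, hy⟩
      · rintro ⟨hx, hx'⟩
        exact ⟨g x, hx', hk hx⟩
    rw [himage]
    exact hg.continuousOn.isOpen_inter_preimage hg.isOpen hO'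

theorem exists_leftInvOn [Nonempty X] (hg : IsOpenEmbeddingOn g s) :
    ∃ k : Y → X, IsOpenEmbeddingOn k (g '' s) ∧ LeftInvOn k g s :=
  have hk := hg.injOn.leftInvOn_invFunOn
  ⟨_, hg.of_leftInvOn hk, hk⟩

end IsOpenEmbeddingOn

section Linking

variable {A B E F : Type*} [NormedAddCommGroup A] [NormedSpace ℝ A] [NormedAddCommGroup B]
  [NormedSpace ℝ B] [NormedAddCommGroup E] [NormedSpace ℝ E] [NormedAddCommGroup F]
  [NormedSpace ℝ F]

omit [NormedSpace ℝ A] [NormedSpace ℝ E] in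
theorem homotopic_of_injOn_ball {X : Type*} [TopologicalSpace X] {φ : A × B → E} {r : ℝ}
    (hφ : ContinuousOn φ (ball 0 r)) (hinj : InjOn φ (ball 0 r)) {ξ : X → A × B}
    (hξ : Continuous ξ) (hξ₀ : ∀ x, ξ x ≠ 0) (hξr : ∀ x, ξ x ∈ ball 0 r)
    {f g : C(X, PuncturedSpace E)} (hf : ∀ x, (f x : E) = φ ((ξ x).1, -(ξ x).2) - φ 0)
    (hg : ∀ x, (g x : E) = φ ((ξ x).1, 0) - φ (0, (ξ x).2)) : f.Homotopic g := by
  have hmem (w : unitInterval × X) :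
      ((ξ w.2).1, -((1 - (w.1 : ℝ)) • (ξ w.2).2)) ∈ ball (0 : A × B) r ∧
        (0, (w.1 : ℝ) • (ξ w.2).2) ∈ ball (0 : A × B) r := by
    have hle {c : ℝ} (hc₀ : 0 ≤ c) (hc₁ : c ≤ 1) : ‖c • (ξ w.2).2‖ < r := by
      rw [norm_smul, Real.norm_of_nonneg hc₀]
      exact (mul_le_of_le_one_left (norm_nonneg _) hc₁).trans_lt
        ((norm_snd_le _).trans_lt (mem_ball_zero_iff.1 (hξr w.2)))
    have hfst := (norm_fst_le _).trans_lt (mem_ball_zero_iff.1 (hξr w.2))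
    simp only [mem_ball_zero_iff, Prod.norm_mk, norm_neg, norm_zero]
    exact ⟨max_lt hfst (hle (by linarith [w.1.2.2]) (by linarith [w.1.2.1])),
      max_lt ((norm_nonneg _).trans_lt hfst) (hle w.1.2.1 w.1.2.2)⟩
  refine homotopic_of_forall_ne_zero
    (H := fun w => φ ((ξ w.2).1, -((1 - (w.1 : ℝ)) • (ξ w.2).2)) - φ (0, (w.1 : ℝ) • (ξ w.2).2))
    ?_ (fun w hw => ?_) (fun x => ?_) fun x => ?_
  · exact (hφ.comp_continuous (by fun_prop) fun w => (hmem w).1).sub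
      (hφ.comp_continuous (by fun_prop) fun w => (hmem w).2)
  · have heq := hinj (hmem w).1 (hmem w).2 (sub_eq_zero.1 hw)
    obtain ⟨h₁, h₂⟩ := Prod.mk.inj heq
    refine hξ₀ w.2 (Prod.ext h₁ ?_)
    calc (ξ w.2).2 = (w.1 : ℝ) • (ξ w.2).2 - -((1 - (w.1 : ℝ)) • (ξ w.2).2) := by module
      _ = 0 := by rw [h₂, sub_self]
  · simp [hf, ← Prod.zero_eq_mk]
  · simp [hg]

omit [NormedSpace ℝ A] in
theorem not_nullhomotopic_of_eventually_eq_sub [FiniteDimensional ℝ E] {φ : A × B → E}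
    {s : Set (A × B)} (hφ : IsOpenEmbeddingOn φ s) (hs : 0 ∈ s)
    {G : C(PuncturedSpace (A × B), PuncturedSpace E)}
    (hG : ∀ᶠ z in 𝓝 (0 : A × B), ∀ hz : z ≠ 0, (G ⟨z, hz⟩ : E) = φ (z.1, 0) - φ (0, z.2)) :
    ¬ G.Nullhomotopic := by
  intro hnull
  obtain ⟨r, hr, hball⟩ := Metric.eventually_nhds_iff_ball.1 (hG.and (hφ.isOpen.mem_nhds hs))
  let ψ : A × B → E := (Homeomorph.subRight (φ 0)) ∘ φ ∘
    ((Homeomorph.refl A).prodCongr (Homeomorph.neg B))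
  have hψ : IsOpenEmbeddingOn ψ (ball 0 r) := by
    refine (IsOpenEmbeddingOn.of_homeomorph _ isOpen_univ).comp ((hφ.comp
      (IsOpenEmbeddingOn.of_homeomorph _ isOpen_ball) fun z hz => ?_)) (mapsTo_univ _ _)
    exact (hball _ (by simpa [Prod.norm_def] using hz)).2
  obtain ⟨k, hk, hkψ⟩ := hψ.exists_leftInvOn
  have h₀ : (0 : A × B) ∈ ball (0 : A × B) r := mem_ball_self hr
  have hψ₀ : ψ 0 = 0 := by simp [ψ, ← Prod.zero_eq_mk, Prod.map]
  obtain ⟨δ, hδ, hsub⟩ := Metric.isOpen_iff.1 hk.isOpen 0 ⟨0, h₀, hψ₀⟩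
  obtain ⟨radial, hradial, radial_homotopic⟩ := exists_homotopic_id_smul (E := E)
    (c := fun y => δ / 2 / ‖y‖)
    (continuousOn_const.div continuous_norm.continuousOn fun y hy => norm_ne_zero_iff.2 hy)
    fun y hy => div_pos (half_pos hδ) (norm_pos_iff.2 hy)
  have radial_mem (y : PuncturedSpace E) : (radial y : E) ∈ ψ '' ball 0 r := by
    refine hsub (mem_ball_zero_iff.2 ?_)
    rw [hradial, norm_smul, norm_div, norm_norm, div_mul_cancel₀ _ (norm_ne_zero_iff.2 y.2),
      Real.norm_of_nonneg (half_pos hδ).le]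
    exact half_lt_self hδ
  have hkr (y : PuncturedSpace E) : k (radial y) ∈ ball 0 r ∧ ψ (k (radial y)) = radial y := by
    obtain ⟨z, hz, hzy⟩ := radial_mem y
    rw [← hzy, hkψ hz]
    exact ⟨hz, rfl⟩
  let ξ : C(PuncturedSpace E, PuncturedSpace (A × B)) :=
    ⟨fun y => ⟨k (radial y), fun h => (radial y).2 <| by rw [← (hkr y).2, h, hψ₀]⟩,
      (hk.continuousOn.comp_continuous (by fun_prop) radial_mem).subtype_mk _⟩
  have homotopic : radial.Homotopic (G.comp ξ) := by
    refine homotopic_of_injOn_ball (hφ.continuousOn.mono fun z hz => (hball z hz).2)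
      (hφ.injOn.mono fun z hz => (hball z hz).2) (continuous_subtype_val.comp ξ.continuous)
      (fun y => (ξ y).2) (fun y => (hkr y).1) (fun y => (hkr y).2.symm) fun y => ?_
    exact (hball _ (hkr y).1).1 (ξ y).2
  exact not_contractibleSpace_puncturedSpace <| (contractible_iff_id_nullhomotopic _).2 <|
    (hnull.comp_left ξ).imp fun _ hc => (radial_homotopic.trans homotopic).trans hc

omit [NormedSpace ℝ E] in
theorem nullhomotopic_of_fst_eq {K : A → E × F} (hK : Continuous K) {a : A → E}
    (ha : Continuous a) (ha₀ : ∀ z, a z ≠ 0) (hKa : ∀ z, 1 ≤ ‖z‖ → (K z).1 = a z)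
    {G : C(PuncturedSpace A, PuncturedSpace (E × F))} (hG : ∀ z, (G z : E × F) = K z) :
    G.Nullhomotopic := by
  obtain ⟨stretch, hstretch, stretch_homotopic⟩ := exists_homotopic_id_smul (E := A)
    (c := fun z => 1 + 1 / ‖z‖) (continuousOn_const.add
      (continuousOn_const.div continuous_norm.continuousOn fun y hy => norm_ne_zero_iff.2 hy))
    fun z _ => by positivity
  have one_le_norm (z : PuncturedSpace A) : 1 ≤ ‖(stretch z : A)‖ := by
    have hz : 0 < ‖(z : A)‖ := norm_pos_iff.2 z.2
    rw [hstretch, norm_smul, Real.norm_of_nonneg (by positivity), add_mul,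
      one_div_mul_cancel hz.ne']
    linarith
  refine ⟨⟨(a 0, 0), fun h => ha₀ 0 (congrArg Prod.fst h)⟩,
    .trans (.comp (.refl G) stretch_homotopic) (homotopic_of_forall_ne_zero
      (H := fun w => (a ((1 - (w.1 : ℝ)) • (stretch w.2 : A)),
        (1 - (w.1 : ℝ)) • (K (stretch w.2)).2)) (by fun_prop)
      (fun w h => ha₀ _ (congrArg Prod.fst h)) (fun z => ?_) fun z => by simp)⟩
  simp [hG, ← hKa _ (one_le_norm z)]

theorem exists_continuous_ne_zero_dist_lt [FiniteDimensional ℝ A] [FiniteDimensional ℝ E]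
    (hfinrank : Module.finrank ℝ A < Module.finrank ℝ E) {a : A → E} (ha : Continuous a) {ε : ℝ}
    (hε : 0 < ε) : ∃ b : A → E, Continuous b ∧ (∀ u, b u ≠ 0) ∧ ∀ u, dist (b u) (a u) < ε := by
  obtain ⟨g, hg, hga, -⟩ := ha.exists_contDiff_approx 1 (ε := fun _ => ε / 2) continuous_const
    fun _ => half_pos hε
  obtain ⟨c, hcg, hc⟩ := (hg.dense_compl_range_of_finrank_lt_finrank hfinrank).exists_dist_lt 0
    (half_pos hε)
  refine ⟨fun u => g u - c, hg.continuous.sub continuous_const,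
    fun u hu => hcg ⟨u, sub_eq_zero.1 hu⟩, fun u => ?_⟩
  calc dist (g u - c) (a u) ≤ dist (g u - c) (g u) + dist (g u) (a u) := dist_triangle _ _ _
    _ < ε / 2 + ε / 2 := add_lt_add (by simpa [dist_eq_norm] using hc) (hga u)
    _ = ε := add_halves ε

-- `b` is a small nowhere vanishing perturbation of `a`, stretched so that its norm is at least `ρ`.
theorem exists_continuous_le_norm_lt_norm_segment [FiniteDimensional ℝ A] [FiniteDimensional ℝ E]
    (hfinrank : Module.finrank ℝ A < Module.finrank ℝ E) {a : A → E} (ha : Continuous a) {ρ : ℝ}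
    (hρ : 0 < ρ) :
    ∃ b : A → E, Continuous b ∧ (∀ u, ρ ≤ ‖b u‖) ∧
      ∀ u, ρ / 2 ≤ ‖a u‖ → ∀ l ∈ Icc (0 : ℝ) 1, ρ / 4 < ‖(1 - l) • a u + l • b u‖ := by
  obtain ⟨g, hg, hg₀, hga⟩ := exists_continuous_ne_zero_dist_lt hfinrank ha
    (by positivity : 0 < ρ / 8)
  let κ (u : A) : ℝ := max 1 (ρ / ‖g u‖)
  have hκ : Continuous κ :=
    continuous_const.max (continuous_const.div hg.norm fun u => norm_ne_zero_iff.2 (hg₀ u))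
  have one_le_κ (u : A) : 1 ≤ κ u := le_max_left _ _
  refine ⟨fun u => κ u • g u, hκ.smul hg, fun u => ?_, fun u hu l hl => ?_⟩
  · calc ρ = ρ / ‖g u‖ * ‖g u‖ := (div_mul_cancel₀ _ (norm_ne_zero_iff.2 (hg₀ u))).symm
      _ ≤ κ u * ‖g u‖ := by gcongr; exact le_max_right _ _
      _ = ‖κ u • g u‖ := by
        rw [norm_smul, Real.norm_of_nonneg (zero_le_one.trans (one_le_κ u))]
  · let μ := 1 - l + l * κ u
    have hμ : 1 ≤ μ := by nlinarith [one_le_κ u, hl.1]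
    have hlκ : 0 ≤ l * κ u := mul_nonneg hl.1 (zero_le_one.trans (one_le_κ u))
    have heq : (1 - l) • a u + l • κ u • g u = μ • a u - (l * κ u) • (a u - g u) := by
      simp only [μ]
      module
    have hdist : l * κ u * ‖a u - g u‖ ≤ μ * (ρ / 8) := by
      have := hga u
      rw [dist_eq_norm, norm_sub_rev] at this
      exact mul_le_mul (by linarith [hl.2]) this.le (norm_nonneg _) (by linarith)
    calc ρ / 4 < μ * (ρ / 2) - μ * (ρ / 8) := by nlinarith
      _ ≤ μ * ‖a u‖ - l * κ u * ‖a u - g u‖ := by gcongr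
      _ = ‖μ • a u‖ - ‖(l * κ u) • (a u - g u)‖ := by
        rw [norm_smul, norm_smul, Real.norm_of_nonneg hlκ, Real.norm_of_nonneg (by linarith)]
      _ ≤ ‖(1 - l) • a u + l • κ u • g u‖ := heq ▸ norm_sub_norm_le _ _

/-- An almost horizontal disc crossing a box in `E × F`: the map `(h, v)`, defined on a
neighbourhood `Ω` of `0` in the unit ball, has vertical component `v` at most `ρ / 4`, and
horizontal component `h` at least `ρ` on the boundary of `Ω`. Vertical discs are described by
exchanging the components. -/
structure IsSpanningDisc (ρ : ℝ) (Ω : Set A) (h : A → E) (v : A → F) : Prop where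
  isOpen : IsOpen Ω
  zero_mem : 0 ∈ Ω
  subset_ball : Ω ⊆ ball 0 1
  continuousOn_fst : ContinuousOn h (closure Ω)
  continuousOn_snd : ContinuousOn v (closure Ω)
  norm_snd_le {u : A} (hu : u ∈ closure Ω) : ‖v u‖ ≤ ρ / 4
  le_norm_fst {u : A} (hu : u ∈ closure Ω) (hu' : u ∉ Ω) : ρ ≤ ‖h u‖

omit [NormedSpace ℝ A] in
theorem IsSpanningDisc.exists_continuous_extension [FiniteDimensional ℝ E] [FiniteDimensional ℝ F]
    {ρ : ℝ} (hρ : 0 < ρ) {Ω : Set A} {h : A → E} {v : A → F} (hd : IsSpanningDisc ρ Ω h v) :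
    ∃ (h' : A → E) (v' : A → F), Continuous h' ∧ Continuous v' ∧ EqOn h' h (closure Ω) ∧
      EqOn v' v (closure Ω) ∧ ∀ u, ‖v' u‖ ≤ ρ / 4 := by
  have : TietzeExtension E := .of_tvs ℝ
  have : TietzeExtension (closedBall (0 : F) (ρ / 4)) :=
    Metric.instTietzeExtensionClosedBall ℝ 0 (by positivity)
  obtain ⟨h', hh'⟩ := ContinuousMap.exists_restrict_eq isClosed_closure
    ⟨_, continuousOn_iff_continuous_domRestrict.1 hd.continuousOn_fst⟩
  obtain ⟨v', hv', hvv'⟩ := ContinuousMap.exists_forall_mem_restrict_eq isClosed_closure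
    ⟨_, continuousOn_iff_continuous_domRestrict.1 hd.continuousOn_snd⟩
    (t := closedBall (0 : F) (ρ / 4)) fun u => mem_closedBall_zero_iff.2 (hd.norm_snd_le u.2)
  exact ⟨h', v', h'.continuous, v'.continuous, fun u hu => DFunLike.congr_fun hh' ⟨u, hu⟩,
    fun u hu => DFunLike.congr_fun hvv' ⟨u, hu⟩, fun u => mem_closedBall_zero_iff.1 (hv' u)⟩

omit [NormedSpace ℝ A] [NormedSpace ℝ E] [NormedSpace ℝ F] in
theorem IsSpanningDisc.eventually_norm_fst_lt {ρ : ℝ} (hρ : 0 < ρ) {Ω : Set A} {h : A → E}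
    {v : A → F} (hd : IsSpanningDisc ρ Ω h v) (h₀ : ‖h 0‖ ≤ ρ / 4) :
    ∀ᶠ u in 𝓝 0, ‖h u‖ < ρ / 2 :=
  (hd.continuousOn_fst.mono subset_closure).continuousAt (hd.isOpen.mem_nhds hd.zero_mem)
    |>.norm.eventually_lt_const (h₀.trans_lt (by linarith))

omit [NormedSpace ℝ A] [NormedSpace ℝ B] [NormedSpace ℝ E] [NormedSpace ℝ F] in
theorem IsSpanningDisc.exists_cutoff {ρ : ℝ} (hρ : 0 < ρ) {Ω : Set A} {Ω' : Set B} {X₁ : A → E}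
    {X₂ : A → F} {Y₁ : B → E} {Y₂ : B → F} (hX : IsSpanningDisc ρ Ω X₁ X₂)
    (hY : IsSpanningDisc ρ Ω' Y₂ Y₁) :
    ∃ l : A × B → ℝ, Continuous l ∧ (∀ z, l z ∈ Icc 0 1) ∧ (∀ z ∉ Ω ×ˢ Ω', l z = 1) ∧
      ∀ z ∈ Ω ×ˢ Ω', ‖X₁ z.1‖ ≤ ρ / 2 → ‖Y₂ z.2‖ ≤ ρ / 2 → l z = 0 := by
  let S := {u ∈ closure Ω | ‖X₁ u‖ ∈ Iic (ρ / 2)}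
  let T := {v ∈ closure Ω' | ‖Y₂ v‖ ∈ Iic (ρ / 2)}
  have hS : IsClosed S := hX.continuousOn_fst.norm.preimage_isClosed_of_isClosed isClosed_closure
    isClosed_Iic
  have hT : IsClosed T := hY.continuousOn_fst.norm.preimage_isClosed_of_isClosed isClosed_closure
    isClosed_Iic
  have hdisj : Disjoint (S ×ˢ T) (Ω ×ˢ Ω')ᶜ := by
    rw [disjoint_compl_right_iff_subset]
    rintro z ⟨⟨hz₁, hz₁'⟩, hz₂, hz₂'⟩
    constructor
    · by_contra h
      linarith [hX.le_norm_fst hz₁ h, mem_Iic.1 hz₁']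
    · by_contra h
      linarith [hY.le_norm_fst hz₂ h, mem_Iic.1 hz₂']
  obtain ⟨l, hl₀, hl₁, hl⟩ := exists_continuous_zero_one_of_isClosed (hS.prod hT)
    (hX.isOpen.prod hY.isOpen).isClosed_compl hdisj
  exact ⟨l, l.continuous, hl, fun z hz => hl₁ hz, fun z hz h₁ h₂ =>
    hl₀ ⟨⟨subset_closure hz.1, h₁⟩, subset_closure hz.2, h₂⟩⟩

omit [NormedSpace ℝ B] in
-- `K` is the difference `X - Y` of the two discs, whose component in `E` is pushed off `0` away
-- from the intersection point; this is possible since `A` has smaller dimension than `E`.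
theorem IsSpanningDisc.exists_continuous_ne_zero [FiniteDimensional ℝ A] [FiniteDimensional ℝ E]
    [FiniteDimensional ℝ F] (hfinrank : Module.finrank ℝ A < Module.finrank ℝ E) {ρ : ℝ}
    (hρ : 0 < ρ) {Ω : Set A} {Ω' : Set B} {X₁ : A → E} {X₂ : A → F} {Y₁ : B → E} {Y₂ : B → F}
    (hX : IsSpanningDisc ρ Ω X₁ X₂) (hY : IsSpanningDisc ρ Ω' Y₂ Y₁)
    (hXY : ∀ u ∈ Ω, ∀ v ∈ Ω', X₁ u = Y₁ v → X₂ u = Y₂ v → u = 0 ∧ v = 0) (h₁ : X₁ 0 = Y₁ 0)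
    (h₂ : X₂ 0 = Y₂ 0) :
    ∃ (K : A × B → E × F) (a : A × B → E), Continuous K ∧ Continuous a ∧ (∀ z, z ≠ 0 → K z ≠ 0) ∧
      (∀ z, a z ≠ 0) ∧ (∀ z, 1 ≤ ‖z‖ → (K z).1 = a z) ∧
      ∀ᶠ z in 𝓝 0, K z = (X₁ z.1 - Y₁ z.2, X₂ z.1 - Y₂ z.2) := by
  obtain ⟨l, hl, hl01, hl1, hl0⟩ := hX.exists_cutoff hρ hY
  obtain ⟨X₁', X₂', cX₁, cX₂, hX₁, hX₂, bX⟩ := hX.exists_continuous_extension hρ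
  obtain ⟨Y₂', Y₁', cY₂, cY₁, hY₂, hY₁, bY⟩ := hY.exists_continuous_extension hρ
  obtain ⟨b, hb, hρb, hbl⟩ := exists_continuous_le_norm_lt_norm_segment hfinrank cX₁ hρ
  let c (z : A × B) : E := (1 - l z) • X₁' z.1 + l z • b z.1
  have ne_of_lt {x : E} (z : A × B) (hx : ρ / 4 < ‖x‖) : x - Y₁' z.2 ≠ 0 := fun h => by
    rw [sub_eq_zero.1 h] at hx
    linarith [bY z.2]
  refine ⟨fun z => (c z - Y₁' z.2, X₂' z.1 - Y₂' z.2), fun z => b z.1 - Y₁' z.2, by fun_prop,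
    by fun_prop, fun z hz hK => ?_, fun z => ne_of_lt z (by linarith [hρb z.1]), fun z hz => ?_, ?_⟩
  · obtain ⟨hK₁, hK₂⟩ := Prod.mk_eq_zero.1 hK
    have hX₁z : ‖X₁' z.1‖ < ρ / 2 := by
      by_contra! h
      exact ne_of_lt z (hbl _ h _ (hl01 z)) hK₁
    have hzΩ : z ∈ Ω ×ˢ Ω' := by
      by_contra h
      have hc : c z = b z.1 := by simp [c, hl1 z h]
      exact ne_of_lt z (by rw [hc]; linarith [hρb z.1]) hK₁
    have hu := subset_closure hzΩ.1
    have hv := subset_closure hzΩ.2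
    have hY₂z : ‖Y₂' z.2‖ ≤ ρ / 2 := by
      rw [← sub_eq_zero.1 hK₂]
      linarith [bX z.1]
    rw [hX₁ hu] at hX₁z
    rw [hY₂ hv] at hY₂z
    have hc : c z = X₁ z.1 := by simp [c, hl0 z hzΩ hX₁z.le hY₂z, hX₁ hu]
    rw [hc, hY₁ hv, sub_eq_zero] at hK₁
    rw [hX₂ hu, hY₂ hv, sub_eq_zero] at hK₂
    obtain ⟨h₁, h₂⟩ := hXY _ hzΩ.1 _ hzΩ.2 hK₁ hK₂
    exact hz (Prod.ext h₁ h₂)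
  · have hz' : z ∉ Ω ×ˢ Ω' := fun h => (max_lt (mem_ball_zero_iff.1 (hX.subset_ball h.1))
      (mem_ball_zero_iff.1 (hY.subset_ball h.2))).not_ge hz
    simp [c, hl1 z hz']
  · have hX₀ := hX.eventually_norm_fst_lt hρ
      (h₁ ▸ hY.norm_snd_le (subset_closure hY.zero_mem))
    have hY₀ := hY.eventually_norm_fst_lt hρ
      (h₂ ▸ hX.norm_snd_le (subset_closure hX.zero_mem))
    filter_upwards [(hX.isOpen.prod hY.isOpen).mem_nhds ⟨hX.zero_mem, hY.zero_mem⟩,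
      continuous_fst.tendsto' 0 0 rfl hX₀, continuous_snd.tendsto' 0 0 rfl hY₀] with z hz hX₁z hY₂z
    have hu := subset_closure hz.1
    have hv := subset_closure hz.2
    simp [c, hl0 z hz (le_of_lt hX₁z) (le_of_lt hY₂z), hX₁ hu, hX₂ hu, hY₁ hv, hY₂ hv]

theorem IsSpanningDisc.finrank_le [FiniteDimensional ℝ A] [FiniteDimensional ℝ E]
    [FiniteDimensional ℝ F] {ρ : ℝ} (hρ : 0 < ρ) {Ω : Set A} {Ω' : Set B} {X₁ : A → E} {X₂ : A → F}
    {Y₁ : B → E} {Y₂ : B → F} (hX : IsSpanningDisc ρ Ω X₁ X₂) (hY : IsSpanningDisc ρ Ω' Y₂ Y₁)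
    (hXY : ∀ u ∈ Ω, ∀ v ∈ Ω', X₁ u = Y₁ v → X₂ u = Y₂ v → u = 0 ∧ v = 0) {φ : A × B → E × F}
    {s : Set (A × B)} (hφ : IsOpenEmbeddingOn φ s) (hs : 0 ∈ s)
    (hφX : ∀ᶠ u in 𝓝 0, φ (u, 0) = (X₁ u, X₂ u)) (hφY : ∀ᶠ v in 𝓝 0, φ (0, v) = (Y₁ v, Y₂ v)) :
    Module.finrank ℝ E ≤ Module.finrank ℝ A := by
  by_contra! hfinrank
  obtain ⟨h₁, h₂⟩ := Prod.mk.inj (hφX.self_of_nhds.symm.trans hφY.self_of_nhds)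
  obtain ⟨K, a, hK, ha, hK₀, ha₀, hKa, hKXY⟩ :=
    hX.exists_continuous_ne_zero hfinrank hρ hY hXY h₁ h₂
  let G : C(PuncturedSpace (A × B), PuncturedSpace (E × F)) :=
    ⟨fun z => ⟨K z, hK₀ z z.2⟩, by fun_prop⟩
  refine not_nullhomotopic_of_eventually_eq_sub hφ hs (G := G) ?_
    (nullhomotopic_of_fst_eq hK ha ha₀ hKa fun _ => rfl)
  filter_upwards [hKXY, continuous_fst.tendsto' 0 0 rfl hφX, continuous_snd.tendsto' 0 0 rfl hφY]
    with z hz hzX hzY _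
  exact hz.trans (by rw [hzX, hzY, Prod.mk_sub_mk])

end Linking

/-! ### Local stable sets of expansive homeomorphisms -/

theorem iterZ_eq_zpow (f : M ≃ₜ M) (k : ℤ) : iterZ f k = ⇑(f ^ k) := by
  let toPerm : (M ≃ₜ M) →* Equiv.Perm M := ⟨⟨Homeomorph.toEquiv, rfl⟩, fun _ _ => rfl⟩
  exact congrArg DFunLike.coe (map_zpow toPerm f k).symm

theorem coe_toEquiv_pow (f : M ≃ₜ M) (k : ℕ) : ⇑(f.toEquiv ^ k) = ⇑(f ^ k) := by
  rw [← zpow_natCast, ← zpow_natCast]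
  exact iterZ_eq_zpow f k

theorem mem_WsLoc_iff {f : M ≃ₜ M} {ε : ℝ} {x y : M} :
    y ∈ WsLoc f ε x ↔ ∀ k : ℕ, dist ((f ^ k) x) ((f ^ k) y) ≤ ε := by
  simp only [WsLoc, iterZ_eq_zpow, mem_ofPred_eq]
  refine ⟨fun h k => by simpa using h k k.cast_nonneg, fun h k hk => ?_⟩
  lift k to ℕ using hk
  simpa using h k

theorem mem_WsLoc_self (f : M ≃ₜ M) {ε : ℝ} (hε : 0 ≤ ε) (x : M) : x ∈ WsLoc f ε x :=
  mem_WsLoc_iff.2 fun k => by simpa using hε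

theorem pow_apply_mem_WsLoc {f : M ≃ₜ M} {ε : ℝ} {x y : M} (h : y ∈ WsLoc f ε x) (k : ℕ) :
    (f ^ k) y ∈ WsLoc f ε ((f ^ k) x) :=
  mem_WsLoc_iff.2 fun m => by
    simpa only [pow_add, Homeomorph.mul_apply] using mem_WsLoc_iff.1 h (m + k)

theorem isClosed_setOf_mem_WsLoc (f : M ≃ₜ M) (ε : ℝ) :
    IsClosed {z : M × M | z.2 ∈ WsLoc f ε z.1} := by
  simp only [mem_WsLoc_iff, ofPred_forall]
  exact isClosed_iInter fun k => isClosed_le (by fun_prop) continuous_const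

theorem isClosed_WsLoc (f : M ≃ₜ M) (ε : ℝ) (x : M) : IsClosed (WsLoc f ε x) :=
  (isClosed_setOf_mem_WsLoc f ε).preimage (Continuous.prodMk_right x)

theorem isClosed_setOf_exists_mem_WsLoc [CompactSpace M] (f : M ≃ₜ M) (ε : ℝ) {K : Set M}
    (hK : IsCompact K) : IsClosed {q | ∃ y ∈ K, y ∈ WsLoc f ε q} := by
  have himage : {q | ∃ y ∈ K, y ∈ WsLoc f ε q} =
      Prod.fst '' ({z : M × M | z.2 ∈ WsLoc f ε z.1} ∩ univ ×ˢ K) := by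
    ext q
    simp [and_comm]
  rw [himage]
  exact (((isCompact_univ.prod hK).inter_left (isClosed_setOf_mem_WsLoc f ε)).image
    continuous_fst).isClosed

theorem IsExpansive.mono {f : M ≃ₜ M} {α β : ℝ} (h : IsExpansive f α) (hβ : β ≤ α) :
    IsExpansive f β := fun x y hxy => (h x y hxy).imp fun _ => hβ.trans_lt

theorem IsExpansive.inv {f : M ≃ₜ M} {α : ℝ} (h : IsExpansive f α) : IsExpansive f⁻¹ α := by
  intro x y hxy
  obtain ⟨k, hk⟩ := h x y hxy
  refine ⟨-k, ?_⟩
  simpa only [iterZ_eq_zpow, inv_zpow, zpow_neg, inv_inv] using hk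

theorem IsExpansive.eq_of_forall_dist_le {f : M ≃ₜ M} {α : ℝ} (hexp : IsExpansive f α) {x y : M}
    (h : ∀ k : ℕ, dist ((f ^ k) x) ((f ^ k) y) ≤ α)
    (h' : ∀ k : ℕ, dist ((f⁻¹ ^ k) x) ((f⁻¹ ^ k) y) ≤ α) : x = y := by
  by_contra hne
  obtain ⟨k, hk⟩ := hexp x y hne
  rw [iterZ_eq_zpow] at hk
  obtain ⟨m, rfl | rfl⟩ := k.eq_nat_or_neg
  · exact hk.not_ge (by simpa using h m)
  · exact hk.not_ge (by simpa using h' m)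

theorem IsExpansive.eq_of_mem_WsLoc {f : M ≃ₜ M} {ε : ℝ} (hexp : IsExpansive f (2 * ε))
    {p q x y : M} (hxp : x ∈ WsLoc f ε p) (hyp : y ∈ WsLoc f ε p) (hxq : x ∈ WsLoc f⁻¹ ε q)
    (hyq : y ∈ WsLoc f⁻¹ ε q) : x = y := by
  have dist_le {g : M ≃ₜ M} {z : M} (hx : x ∈ WsLoc g ε z) (hy : y ∈ WsLoc g ε z) (k : ℕ) :
      dist ((g ^ k) x) ((g ^ k) y) ≤ 2 * ε :=
    calc dist ((g ^ k) x) ((g ^ k) y)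
        ≤ dist ((g ^ k) z) ((g ^ k) x) + dist ((g ^ k) z) ((g ^ k) y) := dist_triangle_left _ _ _
      _ ≤ ε + ε := add_le_add (mem_WsLoc_iff.1 hx k) (mem_WsLoc_iff.1 hy k)
      _ = 2 * ε := (two_mul ε).symm
  exact hexp.eq_of_forall_dist_le (dist_le hxp hyp) (dist_le hxq hyq)

theorem IsExpansive.exists_forall_dist_lt [CompactSpace M] {f : M ≃ₜ M} {ε : ℝ}
    (hexp : IsExpansive f ε) {ρ : ℝ} (hρ : 0 < ρ) :
    ∃ N : ℕ, ∀ x, ∀ y ∈ WsLoc f ε x, ∀ k ≥ N, dist ((f ^ k) x) ((f ^ k) y) < ρ := by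
  by_contra! hcon
  let K (N : ℕ) : Set (M × M) := {z | ρ ≤ dist z.1 z.2} ∩
    {z | (f ^ N)⁻¹ z.2 ∈ WsLoc f ε ((f ^ N)⁻¹ z.1)}
  have hK (N : ℕ) : IsClosed (K N) := by
    refine (isClosed_le continuous_const continuous_dist).inter ?_
    exact (isClosed_setOf_mem_WsLoc f ε).preimage (by fun_prop :
      Continuous fun z : M × M => ((f ^ N)⁻¹ z.1, (f ^ N)⁻¹ z.2))
  have hanti (N : ℕ) : K (N + 1) ⊆ K N := by
    refine inter_subset_inter_right _ fun z hz => ?_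
    have := pow_apply_mem_WsLoc hz 1
    simpa only [mem_ofPred_eq, ← Homeomorph.mul_apply, pow_succ, mul_inv_rev, pow_zero, one_mul,
      mul_inv_cancel_left] using this
  have hne (N : ℕ) : (K N).Nonempty := by
    obtain ⟨x, y, hxy, k, hk, hd⟩ := hcon N
    refine ⟨((f ^ k) x, (f ^ k) y), hd, ?_⟩
    have := pow_apply_mem_WsLoc hxy (k - N)
    obtain ⟨m, rfl⟩ := Nat.exists_eq_add_of_le hk
    simpa [pow_add] using this
  obtain ⟨z, hz⟩ := IsCompact.nonempty_iInter_of_sequence_nonempty_isCompact_isClosed K hanti hne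
    (hK 0).isCompact hK
  rw [mem_iInter] at hz
  have hz₀ : ρ ≤ dist z.1 z.2 := (hz 0).1
  have heq : z.1 = z.2 := hexp.eq_of_forall_dist_le
    (fun k => by simpa using mem_WsLoc_iff.1 (hz 0).2 k)
    fun k => by simpa using mem_WsLoc_iff.1 (hz k).2 0
  rw [heq, dist_self] at hz₀
  exact hz₀.not_gt hρ

theorem exists_forall_dist_pow_lt [CompactSpace M] (f : M ≃ₜ M) (N : ℕ) {ρ : ℝ} (hρ : 0 < ρ) :
    ∃ δ > 0, ∀ x y : M, dist x y ≤ δ → ∀ k < N, dist ((f ^ k) x) ((f ^ k) y) < ρ := by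
  have hunif (k : ℕ) : ∀ᶠ δ in nhdsWithin 0 (Ioi 0), ∀ x y : M, dist x y ≤ δ →
      dist ((f ^ k) x) ((f ^ k) y) < ρ := by
    obtain ⟨δ, hδ, h⟩ := Metric.uniformContinuous_iff.1
      (CompactSpace.uniformContinuous_of_continuous (f ^ k).continuous) ρ hρ
    filter_upwards [Ioo_mem_nhdsGT hδ] with η hη x y hxy
    exact h (hxy.trans_lt hη.2)
  obtain ⟨δ, hδ, hδ₀⟩ := (((Finset.range N).eventually_all.2 fun k _ => hunif k).and
    self_mem_nhdsWithin).exists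
  exact ⟨δ, hδ₀, fun x y hxy k hk => hδ k (Finset.mem_range.2 hk) x y hxy⟩

/-- A scale `δ` at which the nonstrict inequalities defining the local stable set of size `ε` are
automatically strict. -/
def IsStrictScale (f : M ≃ₜ M) (ε δ : ℝ) : Prop :=
  ∀ x y, dist x y ≤ δ → y ∈ WsLoc f ε x → ∀ k : ℕ, dist ((f ^ k) x) ((f ^ k) y) < ε

theorem IsStrictScale.mono {f : M ≃ₜ M} {ε δ δ' : ℝ} (h : IsStrictScale f ε δ) (hδ : δ' ≤ δ) :
    IsStrictScale f ε δ' :=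
  fun x y hxy => h x y (hxy.trans hδ)

theorem IsExpansive.exists_isStrictScale [CompactSpace M] {f : M ≃ₜ M} {ε : ℝ} (hε : 0 < ε)
    (hexp : IsExpansive f ε) : ∃ δ > 0, IsStrictScale f ε δ := by
  obtain ⟨N, hN⟩ := hexp.exists_forall_dist_lt hε
  obtain ⟨δ, hδ, h⟩ := exists_forall_dist_pow_lt f N hε
  exact ⟨δ, hδ, fun x y hxy hy k => (lt_or_ge k N).elim (h x y hxy k) (hN x y hy k)⟩

/-! ### Hyperbolic periodic points and their plaques -/

theorem pow_apply_eq_self {F : M ≃ₜ M} {p : M} (h : F p = p) (k : ℕ) : (F ^ k) p = p := by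
  induction k with
  | zero => rfl
  | succ k ih => rw [pow_succ', Homeomorph.mul_apply, ih, h]

section Plaques

variable {E Es Eu : Type*} [NormedAddCommGroup E] [NormedAddCommGroup Es] [NormedSpace ℝ Es]
  [NormedAddCommGroup Eu] [NormedSpace ℝ Eu]

omit [NormedSpace ℝ Es] [NormedSpace ℝ Eu] in
theorem prodMk_mem_ball_zero {a : Es} {b : Eu} {r : ℝ} (ha : ‖a‖ < r) (hb : ‖b‖ < r) :
    (a, b) ∈ ball (0 : Es × Eu) r :=
  mem_ball_zero_iff.2 (max_lt ha hb)

/-- `g` conjugates the homeomorphism `F` near its fixed point `p` to the hyperbolic linear map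
`(a, b) ↦ (a / 2, 2 b)`. The chart is normalised to contain the ball of radius `4`. -/
structure IsLinearization (F : M ≃ₜ M) (p : M) (g : Es × Eu → M) : Prop where
  map_zero : g 0 = p
  isOpenEmbeddingOn : IsOpenEmbeddingOn g (ball 0 4)
  apply_map {a : Es} {b : Eu} (ha : ‖a‖ < 4) (hb : ‖b‖ < 2) :
    F (g (a, b)) = g ((2⁻¹ : ℝ) • a, (2 : ℝ) • b)

theorem exists_isLinearization_of_eventually {F : M ≃ₜ M} {p : M} {k : Es × Eu → M}
    {V : Set (Es × Eu)} (hk : IsOpenEmbeddingOn k V) (hV : 0 ∈ V) (hk₀ : k 0 = p)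
    (hF : ∀ᶠ x in 𝓝 0, F (k x) = k ((2⁻¹ : ℝ) • x.1, (2 : ℝ) • x.2)) :
    ∃ g : Es × Eu → M, IsLinearization F p g := by
  obtain ⟨s, hs, hball⟩ := Metric.eventually_nhds_iff_ball.1
    (hF.and (hk.isOpen.mem_nhds hV))
  have hs₄ : s / 4 ≠ 0 := by positivity
  have hscale {x : Es × Eu} (hx : x ∈ ball 0 4) : (s / 4) • x ∈ ball 0 s := by
    rw [mem_ball_zero_iff] at hx ⊢
    rw [norm_smul, Real.norm_of_nonneg (by positivity)]
    nlinarith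
  refine ⟨k ∘ Homeomorph.smulOfNeZero (s / 4) hs₄, by simp [hk₀], hk.comp
    (.of_homeomorph _ isOpen_ball) fun x hx => (hball _ (hscale hx)).2, fun {a b} ha hb => ?_⟩
  have hconj := (hball _ (hscale (prodMk_mem_ball_zero ha (hb.trans (by norm_num))))).1
  simpa [smul_comm (s / 4)] using hconj

namespace IsLinearization

variable {f F : M ≃ₜ M} {p : M} {l : ℕ} {g : Es × Eu → M}

theorem swap (h : IsLinearization F p g) : IsLinearization F⁻¹ p (g ∘ Prod.swap) where
  map_zero := h.map_zero
  isOpenEmbeddingOn := h.isOpenEmbeddingOn.comp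
    (.of_homeomorph (Homeomorph.prodComm Eu Es) isOpen_ball) fun x hx =>
      prodMk_mem_ball_zero ((norm_snd_le x).trans_lt (mem_ball_zero_iff.1 hx))
        ((norm_fst_le x).trans_lt (mem_ball_zero_iff.1 hx))
  apply_map {a b} ha hb := by
    have hF : F (g ((2 : ℝ) • b, (2⁻¹ : ℝ) • a)) = g (b, a) := by
      rw [h.apply_map (by rw [norm_smul, Real.norm_ofNat]; linarith)
        (by rw [norm_smul, norm_inv, Real.norm_ofNat]; linarith)]
      simp
    simp [← hF]

theorem apply_self (h : IsLinearization F p g) : F p = p := by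
  simpa [h.map_zero, ← Prod.zero_eq_mk] using h.apply_map (a := 0) (b := 0) (by simp) (by simp)

theorem pow_apply (h : IsLinearization F p g) {a : Es} {b : Eu} (i : ℕ) (ha : ‖a‖ < 4)
    (hb : ‖(2 : ℝ) ^ i • b‖ < 4) :
    (F ^ i) (g (a, b)) = g ((2⁻¹ : ℝ) ^ i • a, (2 : ℝ) ^ i • b) := by
  induction i with
  | zero => simp
  | succ i ih =>
    have hb' : ‖(2 : ℝ) ^ i • b‖ < 2 := by
      rw [pow_succ', mul_smul, norm_smul, Real.norm_ofNat] at hb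
      linarith
    have ha' : ‖(2⁻¹ : ℝ) ^ i • a‖ < 4 := by
      rw [norm_smul, Real.norm_of_nonneg (by positivity)]
      exact (mul_le_of_le_one_left (norm_nonneg a)
        (pow_le_one₀ (by norm_num) (by norm_num))).trans_lt ha
    rw [pow_succ', Homeomorph.mul_apply, ih (by linarith), h.apply_map ha' hb', smul_smul,
      smul_smul, ← pow_succ', ← pow_succ']

theorem snd_eq_zero (h : IsLinearization F p g) {a : Es} {b : Eu} (ha : ‖a‖ < 1) (hb : ‖b‖ < 1)
    (hF : ∀ i : ℕ, (F ^ i) (g (a, b)) ∈ g '' ball 0 1) : b = 0 := by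
  have norm_lt_one (i : ℕ) : ‖(2 : ℝ) ^ i • b‖ < 1 := by
    induction i with
    | zero => simpa using hb
    | succ i ih =>
      have hb₂ : ‖(2 : ℝ) ^ (i + 1) • b‖ < 2 := by
        rw [pow_succ', mul_smul, norm_smul, Real.norm_ofNat]
        linarith
      obtain ⟨y, hy, hyx⟩ := hF (i + 1)
      rw [h.pow_apply (i + 1) (by linarith) (by linarith)] at hyx
      have ha' : ‖(2⁻¹ : ℝ) ^ (i + 1) • a‖ < 4 := by
        rw [norm_smul, Real.norm_of_nonneg (by positivity)]
        exact (mul_le_of_le_one_left (norm_nonneg a)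
          (pow_le_one₀ (by norm_num) (by norm_num))).trans_lt (by linarith)
      rw [h.isOpenEmbeddingOn.injOn (ball_subset_ball (by norm_num) hy)
        (prodMk_mem_ball_zero ha' (by linarith)) hyx] at hy
      exact (norm_snd_le _).trans_lt (mem_ball_zero_iff.1 hy)
  by_contra hne
  have hb₀ : 0 < ‖b‖ := norm_pos_iff.2 hne
  obtain ⟨i, hi⟩ := pow_unbounded_of_one_lt (1 / ‖b‖) (one_lt_two (α := ℝ))
  have hlt := norm_lt_one i
  rw [norm_smul, norm_pow, Real.norm_ofNat] at hlt
  exact hlt.not_gt ((div_lt_iff₀ hb₀).1 hi)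

theorem exists_forall_pow_mem [CompactSpace M] (h : IsLinearization (f ^ l) p g) (hl : l ≠ 0)
    {ε : ℝ} (hexp : IsExpansive f ε) :
    ∃ K : ℕ, ∀ y ∈ WsLoc f ε p, ∀ i ≥ K, ((f ^ l) ^ i) y ∈ g '' ball 0 1 := by
  have hopen : IsOpen (g '' ball 0 1) :=
    h.isOpenEmbeddingOn.isOpen_image (ball_subset_ball (by norm_num)) isOpen_ball
  obtain ⟨ρ, hρ, hball⟩ := Metric.isOpen_iff.1 hopen p ⟨0, mem_ball_self one_pos, h.map_zero⟩
  obtain ⟨N, hN⟩ := hexp.exists_forall_dist_lt hρ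
  refine ⟨N, fun y hy i hi => hball ?_⟩
  have hlt := hN p y hy (l * i) (hi.trans (Nat.le_mul_of_pos_left i (Nat.pos_of_ne_zero hl)))
  rwa [pow_mul, pow_apply_eq_self h.apply_self, dist_comm] at hlt

theorem exists_forall_dist_pow_lt [CompactSpace M] (h : IsLinearization (f ^ l) p g) (hl : l ≠ 0)
    {ε : ℝ} (hε : 0 < ε) :
    ∃ N : ℕ, ∀ k ≥ N, ∀ a : Es, ‖a‖ < 2 → dist ((f ^ k) p) ((f ^ k) (g (a, 0))) < ε := by
  obtain ⟨η, hη, hunif⟩ := _root_.exists_forall_dist_pow_lt f l hε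
  have hg : ContinuousAt g 0 :=
    h.isOpenEmbeddingOn.continuousOn.continuousAt (ball_mem_nhds _ (by norm_num))
  obtain ⟨s, hs, hgs⟩ := Metric.continuousAt_iff.1 hg η hη
  obtain ⟨i₀, hi₀⟩ := exists_pow_lt_of_lt_one (half_pos hs) (by norm_num : (2⁻¹ : ℝ) < 1)
  refine ⟨l * i₀, fun k hk a ha => ?_⟩
  have hi : i₀ ≤ k / l := by
    rw [Nat.le_div_iff_mul_le (Nat.pos_of_ne_zero hl), mul_comm]
    exact hk
  have hnorm : ‖((2⁻¹ : ℝ) ^ (k / l) • a, (0 : Eu))‖ < s := by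
    have hpow : (2⁻¹ : ℝ) ^ (k / l) ≤ 2⁻¹ ^ i₀ :=
      pow_le_pow_of_le_one (by norm_num) (by norm_num) hi
    rw [Prod.norm_mk, norm_zero, max_eq_left (norm_nonneg _), norm_smul,
      Real.norm_of_nonneg (by positivity)]
    nlinarith [norm_nonneg a, pow_pos (by norm_num : (0 : ℝ) < 2⁻¹) (k / l)]
  have hpow (y : M) : (f ^ k) y = (f ^ (k % l)) (((f ^ l) ^ (k / l)) y) := by
    rw [← pow_mul, ← Homeomorph.mul_apply, ← pow_add, Nat.mod_add_div]
  rw [hpow, hpow, pow_apply_eq_self h.apply_self, h.pow_apply _ (by linarith) (by simp), smul_zero]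
  refine hunif _ _ ?_ _ (Nat.mod_lt k (Nat.pos_of_ne_zero hl))
  rw [dist_comm, ← h.map_zero]
  exact (hgs (by rwa [dist_zero_right])).le

end IsLinearization

theorem IsStrictScale.mapsTo_WsLoc {X : Type*} [TopologicalSpace X] {f : M ≃ₜ M} {ε δ : ℝ}
    (hδ : IsStrictScale f ε δ) {p : M} {j : X → M} {C : Set X} (hC : IsPreconnected C)
    (hj : ContinuousOn j C) (hjδ : ∀ a ∈ C, dist p (j a) ≤ δ) {a₀ : X} (ha₀ : a₀ ∈ C)
    (hja₀ : j a₀ ∈ WsLoc f ε p) {N : ℕ}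
    (hN : ∀ k ≥ N, ∀ a ∈ C, dist ((f ^ k) p) ((f ^ k) (j a)) ≤ ε) :
    MapsTo j C (WsLoc f ε p) := by
  let O : Set M := ⋂ k ∈ Finset.range N, {y | dist ((f ^ k) p) ((f ^ k) y) < ε}
  have hO : IsOpen O :=
    isOpen_biInter_finset fun k _ => isOpen_lt (by fun_prop) continuous_const
  have mem_iff : ∀ y ∈ j '' C, y ∈ WsLoc f ε p ↔ y ∈ O := by
    rintro _ ⟨a, ha, rfl⟩
    simp only [O, mem_iInter, Finset.mem_range, mem_ofPred_eq]
    refine ⟨fun hy k _ => hδ _ _ (hjδ a ha) hy k, fun hy => mem_WsLoc_iff.2 fun k => ?_⟩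
    exact (lt_or_ge k N).elim (fun hk => (hy k hk).le) fun hk => hN k hk a ha
  have hsub := isPreconnected_iff_subset_of_disjoint.1 (hC.image j hj) O (WsLoc f ε p)ᶜ hO
    (isClosed_WsLoc f ε p).isOpen_compl
    (fun y hy => or_iff_not_imp_right.2 fun h => (mem_iff y hy).1 (not_notMem.1 h))
    (eq_empty_of_forall_notMem fun y hy => hy.2.2 ((mem_iff y hy.1).2 hy.2.1))
  rcases hsub with hsub | hsub
  · exact fun a ha => (mem_iff _ ⟨a, ha, rfl⟩).2 (hsub ⟨a, ha, rfl⟩)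
  · exact absurd hja₀ (hsub ⟨a₀, ha₀, rfl⟩)

/-- A parametrisation `j` of a disc in the stable set of `p` which covers the local stable set of
size `ε`, and conversely stays in it as long as it stays within distance `δ` of `p`. -/
structure IsStablePlaque (f : M ≃ₜ M) (ε δ : ℝ) (j : E → M) (p : M) : Prop where
  continuousOn : ContinuousOn j (ball 0 2)
  injOn : InjOn j (ball 0 2)
  map_zero : j 0 = p
  WsLoc_subset : WsLoc f ε p ⊆ j '' ball 0 1
  mapsTo_WsLoc {C : Set E} (hC : IsPreconnected C) (hC₂ : C ⊆ ball 0 2) (hC₀ : 0 ∈ C)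
    (hCδ : ∀ a ∈ C, dist p (j a) ≤ δ) : MapsTo j C (WsLoc f ε p)

theorem IsLinearization.isStablePlaque [CompactSpace M] {f : M ≃ₜ M} {p : M} {l : ℕ}
    {g : Es × Eu → M} (h : IsLinearization (f ^ l) p g) (hl : l ≠ 0) {ε δ : ℝ} (hε : 0 < ε)
    (hδ : IsStrictScale f ε δ) {K : ℕ}
    (hK : ∀ y ∈ WsLoc f ε p, ∀ i ≥ K, ((f ^ l) ^ i) y ∈ g '' ball 0 1) :
    IsStablePlaque f ε δ (fun a : Es => ((f ^ l) ^ K)⁻¹ (g (a, 0))) p := by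
  have hmem {a : Es} (ha : a ∈ ball 0 2) : (a, (0 : Eu)) ∈ ball (0 : Es × Eu) 4 :=
    prodMk_mem_ball_zero ((mem_ball_zero_iff.1 ha).trans (by norm_num)) (by simp)
  have hcont : ContinuousOn (fun a : Es => ((f ^ l) ^ K)⁻¹ (g (a, 0))) (ball 0 2) :=
    (Homeomorph.continuous _).comp_continuousOn
      (h.isOpenEmbeddingOn.continuousOn.comp (by fun_prop) fun _ => hmem)
  have hzero : ((f ^ l) ^ K)⁻¹ (g 0) = p := by
    rw [h.map_zero, Homeomorph.inv_apply, Homeomorph.symm_apply_eq, pow_apply_eq_self h.apply_self]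
  refine ⟨hcont, fun a ha b hb hab => ?_, hzero, fun y hy => ?_, fun {C} hC hC₂ hC₀ hCδ => ?_⟩
  · exact congrArg Prod.fst
      (h.isOpenEmbeddingOn.injOn (hmem ha) (hmem hb) (Homeomorph.injective _ hab))
  · obtain ⟨⟨a, b⟩, hx, hxy⟩ := hK y hy K le_rfl
    have hx' := mem_ball_zero_iff.1 hx
    have ha : ‖a‖ < 1 := (norm_fst_le (a, b)).trans_lt hx'
    have hb : b = 0 := by
      refine h.snd_eq_zero ha ((norm_snd_le (a, b)).trans_lt hx') fun i => ?_
      rw [hxy, ← Homeomorph.mul_apply, ← pow_add]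
      exact hK y hy (i + K) (Nat.le_add_left K i)
    subst hb
    exact ⟨a, mem_ball_zero_iff.2 ha, (Homeomorph.symm_apply_eq _).2 hxy⟩
  · obtain ⟨N, hN⟩ := h.exists_forall_dist_pow_lt hl hε
    refine hδ.mapsTo_WsLoc hC (hcont.mono hC₂) hCδ hC₀ (hzero ▸ mem_WsLoc_self f hε.le p)
      (N := N + l * K) fun k hk a ha => ?_
    obtain ⟨m, rfl⟩ := Nat.exists_eq_add_of_le' ((Nat.le_add_left _ _).trans hk)
    have hpow (y : M) : (f ^ (m + l * K)) y = (f ^ m) (((f ^ l) ^ K) y) := by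
      rw [← pow_mul, ← Homeomorph.mul_apply, ← pow_add]
    rw [hpow, hpow, pow_apply_eq_self h.apply_self, Homeomorph.inv_apply,
      Homeomorph.apply_symm_apply]
    exact (hN m (by omega) a (mem_ball_zero_iff.1 (hC₂ ha))).le

variable (Es Eu) in
/-- A chart at `p` whose first axis parametrises the stable plaque of `p`, and whose second axis
agrees near `p` with a parametrisation of the unstable plaque. -/
structure PlaqueChart (f : M ≃ₜ M) (ε δ : ℝ) (p : M) where
  chart : Es × Eu → M
  unstable : Eu → M
  radius : ℝ
  radius_pos : 0 < radius
  isOpenEmbeddingOn : IsOpenEmbeddingOn chart (ball 0 2 ×ˢ ball 0 radius)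
  isStablePlaque : IsStablePlaque f ε δ (fun a => chart (a, 0)) p
  isUnstablePlaque : IsStablePlaque f⁻¹ ε δ unstable p
  chart_zero_left {b : Eu} (hb : ‖b‖ < radius) : chart (0, b) = unstable b

theorem IsLinearization.nonempty_plaqueChart [CompactSpace M] {f : M ≃ₜ M} {p : M} {l : ℕ}
    {g : Es × Eu → M} (h : IsLinearization (f ^ l) p g) (hl : l ≠ 0) {ε δ : ℝ} (hε : 0 < ε)
    (hexp : IsExpansive f ε) (hδ : IsStrictScale f ε δ) (hδ' : IsStrictScale f⁻¹ ε δ) :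
    Nonempty (PlaqueChart Es Eu f ε δ p) := by
  have hinv : IsLinearization (f⁻¹ ^ l) p (g ∘ Prod.swap) := inv_pow f l ▸ h.swap
  obtain ⟨K₁, hK₁⟩ := h.exists_forall_pow_mem hl hexp
  obtain ⟨K₂, hK₂⟩ := hinv.exists_forall_pow_mem hl hexp.inv
  let K := max K₁ K₂
  have hK : (0 : ℝ) < 4 ^ K := by positivity
  let scale := (Homeomorph.refl Es).prodCongr
    (Homeomorph.smulOfNeZero (α := Eu) ((4 : ℝ) ^ K) hK.ne')
  have norm_lt {b : Eu} (hb : ‖b‖ < 4 / 4 ^ K) : ‖(4 : ℝ) ^ K • b‖ < 4 := by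
    rwa [norm_smul, Real.norm_of_nonneg hK.le, ← lt_div_iff₀' hK]
  refine ⟨⟨⇑((f ^ l) ^ K)⁻¹ ∘ g ∘ scale, fun b => ((f⁻¹ ^ l) ^ K)⁻¹ (g (0, b)), 4 / 4 ^ K,
    by positivity, ?_, ?_, ?_, fun {b} hb => ?_⟩⟩
  · refine (IsOpenEmbeddingOn.of_homeomorph ((f ^ l) ^ K)⁻¹ isOpen_univ).comp
      (h.isOpenEmbeddingOn.comp (.of_homeomorph scale (isOpen_ball.prod isOpen_ball))
        fun x hx => ?_) (mapsTo_univ _ _)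
    exact prodMk_mem_ball_zero ((mem_ball_zero_iff.1 hx.1).trans (by norm_num))
      (norm_lt (mem_ball_zero_iff.1 hx.2))
  · simpa [scale] using h.isStablePlaque hl hε hδ
      fun y hy i hi => hK₁ y hy i ((le_max_left _ _).trans hi)
  · exact hinv.isStablePlaque hl hε hδ' fun y hy i hi => hK₂ y hy i ((le_max_right _ _).trans hi)
  · have hpow : (2 : ℝ) ^ (K + K) = 4 ^ K := by rw [← two_mul, pow_mul]; norm_num
    have hg := h.pow_apply (a := 0) (b := b) (K + K) (by simp) (hpow ▸ norm_lt hb)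
    rw [smul_zero, hpow, pow_add, Homeomorph.mul_apply] at hg
    change ((f ^ l) ^ K)⁻¹ (g (0, (4 : ℝ) ^ K • b)) = _
    rw [← hg]
    simp

end Plaques

namespace IsStablePlaque

variable {E : Type*} [NormedAddCommGroup E] {f : M ≃ₜ M} {ε δ : ℝ} {j : E → M} {p : M}

theorem mem_ball_one (h : IsStablePlaque f ε δ j p) {a : E} (ha : a ∈ ball 0 2)
    (hja : j a ∈ WsLoc f ε p) : a ∈ ball 0 1 := by
  obtain ⟨b, hb, hba⟩ := h.WsLoc_subset hja
  rwa [← h.injOn (ball_subset_ball one_le_two hb) ha hba]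

theorem eventually_exists_eq [ProperSpace E] (h : IsStablePlaque f ε δ j p) {r : ℝ} (hr : 0 < r) :
    ∀ᶠ y in 𝓝 p, y ∈ WsLoc f ε p → ∃ a, ‖a‖ < r ∧ j a = y := by
  have hsub : closedBall (0 : E) 1 ⊆ ball 0 2 := closedBall_subset_ball one_lt_two
  have hclosed : IsClosed (j '' (closedBall 0 1 \ ball 0 r)) :=
    (((isCompact_closedBall 0 1).diff isOpen_ball).image_of_continuousOn
      (h.continuousOn.mono (sdiff_subset.trans hsub))).isClosed
  have hp : p ∉ j '' (closedBall 0 1 \ ball 0 r) := by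
    rintro ⟨a, ⟨ha, har⟩, hap⟩
    rw [h.injOn (hsub ha) (mem_ball_self two_pos) (hap.trans h.map_zero.symm)] at har
    exact har (mem_ball_self hr)
  filter_upwards [hclosed.isOpen_compl.mem_nhds hp] with y hy hyW
  obtain ⟨a, ha, rfl⟩ := h.WsLoc_subset hyW
  refine ⟨a, ?_, rfl⟩
  by_contra har
  exact hy ⟨a, ⟨ball_subset_closedBall ha, fun h => har (mem_ball_zero_iff.1 h)⟩, rfl⟩

end IsStablePlaque

namespace PlaqueChart

variable {Es Eu : Type*} [NormedAddCommGroup Es] [NormedAddCommGroup Eu] {f : M ≃ₜ M} {ε δ : ℝ}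
  {p : M} (H : PlaqueChart Es Eu f ε δ p)

theorem chart_zero : H.chart 0 = p := H.isStablePlaque.map_zero

theorem eventually_mem_domain : ∀ᶠ x in 𝓝 0, x ∈ ball (0 : Es) 2 ×ˢ ball (0 : Eu) H.radius :=
  H.isOpenEmbeddingOn.isOpen.mem_nhds ⟨mem_ball_self two_pos, mem_ball_self H.radius_pos⟩

theorem tendsto_chart : Filter.Tendsto H.chart (𝓝 0) (𝓝 p) := by
  have hcont := H.isOpenEmbeddingOn.continuousOn.continuousAt H.eventually_mem_domain
  rwa [ContinuousAt, H.chart_zero] at hcont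

theorem eventually_snd_eq_zero : ∀ᶠ x in 𝓝 0, H.chart x ∈ WsLoc f ε p → x.2 = 0 := by
  filter_upwards [H.eventually_mem_domain] with x hx hxW
  obtain ⟨a, ha, hax⟩ := H.isStablePlaque.WsLoc_subset hxW
  exact (congrArg Prod.snd (H.isOpenEmbeddingOn.injOn
    ⟨ball_subset_ball one_le_two ha, mem_ball_self H.radius_pos⟩ hx hax)).symm

theorem eventually_fst_eq_zero [ProperSpace Eu] :
    ∀ᶠ x in 𝓝 0, H.chart x ∈ WsLoc f⁻¹ ε p → x.1 = 0 := by
  filter_upwards [H.eventually_mem_domain,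
    H.tendsto_chart.eventually (H.isUnstablePlaque.eventually_exists_eq H.radius_pos)]
    with x hx hunst hxW
  obtain ⟨b, hb, hbx⟩ := hunst hxW
  exact (congrArg Prod.fst (H.isOpenEmbeddingOn.injOn
    ⟨mem_ball_self two_pos, mem_ball_zero_iff.2 hb⟩ hx ((H.chart_zero_left hb).trans hbx))).symm

end PlaqueChart

theorem IsOpenEmbeddingOn.of_isOpenEmbedding_domRestrict {X Y : Type*} [TopologicalSpace X]
    [TopologicalSpace Y] {g : X → Y} {s : Set X} (hs : IsOpen s)
    (hg : Topology.IsOpenEmbedding (s.domRestrict g)) : IsOpenEmbeddingOn g s where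
  isOpen := hs
  continuousOn := continuousOn_iff_continuous_domRestrict.2 hg.continuous
  injOn := injOn_iff_injective.2 hg.injective
  isOpen_image {O} hO hO' := by
    have himage : g '' O = s.domRestrict g '' (Subtype.val ⁻¹' O) := by
      rw [image_domRestrict, inter_eq_left.2 hO]
    exact himage ▸ hg.isOpenMap _ (hO'.preimage continuous_subtype_val)

theorem exists_isLinearization_of_mem_PerHr {f : M ≃ₜ M} {n r : ℕ} {p : M} (hp : p ∈ PerHr f n r) :
    ∃ l ≠ 0, ∃ g : ModelSp n r → M, IsLinearization (f ^ l) p g := by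
  classical
  obtain ⟨l, hl, hfix, U, V, h, hU, hV, h₀, hpU, hhp, hconj⟩ := hp
  rw [coe_toEquiv_pow] at hfix hconj
  let k (x : ModelSp n r) : M := if hx : x ∈ V then h.symm ⟨x, hx⟩ else p
  have hk {x : ModelSp n r} (hx : x ∈ V) : k x = h.symm ⟨x, hx⟩ := dif_pos hx
  have k_h (z : U) : k (h z) = z := by rw [hk (h z).2, Subtype.coe_eta, h.symm_apply_apply]
  have hk₀ : k 0 = p := by rw [← hhp, k_h]
  have hk_emb : IsOpenEmbeddingOn k V := by
    refine .of_isOpenEmbedding_domRestrict hV ?_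
    convert hU.isOpenEmbedding_subtypeVal.comp h.symm.isOpenEmbedding using 1
    exact funext fun x => hk x.2
  refine ⟨l, Nat.one_le_iff_ne_zero.1 hl, exists_isLinearization_of_eventually hk_emb h₀ hk₀ ?_⟩
  have hcont : ContinuousAt (fun x => (f ^ l) (k x)) 0 :=
    (f ^ l).continuous.continuousAt.comp (hk_emb.continuousOn.continuousAt (hV.mem_nhds h₀))
  filter_upwards [hV.mem_nhds h₀, hcont.preimage_mem_nhds (hU.mem_nhds (by rwa [hk₀, hfix]))]
    with x hxV hxU
  have hxU' : k x ∈ U := by rw [hk hxV]; exact (h.symm _).2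
  have h_k : (h ⟨k x, hxU'⟩ : ModelSp n r) = x := by
    have hsymm : (⟨k x, hxU'⟩ : U) = h.symm ⟨x, hxV⟩ := Subtype.ext (hk hxV)
    rw [hsymm, h.apply_symm_apply]
  have hL : modelL n r x = ((2⁻¹ : ℝ) • x.1, (2 : ℝ) • x.2) := by
    ext <;> simp [modelL, div_eq_inv_mul]
  rw [← hL, ← congrArg (modelL n r) h_k, ← hconj _ hxU' hxU]
  exact (k_h ⟨_, hxU⟩).symm

/-! ### Semicontinuity of the index -/

theorem eventually_norm_le_of_mem_WsLoc [CompactSpace M] {X Y : Type*} [TopologicalSpace X]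
    [NormedAddCommGroup Y] {f : M ≃ₜ M} {ε : ℝ} {q : M} {g : X → M} {K : Set X} {π : X → Y}
    (hK : IsCompact K) (hg : ContinuousOn g K) (hπ : Continuous π)
    (hq : ∀ x ∈ K, g x ∈ WsLoc f ε q → π x = 0) {r : ℝ} (hr : 0 < r) :
    ∀ᶠ q' in 𝓝 q, ∀ x ∈ K, g x ∈ WsLoc f ε q' → ‖π x‖ ≤ r := by
  have hclosed : IsClosed {x | r ≤ ‖π x‖} := isClosed_le continuous_const hπ.norm
  have hcompact : IsCompact (g '' (K ∩ {x | r ≤ ‖π x‖})) :=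
    (hK.inter_right hclosed).image_of_continuousOn (hg.mono inter_subset_left)
  have hq' : q ∉ {q | ∃ y ∈ g '' (K ∩ {x | r ≤ ‖π x‖}), y ∈ WsLoc f ε q} := by
    rintro ⟨_, ⟨x, ⟨hx, hrx⟩, rfl⟩, hxq⟩
    rw [mem_ofPred_eq, hq x hx hxq, norm_zero] at hrx
    exact hrx.not_gt hr
  filter_upwards [(isClosed_setOf_exists_mem_WsLoc f ε hcompact).isOpen_compl.mem_nhds hq']
    with q' hq' x hx hxq'
  by_contra! hr'
  exact hq' ⟨_, ⟨x, ⟨hx, hr'.le⟩, rfl⟩, hxq'⟩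

namespace IsStablePlaque

section Component

variable {E : Type*} [NormedAddCommGroup E] {f : M ≃ₜ M} {ε δ : ℝ} {j : E → M} {p : M}

/-- The component through `p` of the part of the plaque `j` of `p` inside `B`, seen in the
parameter space. -/
def component (_ : IsStablePlaque f ε δ j p) (B : Set M) : Set E :=
  connectedComponentIn (ball 0 2 ∩ j ⁻¹' B) 0

variable (h : IsStablePlaque f ε δ j p) {B : Set M}

theorem component_subset : h.component B ⊆ ball 0 2 ∩ j ⁻¹' B := connectedComponentIn_subset _ _

theorem zero_mem_component (hpB : p ∈ B) : 0 ∈ h.component B :=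
  mem_connectedComponentIn ⟨mem_ball_self two_pos, by rwa [mem_preimage, h.map_zero]⟩

theorem isPreconnected_component : IsPreconnected (h.component B) :=
  isPreconnected_connectedComponentIn

theorem isOpen_component [NormedSpace ℝ E] (hB : IsOpen B) : IsOpen (h.component B) :=
  (h.continuousOn.isOpen_inter_preimage isOpen_ball hB).connectedComponentIn

theorem mapsTo_component (hpB : p ∈ B) (hBδ : ∀ y ∈ B, dist p y ≤ δ) :
    MapsTo j (h.component B) (WsLoc f ε p) :=
  h.mapsTo_WsLoc h.isPreconnected_component (h.component_subset.trans inter_subset_left)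
    (h.zero_mem_component hpB) fun _ ha => hBδ _ (h.component_subset ha).2

theorem component_subset_ball (hpB : p ∈ B) (hBδ : ∀ y ∈ B, dist p y ≤ δ) :
    h.component B ⊆ ball 0 1 :=
  fun _ ha => h.mem_ball_one (h.component_subset ha).1 (h.mapsTo_component hpB hBδ ha)

theorem closure_component_subset (hpB : p ∈ B) (hBδ : ∀ y ∈ B, dist p y ≤ δ) :
    closure (h.component B) ⊆ ball 0 2 :=
  (closure_mono (h.component_subset_ball hpB hBδ)).trans
    (closure_ball_subset_closedBall.trans (closedBall_subset_ball one_lt_two))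

theorem continuousOn_closure_component (hpB : p ∈ B) (hBδ : ∀ y ∈ B, dist p y ≤ δ) :
    ContinuousOn j (closure (h.component B)) :=
  h.continuousOn.mono (h.closure_component_subset hpB hBδ)

theorem mapsTo_closure_component (hpB : p ∈ B) (hBδ : ∀ y ∈ B, dist p y ≤ δ) :
    MapsTo j (closure (h.component B)) (closure B ∩ WsLoc f ε p) := by
  have hcont := h.continuousOn_closure_component hpB hBδ
  intro u hu
  have mem_closure_of_mapsTo {t : Set M} (ht : MapsTo j (h.component B) t) : j u ∈ closure t :=
    ((hcont u hu).mono subset_closure).mem_closure hu ht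
  refine ⟨mem_closure_of_mapsTo fun _ ha => (h.component_subset ha).2, ?_⟩
  exact (isClosed_WsLoc f ε p).closure_eq ▸ mem_closure_of_mapsTo (h.mapsTo_component hpB hBδ)

theorem mem_component (hpB : p ∈ B) (hBδ : ∀ y ∈ B, dist p y ≤ δ) {u : E}
    (hu : u ∈ closure (h.component B)) (huB : j u ∈ B) : u ∈ h.component B := by
  have hpre : IsPreconnected (insert u (h.component B)) :=
    h.isPreconnected_component.subset_closure (subset_insert _ _)
      (insert_subset hu subset_closure)
  exact hpre.subset_connectedComponentIn (mem_insert_of_mem _ (h.zero_mem_component hpB))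
    (insert_subset (mem_inter (h.closure_component_subset hpB hBδ hu) huB) h.component_subset)
    (mem_insert _ _)

variable {X : Type*} [NormedAddCommGroup X] [ProperSpace X] {g : X → M} {κ : M → X} {s : Set X}
  {ρ : ℝ}

theorem leftInv_mem_of_mem_closure_component (hg : ContinuousOn g s) (hκ : LeftInvOn κ g s)
    (hρ : closedBall 0 ρ ⊆ s) (hp : p ∈ g '' ball 0 ρ) (hδ : ∀ y ∈ g '' ball 0 ρ, dist p y ≤ δ)
    {u : E} (hu : u ∈ closure (h.component (g '' ball 0 ρ))) :
    κ (j u) ∈ closedBall 0 ρ ∧ g (κ (j u)) = j u := by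
  have hclosed : IsClosed (g '' closedBall 0 ρ) :=
    ((isCompact_closedBall _ _).image_of_continuousOn (hg.mono hρ)).isClosed
  obtain ⟨x, hx, hxu⟩ := closure_minimal (image_mono ball_subset_closedBall) hclosed
    (h.mapsTo_closure_component hp hδ hu).1
  rw [← hxu, hκ (hρ hx)]
  exact ⟨hx, rfl⟩

theorem isSpanningDisc_component [NormedSpace ℝ E] {E₁ E₂ : Type*} [NormedAddCommGroup E₁]
    [NormedAddCommGroup E₂] (hρ₀ : 0 < ρ) (hg : IsOpenEmbeddingOn g s)
    (hκ : LeftInvOn κ g s) (hρ : closedBall 0 ρ ⊆ s) (hp : p ∈ g '' ball 0 ρ)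
    (hδ : ∀ y ∈ g '' ball 0 ρ, dist p y ≤ δ) {π₁ : X → E₁} {π₂ : X → E₂} (hπ₁ : Continuous π₁)
    (hπ₂ : Continuous π₂) (hπ : ∀ x, ‖x‖ = max ‖π₁ x‖ ‖π₂ x‖)
    (hsmall : ∀ x ∈ closedBall 0 ρ, g x ∈ WsLoc f ε p → ‖π₂ x‖ ≤ ρ / 4) :
    IsSpanningDisc ρ (h.component (g '' ball 0 ρ)) (fun u => π₁ (κ (j u)))
      (fun u => π₂ (κ (j u))) := by
  have hB : IsOpen (g '' ball 0 ρ) :=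
    hg.isOpen_image (ball_subset_closedBall.trans hρ) isOpen_ball
  have hmem {u : E} := h.leftInv_mem_of_mem_closure_component hg.continuousOn hκ hρ hp hδ (u := u)
  have hcont : ContinuousOn (fun u => κ (j u)) (closure (h.component (g '' ball 0 ρ))) :=
    (hg.of_leftInvOn hκ).continuousOn.comp (h.continuousOn_closure_component hp hδ)
      fun u hu => ⟨_, hρ (hmem hu).1, (hmem hu).2⟩
  have hsnd {u : E} (hu : u ∈ closure (h.component (g '' ball 0 ρ))) :
      ‖π₂ (κ (j u))‖ ≤ ρ / 4 := by
    refine hsmall _ (hmem hu).1 ?_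
    rw [(hmem hu).2]
    exact (h.mapsTo_closure_component hp hδ hu).2
  refine ⟨h.isOpen_component hB, h.zero_mem_component hp, h.component_subset_ball hp hδ,
    hπ₁.comp_continuousOn hcont, hπ₂.comp_continuousOn hcont, hsnd, fun {u} hu hu' => ?_⟩
  by_contra! hlt
  refine hu' (h.mem_component hp hδ hu ⟨κ (j u), ?_, (hmem hu).2⟩)
  rw [mem_ball_zero_iff, hπ]
  exact max_lt hlt ((hsnd hu).trans_lt (by linarith))

end Component

end IsStablePlaque

namespace PlaqueChart

variable {Es Eu : Type*} [NormedAddCommGroup Es] [NormedSpace ℝ Es] [FiniteDimensional ℝ Es]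
  [NormedAddCommGroup Eu] [NormedSpace ℝ Eu] [FiniteDimensional ℝ Eu] {f : M ≃ₜ M} {ε δ : ℝ} {q : M}

omit [NormedSpace ℝ Es] [FiniteDimensional ℝ Es] in
theorem exists_closedBall_subset (H : PlaqueChart Es Eu f ε δ q) {η : ℝ} (hη : 0 < η) :
    ∃ ρ > 0, ∀ x ∈ closedBall 0 ρ, x ∈ ball (0 : Es) 2 ×ˢ ball (0 : Eu) H.radius ∧
      dist (H.chart x) q < η ∧ (H.chart x ∈ WsLoc f ε q → x.2 = 0) ∧
      (H.chart x ∈ WsLoc f⁻¹ ε q → x.1 = 0) := by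
  have := FiniteDimensional.proper_real Eu
  exact nhds_basis_closedBall.eventually_iff.1 (H.eventually_mem_domain.and
    ((H.tendsto_chart.eventually (ball_mem_nhds q hη)).and
      (H.eventually_snd_eq_zero.and H.eventually_fst_eq_zero)))

theorem finrank_le_of_norm_le {Es' Eu' : Type*} [NormedAddCommGroup Es'] [NormedSpace ℝ Es']
    [FiniteDimensional ℝ Es'] [NormedAddCommGroup Eu'] [NormedSpace ℝ Eu']
    (hexp : IsExpansive f (2 * ε)) (hε : 0 ≤ ε) {g : Es × Eu → M} {s : Set (Es × Eu)}
    (hg : IsOpenEmbeddingOn g s) {ρ : ℝ} (hρ₀ : 0 < ρ) (hρ : closedBall 0 ρ ⊆ s)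
    (H : PlaqueChart Es' Eu' f ε δ q) (hq : q ∈ g '' ball 0 ρ)
    (hδ : ∀ y ∈ g '' ball 0 ρ, dist q y ≤ δ)
    (hs : ∀ x ∈ closedBall 0 ρ, g x ∈ WsLoc f ε q → ‖x.2‖ ≤ ρ / 4)
    (hu : ∀ x ∈ closedBall 0 ρ, g x ∈ WsLoc f⁻¹ ε q → ‖x.1‖ ≤ ρ / 4) :
    Module.finrank ℝ Es ≤ Module.finrank ℝ Es' := by
  have := FiniteDimensional.proper_real (Es × Eu)
  obtain ⟨κ, hκ, hκg⟩ := hg.exists_leftInvOn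
  have hX := H.isStablePlaque.isSpanningDisc_component hρ₀ hg hκg hρ hq hδ continuous_fst
    continuous_snd (fun _ => rfl) hs
  have hY := H.isUnstablePlaque.isSpanningDisc_component hρ₀ hg hκg hρ hq hδ continuous_snd
    continuous_fst (fun x => max_comm ‖x.1‖ ‖x.2‖) hu
  have hmem : ∀ᶠ x in 𝓝 0, H.chart x ∈ g '' ball 0 ρ :=
    H.tendsto_chart.eventually
      ((hg.isOpen_image (ball_subset_closedBall.trans hρ) isOpen_ball).mem_nhds hq)
  obtain ⟨r, hr, hball⟩ := Metric.eventually_nhds_iff_ball.1 (H.eventually_mem_domain.and hmem)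
  have hφ : IsOpenEmbeddingOn (κ ∘ H.chart) (ball 0 r) :=
    hκ.comp (H.isOpenEmbeddingOn.mono isOpen_ball fun x hx => (hball x hx).1)
      fun x hx => image_mono (ball_subset_closedBall.trans hρ) (hball x hx).2
  refine hX.finrank_le hρ₀ hY (fun u hu v hv h₁ h₂ => ?_) hφ (mem_ball_self hr)
    (Filter.Eventually.of_forall fun _ => rfl) ?_
  · have hmeet : H.chart (u, 0) = H.unstable v := by
      rw [← (H.isStablePlaque.leftInv_mem_of_mem_closure_component hg.continuousOn hκg hρ hq hδ
        (subset_closure hu)).2, ← (H.isUnstablePlaque.leftInv_mem_of_mem_closure_component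
        hg.continuousOn hκg hρ hq hδ (subset_closure hv)).2, Prod.ext h₁ h₂]
    have hq' : H.chart (u, 0) = q := hexp.eq_of_mem_WsLoc
      (H.isStablePlaque.mapsTo_component hq hδ hu) (mem_WsLoc_self f hε q)
      (hmeet ▸ H.isUnstablePlaque.mapsTo_component hq hδ hv) (mem_WsLoc_self f⁻¹ hε q)
    exact ⟨H.isStablePlaque.injOn (H.isStablePlaque.component_subset hu).1 (mem_ball_self two_pos)
        (hq'.trans H.isStablePlaque.map_zero.symm),
      H.isUnstablePlaque.injOn (H.isUnstablePlaque.component_subset hv).1 (mem_ball_self two_pos)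
        (hmeet.symm.trans (hq'.trans H.isUnstablePlaque.map_zero.symm))⟩
  · filter_upwards [ball_mem_nhds 0 H.radius_pos] with v hv
    rw [Function.comp_apply, H.chart_zero_left (mem_ball_zero_iff.1 hv)]

theorem eventually_finrank_le [CompactSpace M] (H : PlaqueChart Es Eu f ε δ q) (hε : 0 ≤ ε)
    (hδ : 0 < δ) (hexp : IsExpansive f (2 * ε)) :
    ∀ᶠ q' in 𝓝 q, ∀ (Es' Eu' : Type*) [NormedAddCommGroup Es'] [NormedSpace ℝ Es']
      [FiniteDimensional ℝ Es'] [NormedAddCommGroup Eu'] [NormedSpace ℝ Eu'],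
      PlaqueChart Es' Eu' f ε δ q' → Module.finrank ℝ Es ≤ Module.finrank ℝ Es' := by
  have := FiniteDimensional.proper_real (Es × Eu)
  obtain ⟨ρ, hρ₀, hρ⟩ := H.exists_closedBall_subset (half_pos hδ)
  have hsub : closedBall 0 ρ ⊆ ball (0 : Es) 2 ×ˢ ball (0 : Eu) H.radius := fun x hx => (hρ x hx).1
  have hcont := H.isOpenEmbeddingOn.continuousOn.mono hsub
  have hK := isCompact_closedBall (0 : Es × Eu) ρ
  have hB : H.chart '' ball 0 ρ ∈ 𝓝 q :=
    (H.isOpenEmbeddingOn.isOpen_image (ball_subset_closedBall.trans hsub) isOpen_ball).mem_nhds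
      ⟨0, mem_ball_self hρ₀, H.chart_zero⟩
  filter_upwards [hB, ball_mem_nhds q (half_pos hδ),
    eventually_norm_le_of_mem_WsLoc hK hcont continuous_snd (fun x hx => (hρ x hx).2.2.1)
      (div_pos hρ₀ four_pos),
    eventually_norm_le_of_mem_WsLoc hK hcont continuous_fst (fun x hx => (hρ x hx).2.2.2)
      (div_pos hρ₀ four_pos)]
    with q' hq'B hq' hs hu Es' Eu' _ _ _ _ _ H'
  refine finrank_le_of_norm_le hexp hε H.isOpenEmbeddingOn hρ₀ hsub H' hq'B ?_ hs hu
  rintro _ ⟨x, hx, rfl⟩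
  have hx' := (hρ x (ball_subset_closedBall hx)).2.1
  linarith [dist_triangle_right q' (H.chart x) q, mem_ball.1 hq']

end PlaqueChart

/-! ### Separating sheets in codimension one -/

theorem exists_continuous_eq_zero_iff_mem_of_subset {X : Type*} [PseudoMetricSpace X]
    {S N : Set X} (hS : IsClosed S) (hS' : S.Nonempty) (hN : IsOpen N) (hSN : S ⊆ N) :
    ∃ u : X → ℝ, Continuous u ∧ (∀ x, u x ∈ Icc 0 1) ∧ (∀ x, u x = 0 ↔ x ∈ S) ∧
      ∀ x ∉ N, u x = 1 := by
  obtain ⟨f, hfS, hfN, hf⟩ := exists_continuous_zero_one_of_isClosed hS hN.isClosed_compl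
    (disjoint_compl_right_iff_subset.2 hSN)
  refine ⟨fun x => max (f x) (min 1 (infDist x S)),
    f.continuous.max (continuous_const.min (continuous_infDist_pt S)),
    fun x => ⟨(hf x).1.trans (le_max_left _ _), max_le (hf x).2 (min_le_left _ _)⟩,
    fun x => ⟨fun hx => ?_, fun hx => ?_⟩, fun x hx => ?_⟩
  · have hle : min 1 (infDist x S) ≤ 0 := (le_max_right _ _).trans hx.le
    exact (hS.mem_iff_infDist_zero hS').2
      (((min_le_iff.1 hle).resolve_left one_pos.not_ge).antisymm infDist_nonneg)
  · simp [hfS hx, infDist_zero_of_mem hx]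
  · simp [hfN hx]

theorem eq_zero_of_mem_frontier_setOf_pos {X : Type*} [TopologicalSpace X] {N : Set X}
    (hN : IsOpen N) {b : X → ℝ} (hb : ContinuousOn b N) {x : X}
    (hx : x ∈ frontier {y | y ∈ N ∧ 0 < b y}) (hxN : x ∈ N) : b x = 0 := by
  have hbx : ContinuousAt b x := hb.continuousAt (hN.mem_nhds hxN)
  refine le_antisymm (not_lt.1 fun hpos => hx.2 ?_) (not_lt.1 fun hneg => ?_)
  · exact mem_interior_iff_mem_nhds.2 ((hN.eventually_mem hxN).and (hbx.eventually_const_lt hpos))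
  · exact mem_closure_iff_frequently.1 hx.1
      ((hbx.eventually_lt_const hneg).mono fun y hy h => h.2.not_gt hy)

open Classical in
theorem continuous_ite_circleExp {X : Type*} [TopologicalSpace X] {N : Set X} (hN : IsOpen N)
    {b u : X → ℝ} (hb : ContinuousOn b N) (hu : Continuous u) (hbu : ∀ x ∈ N, b x = 0 → u x = 0)
    (huN : ∀ x ∉ N, u x = 1) : Continuous fun x =>
      if x ∈ N ∧ 0 < b x then Circle.exp (Real.pi * u x) else Circle.exp (-(Real.pi * u x)) := by
  refine Continuous.if (fun x hx => ?_) (by fun_prop) (by fun_prop)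
  by_cases hxN : x ∈ N
  · simp [hbu x hxN (eq_zero_of_mem_frontier_setOf_pos hN hb hx hxN)]
  · rw [huN x hxN, Circle.exp_eq_exp]
    exact ⟨1, by push_cast; ring⟩

theorem circleExp_eq_one_iff_of_abs_lt {t : ℝ} (ht : |t| < 2 * Real.pi) :
    Circle.exp t = 1 ↔ t = 0 := by
  rw [Circle.exp_eq_one]
  refine ⟨?_, fun h => ⟨0, by simpa using h⟩⟩
  rintro ⟨m, rfl⟩
  rw [abs_mul, abs_of_pos Real.two_pi_pos, mul_lt_iff_lt_one_left Real.two_pi_pos] at ht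
  have hm : m = 0 := Int.abs_lt_one_iff.1 (by exact_mod_cast ht)
  rw [hm, Int.cast_zero, zero_mul]

theorem exists_circleExp_eq_and_eq_zero_iff {X : Type*} [TopologicalSpace X]
    [SimplyConnectedSpace X] [LocallyPathConnectedSpace X] {S : Set X} (hS : IsPreconnected S)
    {x₀ : X} (hx₀ : x₀ ∈ S) (F : C(X, Circle)) (hF : ∀ x, F x = 1 ↔ x ∈ S) :
    ∃ θ : X → ℝ, Continuous θ ∧ (∀ x, Circle.exp (θ x) = F x) ∧ ∀ x, θ x = 0 ↔ x ∈ S := by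
  obtain ⟨θ, ⟨hθ₀, hθ⟩, -⟩ := Circle.isCoveringMap_exp.existsUnique_continuousMap_lifts F x₀ 0
    (by rw [Circle.exp_zero, (hF x₀).2 hx₀])
  have hexpθ (x) : Circle.exp (θ x) = F x := congrFun hθ x
  refine ⟨θ, θ.continuous, hexpθ, fun x => ⟨fun hx => ?_, fun hx => ?_⟩⟩
  · rw [← hF, ← hexpθ, hx, Circle.exp_zero]
  · rw [← hθ₀]
    refine Circle.isCoveringMap_exp.constOn_of_comp hS θ.continuous.continuousOn ?_ hx hx₀
    intro y hy z hz
    rw [hexpθ, hexpθ, (hF y).2 hy, (hF z).2 hz]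

theorem mul_pos_of_circleExp_eq_ite {θ u b : ℝ} (hθ : θ ∈ Ioo (-Real.pi) Real.pi) (hu : 0 < u)
    (hu1 : u < 1) (hb : b ≠ 0)
    (h : Circle.exp θ = if 0 < b then Circle.exp (Real.pi * u) else Circle.exp (-(Real.pi * u))) :
    0 < θ * b := by
  have hpos : 0 < Real.pi * u := mul_pos Real.pi_pos hu
  have hlt : Real.pi * u < Real.pi := mul_lt_of_lt_one_right Real.pi_pos hu1
  have hinj := Circle.exp_injOn_Ioc (a := -Real.pi) (b := Real.pi) (by linarith)
  split_ifs at h with hb₀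
  · rw [hinj ⟨hθ.1, hθ.2.le⟩ ⟨by linarith, hlt.le⟩ h]
    exact mul_pos hpos hb₀
  · rw [hinj ⟨hθ.1, hθ.2.le⟩ ⟨by linarith, by linarith⟩ h]
    exact mul_pos_of_neg_of_neg (neg_lt_zero.2 hpos) (hb.lt_of_le (not_lt.1 hb₀))

/- The map `exp (± π u)` to the circle, signed by `b`, is continuous since `exp π = exp (-π)`; its
lift to `ℝ` carries the sign of `b` near `S` to all of `X`. -/
theorem exists_continuous_eq_zero_iff_mem_and_sign {X : Type*} [PseudoMetricSpace X]
    [SimplyConnectedSpace X] [LocallyPathConnectedSpace X] {S N : Set X} (hS : IsClosed S)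
    (hS' : IsPreconnected S) (hN : IsOpen N) (hSN : S ⊆ N) {b : X → ℝ} (hb : ContinuousOn b N)
    (hbS : ∀ x ∈ N, b x = 0 → x ∈ S) {x₀ : X} (hx₀ : x₀ ∈ S) :
    ∃ θ : X → ℝ, Continuous θ ∧ (∀ x, θ x = 0 ↔ x ∈ S) ∧
      ∀ᶠ x in 𝓝 x₀, x ∉ S → 0 < θ x * b x := by
  classical
  obtain ⟨u, hu, hu01, huS, huN⟩ :=
    exists_continuous_eq_zero_iff_mem_of_subset hS ⟨x₀, hx₀⟩ hN hSN
  let F : C(X, Circle) := ⟨_, continuous_ite_circleExp hN hb hu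
    (fun x hx h => (huS x).2 (hbS x hx h)) huN⟩
  have hF (x) : F x = if x ∈ N ∧ 0 < b x then Circle.exp (Real.pi * u x)
    else Circle.exp (-(Real.pi * u x)) := rfl
  have hFS (x) : F x = 1 ↔ x ∈ S := by
    have habs : |Real.pi * u x| < 2 * Real.pi := by
      rw [abs_of_nonneg (mul_nonneg Real.pi_pos.le (hu01 x).1)]
      nlinarith [(hu01 x).2, Real.pi_pos]
    have hxS : x ∈ S ↔ Real.pi * u x = 0 := by
      rw [← huS, mul_eq_zero, or_iff_right Real.pi_ne_zero]
    rw [hF, hxS]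
    split_ifs
    · exact circleExp_eq_one_iff_of_abs_lt habs
    · rw [circleExp_eq_one_iff_of_abs_lt (by rwa [abs_neg]), neg_eq_zero]
  obtain ⟨θ, hθ, hexpθ, hθS⟩ := exists_circleExp_eq_and_eq_zero_iff hS' hx₀ F hFS
  have hθ₀ : θ x₀ = 0 := (hθS x₀).2 hx₀
  refine ⟨θ, hθ, hθS, ?_⟩
  have hθx₀ : ∀ᶠ x in 𝓝 x₀, θ x ∈ Ioo (-Real.pi) Real.pi :=
    hθ.continuousAt.eventually
      (Ioo_mem_nhds (hθ₀ ▸ neg_lt_zero.2 Real.pi_pos) (hθ₀ ▸ Real.pi_pos))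
  have hux₀ : ∀ᶠ x in 𝓝 x₀, u x < 1 :=
    hu.continuousAt.eventually_lt_const (((huS x₀).2 hx₀).trans_lt one_pos)
  filter_upwards [hθx₀, hux₀, hN.eventually_mem (hSN hx₀)] with x hθx hux hxN hxS
  have hbx : b x ≠ 0 := fun h => hxS (hbS x hxN h)
  have hux₀ : 0 < u x := (hu01 x).1.lt_of_ne fun h => hxS ((huS x).1 h.symm)
  refine mul_pos_of_circleExp_eq_ite hθx hux₀ hux hbx ?_
  simpa only [hF, hxN, true_and] using hexpθ x

theorem exists_continuousOn_range_eq_zero_iff_mem_and_sign {X Y : Type*} [PseudoMetricSpace X]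
    [SimplyConnectedSpace X] [LocallyPathConnectedSpace X] [TopologicalSpace Y] {γ : X → Y}
    (hγ : IsOpenEmbeddingOn γ univ) {S T N : Set Y} (hT : IsClosed T) (hTS : range γ ∩ T = S)
    (hS : IsPreconnected S) (hN : IsOpen N) (hSN : S ⊆ N) {b : Y → ℝ} (hb : ContinuousOn b N)
    (hbS : ∀ y ∈ N, b y = 0 → y ∈ S) {y₀ : Y} (hy₀ : y₀ ∈ S) :
    ∃ θ : Y → ℝ, ContinuousOn θ (range γ) ∧ (∀ {y}, y ∈ range γ → (θ y = 0 ↔ y ∈ S)) ∧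
      ∀ᶠ y in 𝓝 y₀, y ∉ S → 0 < θ y * b y := by
  have hγ' : Continuous γ := continuousOn_univ.1 hγ.continuousOn
  have hB : IsOpen (range γ) := image_univ ▸ hγ.isOpen_image Subset.rfl isOpen_univ
  have hSB : S ⊆ range γ := hTS ▸ inter_subset_left
  obtain ⟨x₀, rfl⟩ := hSB hy₀
  have : Nonempty X := ⟨x₀⟩
  obtain ⟨k, hk, hkγ⟩ := hγ.exists_leftInvOn
  have hk_γ (x : X) : k (γ x) = x := hkγ (mem_univ x)
  rw [image_univ] at hk
  have hγS : γ ⁻¹' S = k '' S := by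
    refine Subset.antisymm (fun x hx => ⟨γ x, hx, hk_γ x⟩) ?_
    rintro _ ⟨y, hy, rfl⟩
    obtain ⟨x, rfl⟩ := hSB hy
    rwa [hk_γ]
  obtain ⟨θ, hθ, hθS, hθb⟩ := exists_continuous_eq_zero_iff_mem_and_sign (S := γ ⁻¹' S)
    (by rw [← hTS, preimage_range_inter]; exact hT.preimage hγ')
    (hγS ▸ hS.image k (hk.continuousOn.mono hSB)) (hN.preimage hγ') (preimage_mono hSN)
    (hb.comp hγ'.continuousOn (mapsTo_preimage _ _)) (fun x hx => hbS _ hx) hy₀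
  refine ⟨θ ∘ k, hθ.comp_continuousOn hk.continuousOn, ?_, ?_⟩
  · rintro _ ⟨x, rfl⟩
    rw [Function.comp_apply, hk_γ]
    exact hθS x
  · have hk₀ := hk.continuousOn.continuousAt (hB.mem_nhds (hSB hy₀))
    rw [ContinuousAt, hk_γ] at hk₀
    filter_upwards [hk₀.eventually hθb, hB.mem_nhds (hSB hy₀)]
    rintro _ hx ⟨x, rfl⟩
    rw [Function.comp_apply]
    rw [hk_γ] at hx ⊢
    exact hx

/-- A preconnected piece `sheet` of the local stable set of `p` which is, within `B`, the zero set
of the continuous function `height`: it separates the two sides of `p` in `B`. -/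
structure SeparatingSheet (f : M ≃ₜ M) (ε : ℝ) (p : M) (B : Set M) where
  height : M → ℝ
  sheet : Set M
  continuousOn : ContinuousOn height B
  isPreconnected : IsPreconnected sheet
  mem_sheet : p ∈ sheet
  sheet_subset : sheet ⊆ B ∩ WsLoc f ε p
  height_eq_zero_iff {y : M} (hy : y ∈ B) : height y = 0 ↔ y ∈ sheet

namespace PlaqueChart

variable {Es Eu : Type*} [NormedAddCommGroup Es] [NormedAddCommGroup Eu] {f : M ≃ₜ M}
  {ε δ : ℝ} {p : M} (H : PlaqueChart Es Eu f ε δ p) {B : Set M}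

/-- The part of the domain of the chart over the component of the stable plaque in `B`. -/
def tube (B : Set M) : Set (Es × Eu) :=
  (ball 0 2 ×ˢ ball 0 H.radius ∩ H.chart ⁻¹' B) ∩ Prod.fst ⁻¹' H.isStablePlaque.component B

theorem mk_zero_mem_tube {a : Es} (ha : a ∈ H.isStablePlaque.component B) : (a, 0) ∈ H.tube B :=
  have ha' := H.isStablePlaque.component_subset ha
  ⟨⟨⟨ha'.1, mem_ball_self H.radius_pos⟩, ha'.2⟩, ha⟩

theorem eventually_zero_mk_mem_tube (hB : B ∈ 𝓝 p) : ∀ᶠ b in 𝓝 (0 : Eu), (0, b) ∈ H.tube B := by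
  have hcont : Filter.Tendsto (fun b : Eu => ((0 : Es), b)) (𝓝 0) (𝓝 0) :=
    (Continuous.prodMk_right 0).tendsto' 0 0 rfl
  filter_upwards [hcont.eventually H.eventually_mem_domain,
    (H.tendsto_chart.comp hcont).eventually hB] with b hb hbB
  exact ⟨⟨hb, hbB⟩, H.isStablePlaque.zero_mem_component (mem_of_mem_nhds hB)⟩

theorem inter_image_closure_component (hp : p ∈ B) (hδ : ∀ y ∈ B, dist p y ≤ δ) :
    B ∩ (fun a => H.chart (a, 0)) '' closure (H.isStablePlaque.component B) =
      (fun a => H.chart (a, 0)) '' H.isStablePlaque.component B := by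
  refine Subset.antisymm ?_ (subset_inter ?_ (image_mono subset_closure))
  · rintro _ ⟨hy, a, ha, rfl⟩
    exact ⟨a, H.isStablePlaque.mem_component hp hδ ha hy, rfl⟩
  · exact image_subset_iff.2 fun a ha => (H.isStablePlaque.component_subset ha).2

theorem isClosed_image_closure_component [ProperSpace Es] (hp : p ∈ B)
    (hδ : ∀ y ∈ B, dist p y ≤ δ) :
    IsClosed ((fun a => H.chart (a, 0)) '' closure (H.isStablePlaque.component B)) :=
  ((isBounded_ball.subset
    (H.isStablePlaque.component_subset_ball hp hδ)).isCompact_closure.image_of_continuousOn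
      (H.isStablePlaque.continuousOn_closure_component hp hδ)).isClosed

variable [NormedSpace ℝ Es]

theorem isOpenEmbeddingOn_tube (hB : IsOpen B) : IsOpenEmbeddingOn H.chart (H.tube B) :=
  H.isOpenEmbeddingOn.mono
    ((H.isOpenEmbeddingOn.continuousOn.isOpen_inter_preimage H.isOpenEmbeddingOn.isOpen hB).inter
      ((H.isStablePlaque.isOpen_component hB).preimage continuous_fst))
    (inter_subset_left.trans inter_subset_left)

theorem exists_continuousOn_eq_zero_iff [NormedSpace ℝ Eu] (e : Eu ≃L[ℝ] ℝ) (hB : IsOpen B)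
    (hp : p ∈ B) :
    ∃ N : Set M, ∃ b : M → ℝ, IsOpen N ∧
      (fun a => H.chart (a, 0)) '' H.isStablePlaque.component B ⊆ N ∧ ContinuousOn b N ∧
      (∀ y ∈ N, b y = 0 ↔ y ∈ (fun a => H.chart (a, 0)) '' H.isStablePlaque.component B) ∧
      ∀ᶠ v in 𝓝 0, H.unstable v ∈ N ∧ b (H.unstable v) = e v := by
  have htube := H.isOpenEmbeddingOn_tube hB
  obtain ⟨κ, hκ, hκ_chart⟩ := htube.exists_leftInvOn
  refine ⟨H.chart '' H.tube B, fun y => e (κ y).2, hκ.isOpen, ?_, ?_, ?_, ?_⟩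
  · rintro _ ⟨a, ha, rfl⟩
    exact mem_image_of_mem _ (H.mk_zero_mem_tube ha)
  · exact e.continuous.comp_continuousOn (continuous_snd.comp_continuousOn hκ.continuousOn)
  · rintro _ ⟨x, hx, rfl⟩
    beta_reduce
    rw [hκ_chart hx, EmbeddingLike.map_eq_zero_iff]
    refine ⟨fun h => ⟨x.1, hx.2, congrArg H.chart (Prod.ext rfl h.symm)⟩, ?_⟩
    rintro ⟨a, ha, hax⟩
    exact (congrArg Prod.snd (htube.injOn (H.mk_zero_mem_tube ha) hx hax)).symm
  · filter_upwards [H.eventually_zero_mk_mem_tube (hB.mem_nhds hp),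
      ball_mem_nhds 0 H.radius_pos] with v hv hv'
    rw [← H.chart_zero_left (mem_ball_zero_iff.1 hv'), hκ_chart hv]
    exact ⟨mem_image_of_mem _ hv, rfl⟩

theorem exists_separatingSheet [ProperSpace Es] [NormedSpace ℝ Eu] {X : Type*} [MetricSpace X]
    [SimplyConnectedSpace X] [LocallyPathConnectedSpace X] {γ : X → M}
    (hγ : IsOpenEmbeddingOn γ univ) (e : Eu ≃L[ℝ] ℝ) (hp : p ∈ range γ)
    (hδ : ∀ y ∈ range γ, dist p y ≤ δ) :
    ∃ σ : SeparatingSheet f ε p (range γ),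
      ∀ᶠ v in 𝓝 0, v ≠ 0 → 0 < σ.height (H.unstable v) * e v := by
  have hB : IsOpen (range γ) := image_univ ▸ hγ.isOpen_image Subset.rfl isOpen_univ
  obtain ⟨N, b, hN, hSN, hb, hbS, hbe⟩ := H.exists_continuousOn_eq_zero_iff e hB hp
  have hpS : p ∈ (fun a => H.chart (a, 0)) '' H.isStablePlaque.component (range γ) :=
    ⟨0, H.isStablePlaque.zero_mem_component hp, H.chart_zero⟩
  have hS := H.isStablePlaque.isPreconnected_component.image _
    ((H.isStablePlaque.continuousOn_closure_component hp hδ).mono subset_closure)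
  obtain ⟨θ, hθ, hθS, hθb⟩ := exists_continuousOn_range_eq_zero_iff_mem_and_sign hγ
    (H.isClosed_image_closure_component hp hδ) (H.inter_image_closure_component hp hδ) hS hN hSN hb
    (fun y hy => (hbS y hy).1) hpS
  refine ⟨⟨θ, _, hθ, hS, hpS, subset_inter ?_ ?_, hθS⟩, ?_⟩
  · exact (H.inter_image_closure_component hp hδ).superset.trans inter_subset_left
  · exact (H.isStablePlaque.mapsTo_component hp hδ).image_subset
  · have hunst := H.isUnstablePlaque.continuousOn.continuousAt (ball_mem_nhds 0 two_pos)
    rw [ContinuousAt, H.isUnstablePlaque.map_zero] at hunst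
    filter_upwards [hunst.eventually hθb, hbe] with v hθv hv hv₀
    rw [← hv.2]
    refine hθv fun hvS => hv₀ ?_
    rwa [← hbS _ hv.1, hv.2, EmbeddingLike.map_eq_zero_iff] at hvS

end PlaqueChart

/-! ### Counting the accumulation points -/

theorem IsExpansive.eq_of_mem_periodicPts {f : M ≃ₜ M} {α : ℝ} (hexp : IsExpansive f α) {x y : M}
    (hx : x ∈ Function.periodicPts f) (hy : y ∈ Function.periodicPts f) (h : y ∈ WsLoc f α x) :
    x = y := by
  obtain ⟨l, hl, hlx⟩ := hx
  obtain ⟨m, hm, hmy⟩ := hy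
  have inv_pow_apply {z : M} (hz : Function.IsPeriodicPt f (l * m) z) (k : ℕ) :
      (f⁻¹ ^ k) z = (f ^ (l * m * k - k)) z := by
    have hpow : (f ^ (l * m * k)) z = z :=
      (congrFun (hom_coe_pow DFunLike.coe rfl (fun _ _ => rfl) f _) z).trans (hz.mul_const k)
    rw [pow_sub f (Nat.le_mul_of_pos_left k (Nat.mul_pos hl hm)),
      (Commute.refl f).pow_pow _ _ |>.inv_right.eq, Homeomorph.mul_apply, hpow, inv_pow]
  rw [mem_WsLoc_iff] at h
  refine hexp.eq_of_forall_dist_le h fun k => ?_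
  rw [inv_pow_apply (hlx.mul_const m), inv_pow_apply (hmy.const_mul l)]
  exact h _

theorem exists_eq_and_forall_le_of_continuousOn_Icc {φ : ℝ → ℝ} {a b c : ℝ} (hab : a ≤ b)
    (hφ : ContinuousOn φ (Icc a b)) (ha : φ a ≤ c) (hb : c ≤ φ b) :
    ∃ t ∈ Icc a b, φ t = c ∧ ∀ s ∈ Icc a t, φ s ≤ c := by
  have hcpt : IsCompact (Icc a b ∩ φ ⁻¹' {c}) :=
    isCompact_Icc.of_isClosed_subset
      (hφ.preimage_isClosed_of_isClosed isClosed_Icc isClosed_singleton) inter_subset_left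
  obtain ⟨t, ⟨ht, htc⟩, hmin⟩ := hcpt.exists_isLeast (intermediate_value_Icc hab hφ ⟨ha, hb⟩)
  refine ⟨t, ht, htc, fun s hs => ?_⟩
  by_contra! hcs
  obtain ⟨r, hr, hrc⟩ := intermediate_value_Icc hs.1
    (hφ.mono (Icc_subset_Icc_right (hs.2.trans ht.2))) ⟨ha, hcs.le⟩
  have hst : s = t := hs.2.antisymm ((hmin ⟨⟨hr.1, hr.2.trans (hs.2.trans ht.2)⟩, hrc⟩).trans hr.2)
  exact hcs.ne (hst ▸ htc.symm)

namespace IsStablePlaque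

variable {E : Type*} [NormedAddCommGroup E] {f : M ≃ₜ M} {ε δ : ℝ} {j : E → M} {p : M}

theorem exists_le_dist [NormedSpace ℝ E] (h : IsStablePlaque f ε δ j p) {ρ : ℝ} (hρδ : ρ ≤ δ)
    {w : E} (hw : ‖w‖ = 1) : ∃ b ∈ Icc (0 : ℝ) 1, ρ ≤ dist p (j (b • w)) := by
  by_contra! hcon
  have hsub : (fun s : ℝ => s • w) '' Icc 0 1 ⊆ ball 0 2 := by
    rintro _ ⟨s, hs, rfl⟩
    rw [mem_ball_zero_iff, norm_smul, hw, mul_one, Real.norm_of_nonneg hs.1]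
    exact hs.2.trans_lt one_lt_two
  have hone := mem_image_of_mem (fun s : ℝ => s • w) (right_mem_Icc.2 zero_le_one)
  have hmem := h.mapsTo_WsLoc (isPreconnected_Icc.image _ (by fun_prop)) hsub
    ⟨0, left_mem_Icc.2 zero_le_one, zero_smul _ _⟩
    (forall_mem_image.2 fun s hs => (hcon s hs).le.trans hρδ) hone
  have hlt := h.mem_ball_one (hsub hone) hmem
  rw [one_smul, mem_ball_zero_iff, hw] at hlt
  exact lt_irrefl _ hlt

theorem exists_ray [NormedSpace ℝ E] (h : IsStablePlaque f ε δ j p) {ρ : ℝ} (hρ : 0 < ρ)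
    (hρδ : ρ ≤ δ) {w : E} (hw : ‖w‖ = 1) :
    ∃ t ∈ Ioc (0 : ℝ) 1, dist p (j (t • w)) = ρ ∧
      MapsTo (fun s : ℝ => j (s • w)) (Icc 0 t) (closedBall p ρ ∩ WsLoc f ε p) := by
  obtain ⟨b, hb, hbρ⟩ := h.exists_le_dist hρδ hw
  have hball {s : ℝ} (hs : s ∈ Icc (0 : ℝ) b) : s • w ∈ ball 0 2 := by
    rw [mem_ball_zero_iff, norm_smul, hw, mul_one, Real.norm_of_nonneg hs.1]
    exact (hs.2.trans hb.2).trans_lt one_lt_two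
  have hzero : dist p (j ((0 : ℝ) • w)) = 0 := by rw [zero_smul, h.map_zero, dist_self]
  obtain ⟨t, ht, htρ, hle⟩ := exists_eq_and_forall_le_of_continuousOn_Icc hb.1
    (φ := fun s => dist p (j (s • w)))
    ((continuous_const.dist continuous_id).comp_continuousOn
      (h.continuousOn.comp (by fun_prop) fun s hs => hball hs))
    (hzero.trans_le hρ.le) hbρ
  have ht₀ : 0 < t := ht.1.lt_of_ne' fun h₀ => hρ.ne (by rw [← htρ, h₀, hzero])
  refine ⟨t, ⟨ht₀, ht.2.trans hb.2⟩, htρ, fun s hs => ⟨mem_closedBall'.2 (hle s hs), ?_⟩⟩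
  refine h.mapsTo_WsLoc (C := (fun s : ℝ => s • w) '' Icc 0 t)
    (isPreconnected_Icc.image _ (by fun_prop)) ?_ ⟨0, left_mem_Icc.2 ht.1, zero_smul _ _⟩ ?_
    (mem_image_of_mem _ hs)
  · exact image_subset_iff.2 fun s hs => hball ⟨hs.1, hs.2.trans ht.2⟩
  · exact forall_mem_image.2 fun s hs => (hle s hs).trans hρδ

end IsStablePlaque

theorem exists_norm_eq_one_forall_smul_notMem {E : Type*} [NormedAddCommGroup E] [NormedSpace ℝ E]
    (hE : 1 < Module.rank ℝ E) {D : Set E} (hD : D.Finite) (h₀ : (0 : E) ∉ D) :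
    ∃ w : E, ‖w‖ = 1 ∧ ∀ s : ℝ, 0 ≤ s → s • w ∉ D := by
  have : Nontrivial E := rank_pos_iff_nontrivial.1 (zero_lt_one.trans hE)
  obtain ⟨x, hx⟩ := (NormedSpace.sphere_nonempty (x := (0 : E)) (r := 1)).2 zero_le_one
  have hinf : (sphere (0 : E) 1).Infinite := (isPreconnected_sphere hE 0 1).infinite_of_nontrivial
    ⟨x, hx, -x, by simpa using hx, Subtype.coe_ne_coe.2 (ne_neg_of_mem_unit_sphere ℝ ⟨x, hx⟩)⟩
  obtain ⟨w, hw, hwD⟩ := (hinf.sdiff (hD.image fun b => ‖b‖⁻¹ • b)).nonempty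
  have hw₁ : ‖w‖ = 1 := mem_sphere_zero_iff_norm.1 hw
  refine ⟨w, hw₁, fun s hs hsD => ?_⟩
  obtain rfl | hs' := hs.eq_or_lt
  · exact h₀ (by rwa [zero_smul] at hsD)
  · refine hwD ⟨_, hsD, ?_⟩
    beta_reduce
    rw [norm_smul, hw₁, mul_one, Real.norm_of_nonneg hs, inv_smul_smul₀ hs'.ne']

theorem IsStablePlaque.exists_isPreconnected_disjoint {E : Type*} [NormedAddCommGroup E]
    [NormedSpace ℝ E] (hE : 1 < Module.rank ℝ E) {f : M ≃ₜ M} {ε δ : ℝ} {j : E → M} {p : M}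
    (h : IsStablePlaque f ε δ j p) {A : Set M} (hA : (WsLoc f ε p ∩ A).Finite) (hpA : p ∉ A)
    {ρ : ℝ} (hρ : 0 < ρ) (hρδ : ρ ≤ δ) :
    ∃ Λ : Set M, IsPreconnected Λ ∧ p ∈ Λ ∧ Λ ⊆ closedBall p ρ ∩ WsLoc f ε p ∧ Disjoint Λ A ∧
      ∃ y ∈ Λ, dist p y = ρ := by
  have hD : (ball 0 2 ∩ j ⁻¹' (WsLoc f ε p ∩ A)).Finite :=
    Finite.of_injOn (f := j) (fun _ hb => hb.2) (h.injOn.mono inter_subset_left) hA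
  obtain ⟨w, hw, hwD⟩ := exists_norm_eq_one_forall_smul_notMem hE hD
    fun h₀ => hpA (h.map_zero ▸ h₀.2.2)
  obtain ⟨t, ht, htρ, hray⟩ := h.exists_ray hρ hρδ hw
  have hball {s : ℝ} (hs : s ∈ Icc (0 : ℝ) t) : s • w ∈ ball 0 2 := by
    rw [mem_ball_zero_iff, norm_smul, hw, mul_one, Real.norm_of_nonneg hs.1]
    exact (hs.2.trans ht.2).trans_lt one_lt_two
  refine ⟨(fun s : ℝ => j (s • w)) '' Icc 0 t, ?_, ?_, hray.image_subset, ?_, _,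
    mem_image_of_mem _ (right_mem_Icc.2 ht.1.le), htρ⟩
  · exact isPreconnected_Icc.image _ (h.continuousOn.comp (by fun_prop) fun s hs => hball hs)
  · exact ⟨0, left_mem_Icc.2 ht.1.le, by simpa only [zero_smul] using h.map_zero⟩
  · refine disjoint_left.2 (forall_mem_image.2 fun s hs hsA => ?_)
    exact hwD s hs.1 ⟨hball hs, (hray hs).2, hsA⟩

theorem IsExpansive.exists_forall_le_dist [CompactSpace M] {f : M ≃ₜ M} {ε : ℝ} (hε : 0 ≤ ε)
    (hexp : IsExpansive f (2 * ε)) (v : M) {ρ : ℝ} (hρ : 0 < ρ) :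
    ∃ c > 0, ∀ p ∈ ball v c, ∀ q ∈ ball v c, ∀ z ∈ WsLoc f ε p, ∀ y ∈ WsLoc f⁻¹ ε q,
      dist q y = ρ → c ≤ dist y z := by
  let K : Set ((M × M) × (M × M)) := {x | x.1.2 ∈ WsLoc f ε x.1.1} ∩
    {x | x.2.2 ∈ WsLoc f⁻¹ ε x.2.1} ∩ {x | dist x.2.1 x.2.2 = ρ}
  have hK : IsClosed K := (((isClosed_setOf_mem_WsLoc f ε).preimage continuous_fst).inter
    ((isClosed_setOf_mem_WsLoc f⁻¹ ε).preimage continuous_snd)).inter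
      (isClosed_eq (by fun_prop) continuous_const)
  have hpos (x) (hx : x ∈ K) : 0 < dist x.1.1 v + dist x.2.1 v + dist x.2.2 x.1.2 := by
    obtain ⟨⟨p, z⟩, ⟨q, y⟩⟩ := x
    obtain ⟨⟨hz : z ∈ WsLoc f ε p, hy : y ∈ WsLoc f⁻¹ ε q⟩, hqy : dist q y = ρ⟩ := hx
    refine lt_of_le_of_ne (by positivity) fun h₀ => hρ.ne ?_
    rw [eq_comm, add_eq_zero_iff_of_nonneg (by positivity) dist_nonneg,
      add_eq_zero_iff_of_nonneg dist_nonneg dist_nonneg] at h₀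
    obtain ⟨⟨hp, hq⟩, hyz⟩ := h₀
    obtain rfl : p = q := (dist_eq_zero.1 hp).trans (dist_eq_zero.1 hq).symm
    obtain rfl : y = z := dist_eq_zero.1 hyz
    rw [← hqy, hexp.eq_of_mem_WsLoc (mem_WsLoc_self f hε p) hz (mem_WsLoc_self f⁻¹ hε p) hy,
      dist_self]
  obtain ⟨c, hc, hcK⟩ := hK.isCompact.exists_forall_le' (by fun_prop) hpos
  refine ⟨c / 3, by positivity, fun p hp q hq z hz y hy hqy => ?_⟩
  linarith [hcK ((p, z), (q, y)) ⟨⟨hz, hy⟩, hqy⟩, mem_ball.1 hp, mem_ball.1 hq]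

theorem mul_pos_of_mul_pos_of_mul_pos {a b c : ℝ} (hb : 0 < a * b) (hc : 0 < a * c) :
    0 < b * c := by
  rcases mul_pos_iff.1 hb with ⟨ha, hb⟩ | ⟨ha, hb⟩
  · exact mul_pos hb (pos_of_mul_pos_right hc ha.le)
  · exact mul_pos_of_neg_of_neg hb (neg_of_mul_pos_right hc ha.le)

theorem mul_pos_of_isPreconnected {X : Type*} [TopologicalSpace X] {ψ : X → ℝ} {C : Set X}
    (hC : IsPreconnected C) (hψ : ContinuousOn ψ C) (hψ₀ : ∀ x ∈ C, ψ x ≠ 0) {x y : X}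
    (hx : x ∈ C) (hy : y ∈ C) : 0 < ψ x * ψ y := by
  by_contra! hneg
  rcases mul_nonpos_iff.1 hneg with h | h
  · obtain ⟨z, hz, hz₀⟩ := hC.intermediate_value hy hx hψ h.symm
    exact hψ₀ z hz hz₀
  · obtain ⟨z, hz, hz₀⟩ := hC.intermediate_value hx hy hψ h
    exact hψ₀ z hz hz₀

theorem not_forall_mul_pos_of_isPreconnected {X : Type*} [TopologicalSpace X] {B : Set X}
    (hB : IsPreconnected B) {ψ φ : X → ℝ} (hψ : ContinuousOn ψ B) (hφ : ContinuousOn φ B)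
    {q q' y : X} (hq : q ∈ B) (hy : y ∈ B) (hyq : ψ y * ψ q < 0) (hyq' : φ y * φ q' < 0)
    (h : ∀ z ∈ B, ψ z = 0 → 0 < φ z * φ q') : ¬ ∀ z ∈ B, φ z = 0 → 0 < ψ z * ψ q := by
  intro h'
  have hne (z) (hz : z ∈ B) : max (ψ z * ψ q) (φ z * φ q') ≠ 0 := fun hmax => by
    rcases max_choice (ψ z * ψ q) (φ z * φ q') with hm | hm
    · have hψz := (mul_eq_zero.1 (hm.symm.trans hmax)).resolve_right (right_ne_zero_of_mul hyq.ne)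
      exact (h z hz hψz).not_ge ((le_max_right _ _).trans hmax.le)
    · have hφz := (mul_eq_zero.1 (hm.symm.trans hmax)).resolve_right (right_ne_zero_of_mul hyq'.ne)
      exact (h' z hz hφz).not_ge ((le_max_left _ _).trans hmax.le)
  have hpos := mul_pos_of_isPreconnected hB (ContinuousOn.sup (hψ.mul continuousOn_const)
    (hφ.mul continuousOn_const)) hne hq hy
  have hqq : 0 < max (ψ q * ψ q) (φ q * φ q') :=
    lt_max_of_lt_left (mul_self_pos.2 (right_ne_zero_of_mul hyq.ne))
  exact hpos.not_ge (mul_nonpos_of_nonneg_of_nonpos hqq.le (max_lt hyq hyq').le)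

namespace SeparatingSheet

variable {f : M ≃ₜ M} {ε : ℝ} {p : M} {B : Set M} (σ : SeparatingSheet f ε p B)

theorem height_mul_pos {C : Set M} (hC : IsPreconnected C) (hCB : C ⊆ B)
    (hCσ : Disjoint C σ.sheet) {x y : M} (hx : x ∈ C) (hy : y ∈ C) :
    0 < σ.height x * σ.height y :=
  mul_pos_of_isPreconnected hC (σ.continuousOn.mono hCB)
    (fun _ hz h₀ => disjoint_left.1 hCσ hz ((σ.height_eq_zero_iff (hCB hz)).1 h₀)) hx hy

theorem height_mul_neg {C : Set M} (hC : IsPreconnected C) (hCB : C ⊆ B)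
    (hCσ : Disjoint C σ.sheet) {x y z : M} (hx : x ∈ C) (hy : y ∈ C)
    (hz : σ.height x * σ.height z < 0) : σ.height y * σ.height z < 0 := by
  rw [← neg_pos, ← mul_neg] at hz ⊢
  exact mul_pos_of_mul_pos_of_mul_pos (σ.height_mul_pos hC hCB hCσ hx hy) hz

end SeparatingSheet

namespace PlaqueChart

variable {Es Eu : Type*} [NormedAddCommGroup Es] [NormedAddCommGroup Eu] {f : M ≃ₜ M}
  {ε δ : ℝ} {p : M} (H : PlaqueChart Es Eu f ε δ p) [NormedSpace ℝ Eu]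

theorem exists_height_mul_pos (hε : 0 ≤ ε) (hexp : IsExpansive f (2 * ε)) {B : Set M}
    (σ : SeparatingSheet f ε p B) {e : Eu ≃L[ℝ] ℝ}
    (hσ : ∀ᶠ v in 𝓝 0, v ≠ 0 → 0 < σ.height (H.unstable v) * e v) {ρ : ℝ} (hρ : 0 < ρ)
    (hρδ : ρ ≤ δ) (hB : closedBall p ρ ⊆ B) {w : Eu} (hw : ‖w‖ = 1) :
    ∃ y ∈ WsLoc f⁻¹ ε p, dist p y = ρ ∧ 0 < σ.height y * e w := by
  obtain ⟨t, ht, htρ, hray⟩ := H.isUnstablePlaque.exists_ray hρ hρδ hw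
  have hball {s : ℝ} (hs : s ∈ Ioc 0 t) : s • w ∈ ball 0 2 := by
    rw [mem_ball_zero_iff, norm_smul, hw, mul_one, Real.norm_of_nonneg hs.1.le]
    exact (hs.2.trans ht.2).trans_lt one_lt_two
  have hw₀ : w ≠ 0 := norm_ne_zero_iff.1 (hw ▸ one_ne_zero)
  have hC : IsPreconnected ((fun s : ℝ => H.unstable (s • w)) '' Ioc 0 t) :=
    isPreconnected_Ioc.image _ (H.isUnstablePlaque.continuousOn.comp (by fun_prop)
      fun s hs => hball hs)
  have hCB : (fun s : ℝ => H.unstable (s • w)) '' Ioc 0 t ⊆ B :=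
    image_subset_iff.2 fun s hs => hB (hray (Ioc_subset_Icc_self hs)).1
  have hCσ : Disjoint ((fun s : ℝ => H.unstable (s • w)) '' Ioc 0 t) σ.sheet := by
    refine disjoint_left.2 (forall_mem_image.2 fun s hs hsσ => smul_ne_zero hs.1.ne' hw₀ ?_)
    refine H.isUnstablePlaque.injOn (hball hs) (mem_ball_self two_pos) ?_
    rw [H.isUnstablePlaque.map_zero]
    exact hexp.eq_of_mem_WsLoc (σ.sheet_subset hsσ).2 (mem_WsLoc_self f hε p)
      (hray (Ioc_subset_Icc_self hs)).2 (mem_WsLoc_self f⁻¹ hε p)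
  have htendsto : Filter.Tendsto (fun s : ℝ => s • w) (𝓝[>] 0) (𝓝 0) :=
    ((continuous_id.smul continuous_const).tendsto' 0 0 (zero_smul ℝ w)).mono_left
      nhdsWithin_le_nhds
  obtain ⟨s, hsσ, hs⟩ := ((htendsto.eventually hσ).and (Ioc_mem_nhdsGT ht.1)).exists
  refine ⟨_, (hray (right_mem_Icc.2 ht.1.le)).2, htρ, mul_pos_of_mul_pos_of_mul_pos
    (σ.height_mul_pos hC hCB hCσ (mem_image_of_mem _ hs)
      (mem_image_of_mem _ (right_mem_Ioc.2 ht.1))) ?_⟩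
  have hpos := hsσ (smul_ne_zero hs.1.ne' hw₀)
  rwa [map_smul, smul_eq_mul, mul_left_comm, mul_pos_iff_of_pos_left hs.1] at hpos

variable [NormedSpace ℝ Es] [ProperSpace Es] {X : Type*} [MetricSpace X] [SimplyConnectedSpace X]
  [LocallyPathConnectedSpace X] {γ : X → M}

theorem exists_separatingSheet_height_mul_neg (H : PlaqueChart Es Eu f ε δ p)
    (hγ : IsOpenEmbeddingOn γ univ) (e : Eu ≃L[ℝ] ℝ) (hδ : ∀ y ∈ range γ, dist p y ≤ δ)
    (hε : 0 ≤ ε) (hexp : IsExpansive f (2 * ε)) {ρ : ℝ} (hρ : 0 < ρ) (hρδ : ρ ≤ δ)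
    (hpγ : closedBall p ρ ⊆ range γ) {q : M} (hq : q ∈ range γ) (hqp : q ∉ WsLoc f ε p) :
    ∃ σ : SeparatingSheet f ε p (range γ), ∃ y ∈ WsLoc f⁻¹ ε p, dist p y = ρ ∧
      σ.height y * σ.height q < 0 := by
  obtain ⟨σ, hσ⟩ := H.exists_separatingSheet hγ e (hpγ (mem_closedBall_self hρ.le)) hδ
  have hσq : σ.height q ≠ 0 := fun h => hqp (σ.sheet_subset ((σ.height_eq_zero_iff hq).1 h)).2
  obtain ⟨w, hw, hew⟩ : ∃ w : Eu, ‖w‖ = 1 ∧ 0 < e w := by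
    have hne : e.symm 1 ≠ 0 := fun h => one_ne_zero (e.symm.map_eq_zero_iff.1 h)
    refine ⟨‖e.symm 1‖⁻¹ • e.symm 1, norm_smul_inv_norm hne, ?_⟩
    rw [map_smul, e.apply_symm_apply, smul_eq_mul, mul_one]
    exact inv_pos.2 (norm_pos_iff.2 hne)
  rcases hσq.lt_or_gt with hneg | hpos
  · obtain ⟨y, hy, hρy, hpos⟩ := H.exists_height_mul_pos hε hexp σ hσ hρ hρδ hpγ hw
    exact ⟨σ, y, hy, hρy, mul_neg_of_pos_of_neg (pos_of_mul_pos_left hpos hew.le) hneg⟩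
  · obtain ⟨y, hy, hρy, hneg⟩ := H.exists_height_mul_pos hε hexp σ hσ hρ hρδ hpγ
      ((norm_neg w).trans hw)
    rw [map_neg, mul_neg, ← neg_mul] at hneg
    exact ⟨σ, y, hy, hρy,
      mul_neg_of_neg_of_pos (neg_pos.1 (pos_of_mul_pos_left hneg hew.le)) hpos⟩

end PlaqueChart

/-- The data attached to a pair of nearby points `p` and `q` in the counting argument: a sheet
separating `p` from `q`, the end `opposite` of the unstable branch of `p` on the side away from `q`,
and a connected piece `ray` of the unstable set of `q` going from `q` to `tip`. -/
structure Link (f : M ≃ₜ M) (ε ρ : ℝ) (B : Set M) (p q : M) where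
  separator : SeparatingSheet f ε p B
  opposite : M
  opposite_mem : opposite ∈ WsLoc f⁻¹ ε p
  dist_opposite : dist p opposite = ρ
  height_mul_neg : separator.height opposite * separator.height q < 0
  ray : Set M
  isPreconnected_ray : IsPreconnected ray
  mem_ray : q ∈ ray
  tip : M
  tip_mem_ray : tip ∈ ray
  tip_mem : tip ∈ WsLoc f⁻¹ ε q
  dist_tip : dist q tip = ρ

theorem PlaqueChart.exists_link {Es Eu E X : Type*} [NormedAddCommGroup Es] [NormedSpace ℝ Es]
    [ProperSpace Es] [NormedAddCommGroup Eu] [NormedSpace ℝ Eu] [NormedAddCommGroup E]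
    [NormedSpace ℝ E] [MetricSpace X] [SimplyConnectedSpace X] [LocallyPathConnectedSpace X]
    {f : M ≃ₜ M} {ε δ ρ : ℝ} {p q : M} (H : PlaqueChart Es Eu f ε δ p) {γ : X → M}
    (hγ : IsOpenEmbeddingOn γ univ) (e : Eu ≃L[ℝ] ℝ) (hδ : ∀ y ∈ range γ, dist p y ≤ δ)
    (hε : 0 ≤ ε) (hexp : IsExpansive f (2 * ε)) (hρ : 0 < ρ) (hρδ : ρ ≤ δ)
    (hpγ : closedBall p ρ ⊆ range γ) (hqγ : closedBall q ρ ⊆ range γ)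
    (hE : 1 < Module.rank ℝ E) {j : E → M} (hj : IsStablePlaque f⁻¹ ε δ j q) {A : Set M}
    (hA : (WsLoc f⁻¹ ε q ∩ A).Finite) (hqA : q ∉ A) (hpA : WsLoc f ε p ⊆ A) :
    ∃ L : Link f ε ρ (range γ) p q, L.ray ⊆ range γ \ A := by
  obtain ⟨σ, y, hy, hρy, hneg⟩ := H.exists_separatingSheet_height_mul_neg hγ e hδ hε hexp hρ hρδ hpγ
    (hqγ (mem_closedBall_self hρ.le)) fun h => hqA (hpA h)
  obtain ⟨Λ, hΛ, hqΛ, hΛq, hΛA, z, hzΛ, hρz⟩ :=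
    hj.exists_isPreconnected_disjoint hE hA hqA hρ hρδ
  exact ⟨⟨σ, y, hy, hρy, hneg, Λ, hΛ, hqΛ, z, hzΛ, (hΛq hzΛ).2, hρz⟩,
    subset_sdiff.2 ⟨(hΛq.trans inter_subset_left).trans hqγ, hΛA⟩⟩

namespace Link

variable {f : M ≃ₜ M} {ε ρ : ℝ} {B : Set M} {p q p' q' : M}
  (L : Link f ε ρ B p q) (L' : Link f ε ρ B p' q')

theorem separator_height_mul_pos (hpp' : Disjoint (WsLoc f ε p) (WsLoc f ε p'))
    (hray : L.ray ⊆ B \ WsLoc f ε p) (hray' : L'.ray ⊆ B \ WsLoc f ε p) {C' W : Set M}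
    (hC' : IsPreconnected C') (hC'B : C' ⊆ B \ WsLoc f ε p) (hpC' : p' ∈ C') (hqC' : q' ∈ C')
    (hW : IsPreconnected W) (hWB : W ⊆ B \ WsLoc f ε p) (htip : L.tip ∈ W) (htip' : L'.tip ∈ W)
    {z : M} (hz : z ∈ L'.separator.sheet) :
    0 < L.separator.height z * L.separator.height q := by
  have hsheet : L'.separator.sheet ⊆ B \ WsLoc f ε p := fun y hy =>
    ⟨(L'.separator.sheet_subset hy).1, disjoint_right.1 hpp' (L'.separator.sheet_subset hy).2⟩
  let K := L'.separator.sheet ∪ (C' ∪ (L'.ray ∪ (W ∪ L.ray)))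
  have hK : IsPreconnected K :=
    .union p' L'.separator.mem_sheet (.inl hpC') L'.separator.isPreconnected <|
    .union q' hqC' (.inl L'.mem_ray) hC' <|
    .union L'.tip L'.tip_mem_ray (.inl htip') L'.isPreconnected_ray <|
    .union L.tip htip L.tip_mem_ray hW L.isPreconnected_ray
  have hKB : K ⊆ B \ WsLoc f ε p :=
    union_subset hsheet (union_subset hC'B (union_subset hray' (union_subset hWB hray)))
  refine L.separator.height_mul_pos hK (hKB.trans sdiff_subset) ?_ (.inl hz)
    (.inr (.inr (.inr (.inr L.mem_ray))))
  exact (disjoint_sdiff_left.mono_left hKB).mono_right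
    (L.separator.sheet_subset.trans inter_subset_right)

theorem opposite_notMem (hB : IsPreconnected B) (hqB : q ∈ B) (hyB : L.opposite ∈ B)
    (hpp' : Disjoint (WsLoc f ε p) (WsLoc f ε p'))
    (hray : L.ray ⊆ B \ (WsLoc f ε p ∪ WsLoc f ε p'))
    (hray' : L'.ray ⊆ B \ (WsLoc f ε p ∪ WsLoc f ε p')) {C C' W W' : Set M}
    (hC : IsPreconnected C) (hCB : C ⊆ B \ WsLoc f ε p') (hpC : p ∈ C) (hqC : q ∈ C)
    (hC' : IsPreconnected C') (hC'B : C' ⊆ B \ WsLoc f ε p) (hpC' : p' ∈ C') (hqC' : q' ∈ C')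
    (hW : IsPreconnected W) (hWB : W ⊆ B \ (WsLoc f ε p ∪ WsLoc f ε p'))
    (htip : L.tip ∈ W) (htip' : L'.tip ∈ W) (hW' : IsPreconnected W')
    (hW'B : W' ⊆ B \ WsLoc f ε p') (hopp : L.opposite ∈ W') : L'.opposite ∉ W' := by
  intro hopp'
  have hleft : B \ (WsLoc f ε p ∪ WsLoc f ε p') ⊆ B \ WsLoc f ε p :=
    sdiff_subset_sdiff_right subset_union_left
  have hright : B \ (WsLoc f ε p ∪ WsLoc f ε p') ⊆ B \ WsLoc f ε p' :=
    sdiff_subset_sdiff_right subset_union_right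
  have hneg := L'.separator.height_mul_neg hW' (hW'B.trans sdiff_subset)
    ((disjoint_sdiff_left.mono_left hW'B).mono_right
      (L'.separator.sheet_subset.trans inter_subset_right)) hopp' hopp L'.height_mul_neg
  refine not_forall_mul_pos_of_isPreconnected hB L.separator.continuousOn
    L'.separator.continuousOn hqB hyB L.height_mul_neg hneg (fun z hz h₀ => ?_) fun z hz h₀ => ?_
  · exact L'.separator_height_mul_pos L hpp'.symm (hray'.trans hright) (hray.trans hright) hC hCB
      hpC hqC hW (hWB.trans hright) htip' htip ((L.separator.height_eq_zero_iff hz).1 h₀)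
  · exact L.separator_height_mul_pos L' hpp' (hray.trans hleft) (hray'.trans hleft) hC' hC'B
      hpC' hqC' hW (hWB.trans hleft) htip htip' ((L'.separator.height_eq_zero_iff hz).1 h₀)

end Link

theorem Link.card_le {ι κ : Type*} [Fintype ι] [Fintype κ] {f : M ≃ₜ M} {ε ρ : ℝ} {B : Set M}
    (hB : IsPreconnected B) {p q : ι → M} (L : ∀ i, Link f ε ρ B (p i) (q i))
    (hp : Pairwise fun i j => Disjoint (WsLoc f ε (p i)) (WsLoc f ε (p j)))
    (hray : ∀ i, (L i).ray ⊆ B \ ⋃ j, WsLoc f ε (p j)) {C : ι → Set M}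
    (hC : ∀ i, IsPreconnected (C i)) (hCB : ∀ i, C i ⊆ B) (hpC : ∀ i, p i ∈ C i)
    (hqC : ∀ i, q i ∈ C i) (hCp : Pairwise fun i j => Disjoint (C i) (WsLoc f ε (p j)))
    {W : κ → Set M} (hW : ∀ k, IsPreconnected (W k))
    (htip : ∀ i, ∃ k, (L i).tip ∈ W k ∧ W k ⊆ B \ ⋃ j, WsLoc f ε (p j))
    (hopp : ∀ i, ∃ k, (L i).opposite ∈ W k ∧ W k ⊆ B \ ⋃ j, WsLoc f ε (p j)) :
    Fintype.card ι ≤ Fintype.card κ * Fintype.card κ := by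
  choose a htipa haW using htip
  choose b hoppb hbW using hopp
  by_contra! hlt
  obtain ⟨i, j, hij, heq⟩ := Fintype.exists_ne_map_eq_of_card_lt (fun i => (a i, b i))
    ((Fintype.card_prod κ κ).trans_lt hlt)
  obtain ⟨ha, hb⟩ := Prod.mk.inj heq
  have hpair : B \ ⋃ k, WsLoc f ε (p k) ⊆ B \ (WsLoc f ε (p i) ∪ WsLoc f ε (p j)) :=
    sdiff_subset_sdiff_right (union_subset (subset_iUnion (WsLoc f ε ∘ p) i)
      (subset_iUnion (WsLoc f ε ∘ p) j))
  exact (L i).opposite_notMem (L j) hB (hCB i (hqC i)) (hbW i (hoppb i)).1 (hp hij)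
    ((hray i).trans hpair) ((hray j).trans hpair) (hC i) (subset_sdiff.2 ⟨hCB i, hCp hij⟩)
    (hpC i) (hqC i) (hC j) (subset_sdiff.2 ⟨hCB j, hCp hij.symm⟩) (hpC j) (hqC j) (hW (a i))
    ((haW i).trans hpair) (htipa i) (ha ▸ htipa j) (hW (b i))
    ((hbW i).trans (hpair.trans (sdiff_subset_sdiff_right subset_union_right))) (hoppb i)
    (hb ▸ hoppb j)

theorem IsExpansive.disjoint_WsLoc {f : M ≃ₜ M} {ε : ℝ} (hexp : IsExpansive f (2 * ε)) {x y : M}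
    (hx : x ∈ Function.periodicPts f) (hy : y ∈ Function.periodicPts f) (hxy : x ≠ y) :
    Disjoint (WsLoc f ε x) (WsLoc f ε y) := by
  refine disjoint_left.2 fun z hzx hzy => hxy (hexp.eq_of_mem_periodicPts hx hy ?_)
  rw [mem_WsLoc_iff] at hzx hzy ⊢
  intro k
  linarith [dist_triangle_right ((f ^ k) x) ((f ^ k) y) ((f ^ k) z), hzx k, hzy k]

theorem IsExpansive.finite_WsLoc_inter_iUnion {ι : Type*} [Finite ι] {f : M ≃ₜ M} {ε : ℝ}
    (hexp : IsExpansive f (2 * ε)) (q : M) (p : ι → M) :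
    (WsLoc f⁻¹ ε q ∩ ⋃ i, WsLoc f ε (p i)).Finite := by
  rw [inter_iUnion]
  exact finite_iUnion fun i => Subsingleton.finite fun x hx y hy =>
    hexp.eq_of_mem_WsLoc hx.2 hy.2 hx.1 hy.1

theorem exists_isPreconnected_forall_mk_notMem {X ι : Type*} [TopologicalSpace X]
    [LocallyConnectedSpace X] [Finite ι] {S : Set (X × X)} (hS : IsClosed S) {T : ι → X}
    (hT : Pairwise fun i j => (T i, T j) ∉ S) {U : Set X} (hU : ∀ i, U ∈ 𝓝 (T i)) :
    ∃ C : ι → Set X, (∀ i, IsOpen (C i) ∧ IsPreconnected (C i) ∧ T i ∈ C i ∧ C i ⊆ U) ∧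
      Pairwise fun i j => ∀ x ∈ C i, ∀ y ∈ C j, (x, y) ∉ S := by
  have hprod (i j) (hij : i ≠ j) : ∃ A ∈ 𝓝 (T i), ∃ A' ∈ 𝓝 (T j), A ×ˢ A' ⊆ Sᶜ :=
    mem_nhds_prod_iff.1 (hS.isOpen_compl.mem_nhds (hT hij))
  choose A hA A' hA' hAS using hprod
  have hnhds (i) : U ∩ ⋂ j, ⋂ hij : i ≠ j, A i j hij ∩ A' j i hij.symm ∈ 𝓝 (T i) :=
    Filter.inter_mem (hU i) (Filter.iInter_mem.2 fun j => Filter.iInter_mem.2 fun hij =>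
      Filter.inter_mem (hA i j hij) (hA' j i hij.symm))
  choose C hCsub hCo hTC hC using fun i =>
    locallyConnectedSpace_iff_subsets_isOpen_isConnected.1 ‹_› (T i) _ (hnhds i)
  refine ⟨C, fun i => ⟨hCo i, (hC i).isPreconnected, hTC i, (hCsub i).trans inter_subset_left⟩,
    fun i j hij x hx y hy => hAS i j hij ⟨?_, ?_⟩⟩
  · exact (mem_iInter₂.1 (hCsub i hx).2 j hij).1
  · exact (mem_iInter₂.1 (hCsub j hy).2 i hij.symm).2

theorem exists_finite_isPreconnected_cover [LocallyConnectedSpace M] {K B : Set M}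
    (hK : IsCompact K) (hB : IsOpen B) (hKB : K ⊆ B) {c : ℝ} (hc : 0 < c) :
    ∃ (t : Finset M) (W : t → Set M), K ⊆ ⋃ k, W k ∧ ∀ k, IsPreconnected (W k) ∧ W k ⊆ B ∧
      ∀ x ∈ W k, ∀ y ∈ W k, dist x y < c := by
  choose! W hWB hWo hxW hW using fun x (hx : x ∈ K) =>
    locallyConnectedSpace_iff_subsets_isOpen_isConnected.1 ‹_› x (B ∩ ball x (c / 2))
      (Filter.inter_mem (hB.mem_nhds (hKB hx)) (ball_mem_nhds x (half_pos hc)))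
  obtain ⟨t, htK, hcov⟩ := hK.elim_nhds_subcover W fun x hx => (hWo x hx).mem_nhds (hxW x hx)
  refine ⟨t, fun k => W k, hcov.trans_eq (biUnion_eq_iUnion _ _), fun k =>
    ⟨(hW k (htK k k.2)).isPreconnected, fun x hx => (hWB k (htK k k.2) hx).1, fun x hx y hy => ?_⟩⟩
  linarith [dist_triangle_right x y k, mem_ball.1 (hWB k (htK k k.2) hx).2,
    mem_ball.1 (hWB k (htK k k.2) hy).2]

section Counting

variable {Es Eu X : Type*} [NormedAddCommGroup Es] [NormedSpace ℝ Es]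
  [ProperSpace Es] [NormedAddCommGroup Eu] [NormedSpace ℝ Eu] [MetricSpace X]
  [SimplyConnectedSpace X] [LocallyPathConnectedSpace X] {f : M ≃ₜ M} {ε δ : ℝ} {P R : Set M}
  {γ : X → M} {v : M}

theorem exists_links (hε : 0 ≤ ε) (hexp : IsExpansive f (2 * ε))
    (hP : P ⊆ Function.periodicPts f) (hR : R ⊆ Function.periodicPts f) (hPR : Disjoint P R)
    (hchart : ∀ p ∈ P, Nonempty (PlaqueChart Es Eu f ε δ p)) (e : Eu ≃L[ℝ] ℝ)
    (hplaque : ∀ q ∈ R, ∃ k > 1, ∃ j : (Fin k → ℝ) → M, IsStablePlaque f⁻¹ ε δ j q)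
    (hγ : IsOpenEmbeddingOn γ univ) (hγδ : ∀ x ∈ range γ, ∀ y ∈ range γ, dist x y ≤ δ) {ρ : ℝ}
    (hρ : 0 < ρ) (hρδ : ρ ≤ δ) {ι : Type*} [Finite ι] {p q : ι → M} (hp : ∀ i, p i ∈ P)
    (hq : ∀ i, q i ∈ R) (hpγ : ∀ i, closedBall (p i) ρ ⊆ range γ)
    (hqγ : ∀ i, closedBall (q i) ρ ⊆ range γ) :
    ∃ L : ∀ i, Link f ε ρ (range γ) (p i) (q i),
      ∀ i, (L i).ray ⊆ range γ \ ⋃ j, WsLoc f ε (p j) := by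
  suffices ∀ i, ∃ L : Link f ε ρ (range γ) (p i) (q i),
      L.ray ⊆ range γ \ ⋃ j, WsLoc f ε (p j) from ⟨_, fun i => (this i).choose_spec⟩
  intro i
  obtain ⟨H⟩ := hchart _ (hp i)
  obtain ⟨k, hk, j, hj⟩ := hplaque _ (hq i)
  have hrank : 1 < Module.rank ℝ (Fin k → ℝ) := by
    rw [rank_fin_fun]
    exact_mod_cast hk
  have hqp : q i ∉ ⋃ l, WsLoc f ε (p l) := by
    rw [mem_iUnion, not_exists]
    intro l
    refine disjoint_right.1 (hexp.disjoint_WsLoc (hP (hp l)) (hR (hq i)) ?_)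
      (mem_WsLoc_self f hε (q i))
    exact hPR.ne_of_mem (hp l) (hq i)
  exact H.exists_link hγ e (hγδ _ (hpγ i (mem_closedBall_self hρ.le))) hε hexp hρ hρδ (hpγ i)
    (hqγ i) hrank hj (hexp.finite_WsLoc_inter_iUnion _ _) hqp (subset_iUnion (WsLoc f ε ∘ p) i)

variable [CompactSpace M] [LocallyConnectedSpace M]

theorem exists_mem_nhds_card_le (hε : 0 ≤ ε) (hexp : IsExpansive f (2 * ε)) (hδ : 0 < δ)
    (hP : P ⊆ Function.periodicPts f) (hR : R ⊆ Function.periodicPts f) (hPR : Disjoint P R)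
    (hchart : ∀ p ∈ P, Nonempty (PlaqueChart Es Eu f ε δ p)) (e : Eu ≃L[ℝ] ℝ)
    (hplaque : ∀ q ∈ R, ∃ k > 1, ∃ j : (Fin k → ℝ) → M, IsStablePlaque f⁻¹ ε δ j q)
    (hγ : IsOpenEmbeddingOn γ univ) (hγδ : ∀ x ∈ range γ, ∀ y ∈ range γ, dist x y ≤ δ)
    (hv : v ∈ range γ) :
    ∃ U ∈ 𝓝 v, ∃ N : ℕ, ∀ (m : ℕ) (p q : Fin m → M) (C : Fin m → Set M),
      (∀ i, p i ∈ P ∩ C i) → (∀ i, q i ∈ R ∩ C i) → (∀ i, IsPreconnected (C i) ∧ C i ⊆ U) →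
      (Pairwise fun i j => Disjoint (C i) (WsLoc f ε (p j))) → m ≤ N := by
  have hB : IsOpen (range γ) := image_univ ▸ hγ.isOpen_image Subset.rfl isOpen_univ
  obtain ⟨r, hr, hrB⟩ := nhds_basis_closedBall.mem_iff.1 (hB.mem_nhds hv)
  obtain ⟨ρ, hρ, hρr⟩ := exists_between (lt_min (half_pos hr) hδ)
  obtain ⟨c, hc, hgap⟩ := hexp.exists_forall_le_dist hε v hρ
  obtain ⟨t, W, hKW, hW⟩ := exists_finite_isPreconnected_cover
    (isClosed_closedBall (x := v) (ε := r)).isCompact hB hrB hc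
  have hball {x y : M} (hx : x ∈ ball v (min c (r / 2))) (hxy : dist x y ≤ ρ) :
      y ∈ closedBall v r := by
    rw [mem_closedBall]
    linarith [dist_triangle_left y v x, mem_ball.1 hx, min_le_right c (r / 2),
      min_le_left (r / 2) δ]
  refine ⟨ball v (min c (r / 2)), ball_mem_nhds v (lt_min hc (half_pos hr)),
    Fintype.card t * Fintype.card t, fun m p q C hp hq hC hCp => ?_⟩
  have hsub {x : M} {i : Fin m} (hx : x ∈ C i) := (hC i).2 hx
  obtain ⟨L, hL⟩ := exists_links hε hexp hP hR hPR hchart e hplaque hγ hγδ hρ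
    (hρr.le.trans (min_le_right _ _)) (fun i => (hp i).1) (fun i => (hq i).1)
    (fun i x hx => hrB (hball (hsub (hp i).2) (mem_closedBall'.1 hx)))
    (fun i x hx => hrB (hball (hsub (hq i).2) (mem_closedBall'.1 hx)))
  have hcover {x y : M} {i : Fin m} (hx : x ∈ C i) (hy : y ∈ WsLoc f⁻¹ ε x) (hxy : dist x y = ρ) :
      ∃ k, y ∈ W k ∧ W k ⊆ range γ \ ⋃ j, WsLoc f ε (p j) := by
    obtain ⟨k, hk⟩ := mem_iUnion.1 (hKW (hball (hsub hx) hxy.le))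
    refine ⟨k, hk, subset_sdiff.2 ⟨(hW k).2.1, disjoint_iUnion_right.2 fun j => ?_⟩⟩
    have hc' {z : M} {i : Fin m} (hz : z ∈ C i) : z ∈ ball v c :=
      ball_subset_ball (min_le_left _ _) (hsub hz)
    exact disjoint_left.2 fun z hz hzj => ((hW k).2.2 y hk z hz).not_ge
      (hgap _ (hc' (hp j).2) x (hc' hx) z hzj y hy hxy)
  have hpp : Pairwise fun i j => Disjoint (WsLoc f ε (p i)) (WsLoc f ε (p j)) := fun i j hij =>
    hexp.disjoint_WsLoc (hP (hp i).1) (hP (hp j).1) fun h =>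
      disjoint_left.1 (hCp hij) (hp i).2 (h ▸ mem_WsLoc_self f hε (p i))
  exact Fintype.card_fin m ▸ Link.card_le
    (isPreconnected_range (continuousOn_univ.1 hγ.continuousOn)) L hpp hL (fun i => (hC i).1)
    (fun i x hx => hrB (hball (hsub hx) ((dist_self x).trans_le hρ.le))) (fun i => (hp i).2)
    (fun i => (hq i).2) hCp (fun k => (hW k).1)
    (fun i => hcover (hq i).2 (L i).tip_mem (L i).dist_tip)
    fun i => hcover (hp i).2 (L i).opposite_mem (L i).dist_opposite

theorem exists_mem_nhds_card_le_of_pairwise_notMem_WsLoc (hε : 0 ≤ ε)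
    (hexp : IsExpansive f (2 * ε)) (hδ : 0 < δ) (hP : P ⊆ Function.periodicPts f)
    (hR : R ⊆ Function.periodicPts f) (hPR : Disjoint P R)
    (hchart : ∀ p ∈ P, Nonempty (PlaqueChart Es Eu f ε δ p)) (e : Eu ≃L[ℝ] ℝ)
    (hplaque : ∀ q ∈ R, ∃ k > 1, ∃ j : (Fin k → ℝ) → M, IsStablePlaque f⁻¹ ε δ j q)
    (hγ : IsOpenEmbeddingOn γ univ) (hγδ : ∀ x ∈ range γ, ∀ y ∈ range γ, dist x y ≤ δ)
    (hv : v ∈ range γ) :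
    ∃ U ∈ 𝓝 v, ∃ N : ℕ, ∀ F : Finset M, (F : Set M) ⊆ closure P ∩ closure R ∩ U →
      (F : Set M).Pairwise (fun x y => y ∉ WsLoc f ε x) → F.card ≤ N := by
  obtain ⟨U, hU, N, hN⟩ := exists_mem_nhds_card_le hε hexp hδ hP hR hPR hchart e hplaque hγ hγδ hv
  refine ⟨interior U, interior_mem_nhds.2 hU, N, fun F hF hsep => ?_⟩
  let T (i : Fin F.card) : F := F.equivFin.symm i
  have hT (i) : (T i : M) ∈ closure P ∩ closure R ∩ interior U := hF (T i).2
  obtain ⟨C, hC, hCsep⟩ := exists_isPreconnected_forall_mk_notMem (isClosed_setOf_mem_WsLoc f ε)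
    (fun i j hij => hsep (T i).2 (T j).2 (Subtype.coe_ne_coe.2 (F.equivFin.symm.injective.ne hij)))
    fun i => isOpen_interior.mem_nhds (hT i).2
  choose hCo hCpre hTC hCU using hC
  choose p hpC hp using fun i => mem_closure_iff.1 (hT i).1.1 _ (hCo i) (hTC i)
  choose q hqC hq using fun i => mem_closure_iff.1 (hT i).1.2 _ (hCo i) (hTC i)
  exact hN F.card p q C (fun i => ⟨hp i, hpC i⟩) (fun i => ⟨hq i, hqC i⟩)
    (fun i => ⟨hCpre i, (hCU i).trans interior_subset⟩)
    fun i j hij => disjoint_left.2 fun x hx hxj => hCsep hij.symm _ (hpC j) x hx hxj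

end Counting

/-! ### Finiteness of the common frontier -/

theorem exists_isOpenEmbeddingOn_univ {E X : Type*} [NormedAddCommGroup E] [NormedSpace ℝ E]
    [TopologicalSpace X] [ChartedSpace E X] {x : X} {N : Set X} (hN : N ∈ 𝓝 x) :
    ∃ γ : E → X, IsOpenEmbeddingOn γ univ ∧ γ 0 = x ∧ range γ ⊆ N := by
  let φ := chartAt E x
  have hx : x ∈ φ.source := mem_chart_source E x
  obtain ⟨r, hr, hrN⟩ := Metric.mem_nhds_iff.1 (Filter.inter_mem
    (φ.open_target.mem_nhds (φ.map_source hx))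
    (φ.continuousAt_symm (φ.map_source hx) (by rwa [φ.left_inv hx])))
  let b := OpenPartialHomeomorph.univBall (φ x) r
  have hb (y : E) : b y ∈ ball (φ x) r := by
    rw [← OpenPartialHomeomorph.univBall_target (φ x) hr]
    exact b.map_source (by simp [b])
  let e := b.trans φ.symm
  have he : e.source = univ := by
    refine eq_univ_of_forall fun y => ⟨by simp [b], (hrN (hb y)).1⟩
  refine ⟨e, he ▸ ⟨e.open_source, e.continuousOn, e.injOn, fun hO hO' =>
    e.isOpen_image_of_subset_source hO' hO⟩, ?_, ?_⟩
  · exact (congrArg φ.symm (OpenPartialHomeomorph.univBall_apply_zero _ _)).trans (φ.left_inv hx)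
  · exact range_subset_iff.2 fun y => (hrN (hb y)).2

theorem nontrivial_of_chartedSpace (E X : Type*) [NormedAddCommGroup E] [NormedSpace ℝ E]
    [Nontrivial E] [TopologicalSpace X] [ChartedSpace E X] [Nonempty X] : Nontrivial X := by
  obtain ⟨γ, hγ, -⟩ := exists_isOpenEmbeddingOn_univ (E := E)
    (Filter.univ_mem (f := 𝓝 (Classical.arbitrary X)))
  exact (injOn_univ.1 hγ.injOn).nontrivial

theorem exists_isPreconnected_sdiff_singleton {E X : Type*} [NormedAddCommGroup E]
    [NormedSpace ℝ E] (hE : 1 < Module.rank ℝ E) [TopologicalSpace X] [ChartedSpace E X] {x : X}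
    {N : Set X} (hN : N ∈ 𝓝 x) : ∃ C ∈ 𝓝 x, C ⊆ N ∧ IsPreconnected (C \ {x}) := by
  obtain ⟨γ, hγ, rfl, hγN⟩ := exists_isOpenEmbeddingOn_univ (E := E) hN
  refine ⟨range γ, ?_, hγN, ?_⟩
  · rw [← image_univ]
    exact (hγ.isOpen_image Subset.rfl isOpen_univ).mem_nhds (mem_image_of_mem _ trivial)
  · rw [← image_univ, ← image_singleton, ← image_sdiff (injOn_univ.1 hγ.injOn),
      ← compl_eq_univ_sdiff]
    exact (isConnected_compl_singleton_of_one_lt_rank hE 0).isPreconnected.image γ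
      (hγ.continuousOn.mono (subset_univ _))

theorem isPreconnected_compl_of_finite {X : Type*} [TopologicalSpace X] [T1Space X]
    [PreconnectedSpace X] [PerfectSpace X] {Z : Set X} (hZ : Z.Finite)
    (hX : ∀ x : X, ∀ N ∈ 𝓝 x, ∃ C ∈ 𝓝 x, C ⊆ N ∧ IsPreconnected (C \ {x})) :
    IsPreconnected Zᶜ := by
  intro U V hU hV hcov hUZ hVZ
  by_contra hUV
  have hUV' : Disjoint (Zᶜ ∩ U) (Zᶜ ∩ V) := by
    rwa [disjoint_iff_inter_eq_empty, ← inter_inter_distrib_left, ← not_nonempty_iff_eq_empty]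
  have hZo : IsOpen Zᶜ := hZ.isClosed.isOpen_compl
  have hclosure : univ ⊆ closure (Zᶜ ∩ U) ∪ closure (Zᶜ ∩ V) := by
    rw [← closure_union, ← inter_union_distrib_left, inter_eq_left.2 hcov, compl_eq_univ_sdiff,
      (dense_univ.sdiff_finite hZ).closure_eq]
  obtain ⟨z, -, hzU, hzV⟩ := isPreconnected_closed_iff.1 isPreconnected_univ _ _ isClosed_closure
    isClosed_closure hclosure (univ_inter _ ▸ hUZ.closure) (univ_inter _ ▸ hVZ.closure)
  obtain ⟨C, hC, hCZ, hCpre⟩ := hX z (Z \ {z})ᶜ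
    ((hZ.subset sdiff_subset).isClosed.isOpen_compl.mem_nhds fun h => h.2 rfl)
  have hz : z ∈ Z := by
    by_contra hz
    rcases hcov hz with hU' | hV'
    · exact disjoint_left.1 (hUV'.closure_right (hZo.inter hU)) ⟨hz, hU'⟩ hzV
    · exact disjoint_right.1 (hUV'.closure_left (hZo.inter hV)) ⟨hz, hV'⟩ hzU
  have hCZ' : C \ {z} ⊆ Zᶜ := fun y hy hyZ => hCZ hy.1 ⟨hyZ, hy.2⟩
  have hmeet {O : Set X} (hzO : z ∈ closure (Zᶜ ∩ O)) : (C \ {z} ∩ O).Nonempty := by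
    obtain ⟨y, hyC, hyZ, hyO⟩ := mem_closure_iff_nhds.1 hzO C hC
    exact ⟨y, ⟨hyC, fun hyz => hyZ (hyz ▸ hz)⟩, hyO⟩
  exact hUV ((hCpre U V hU hV (hCZ'.trans hcov) (hmeet hzU) (hmeet hzV)).mono
    (inter_subset_inter_left _ hCZ'))

theorem infinite_closure_inter_closure {X : Type*} [TopologicalSpace X] [T1Space X]
    [ConnectedSpace X]
    (hX : ∀ x : X, ∀ N ∈ 𝓝 x, ∃ C ∈ 𝓝 x, C ⊆ N ∧ IsPreconnected (C \ {x})) {P R : Set X}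
    (hP : P.Nonempty) (hR : R.Nonempty) (hPR : Disjoint P (closure R))
    (hRP : Disjoint R (closure P)) (hcover : Dense (P ∪ R)) :
    (closure P ∩ closure R).Infinite := by
  intro hfin
  obtain ⟨p, hp⟩ := hP
  obtain ⟨q, hq⟩ := hR
  have hpR := disjoint_left.1 hPR hp
  have hqP := disjoint_left.1 hRP hq
  have : Nontrivial X := ⟨p, q, fun hpq => hqP (hpq ▸ subset_closure hp)⟩
  obtain ⟨x, -, hxP, hxR⟩ := isPreconnected_compl_of_finite hfin hX (closure P)ᶜ (closure R)ᶜ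
    isClosed_closure.isOpen_compl isClosed_closure.isOpen_compl (compl_inter _ _).subset
    ⟨q, fun h => hqP h.1, hqP⟩ ⟨p, fun h => hpR h.2, hpR⟩
  have hx := hcover x
  rw [closure_union] at hx
  exact hx.elim hxP hxR

theorem exists_card_le_of_forall_exists_mem_nhds {X : Type*} [TopologicalSpace X] [CompactSpace X]
    {Z : Set X} {r : X → X → Prop}
    (h : ∀ v : X, ∃ U ∈ 𝓝 v, ∃ N : ℕ, ∀ F : Finset X, (F : Set X) ⊆ Z ∩ U →
      (F : Set X).Pairwise r → F.card ≤ N) :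
    ∃ N : ℕ, ∀ F : Finset X, (F : Set X) ⊆ Z → (F : Set X).Pairwise r → F.card ≤ N := by
  classical
  suffices ∃ N : ℕ, ∀ F : Finset X, (F : Set X) ⊆ Z ∩ univ → (F : Set X).Pairwise r → F.card ≤ N by
    simpa only [inter_univ] using this
  refine isCompact_univ.induction_on ?_ ?_ ?_ fun v _ => ?_
  · exact ⟨0, fun F hF _ => by simpa using hF⟩
  · exact fun s t hst ⟨N, hN⟩ => ⟨N, fun F hF => hN F (hF.trans (inter_subset_inter_right Z hst))⟩
  · rintro s t ⟨N, hN⟩ ⟨N', hN'⟩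
    refine ⟨N + N', fun F hF hr => ?_⟩
    have hfilter (u : Set X) : (F.filter (· ∈ u) : Set X) ⊆ Z ∩ u := fun x hx =>
      ⟨(hF (Finset.mem_filter.1 hx).1).1, (Finset.mem_filter.1 hx).2⟩
    have hpair (u : Set X) : (F.filter (· ∈ u) : Set X).Pairwise r :=
      hr.mono (Finset.coe_subset.2 (Finset.filter_subset _ F))
    have hsub : F ⊆ F.filter (· ∈ s) ∪ F.filter (· ∈ t) := by
      rw [← Finset.filter_or]
      exact (Finset.filter_true_of_mem fun x hx => (hF hx).2).ge
    exact (Finset.card_le_card hsub).trans ((Finset.card_union_le _ _).trans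
      (add_le_add (hN _ (hfilter s) (hpair s)) (hN' _ (hfilter t) (hpair t))))
  · obtain ⟨U, hU, hN⟩ := h v
    exact ⟨U, mem_nhdsWithin_of_mem_nhds hU, hN⟩

theorem IsExpansive.eq_of_frequently_mem_WsLoc {f : M ≃ₜ M} {α : ℝ} (hexp : IsExpansive f α)
    {x y : M} (h : ∃ᶠ n : ℕ in Filter.atTop, (f⁻¹ ^ n) y ∈ WsLoc f α ((f⁻¹ ^ n) x)) : x = y := by
  refine hexp.eq_of_forall_dist_le (fun m => ?_) fun m => ?_
  all_goals obtain ⟨n, hmn, hn⟩ := Filter.frequently_atTop.1 h m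
  · have hf : f ^ (m + n) * f⁻¹ ^ n = f ^ m := by
      rw [pow_add, mul_assoc, inv_pow, mul_inv_cancel, mul_one]
    have hdist := mem_WsLoc_iff.1 hn (m + n)
    rwa [← Homeomorph.mul_apply, ← Homeomorph.mul_apply, hf] at hdist
  · have hf : f ^ (n - m) * f⁻¹ ^ n = f⁻¹ ^ m := by
      rw [← Nat.sub_add_cancel hmn, Nat.add_sub_cancel, pow_add, ← mul_assoc, inv_pow,
        mul_inv_cancel, one_mul]
    have hdist := mem_WsLoc_iff.1 hn (n - m)
    rwa [← Homeomorph.mul_apply, ← Homeomorph.mul_apply, hf] at hdist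

theorem IsExpansive.finite_of_card_le {f : M ≃ₜ M} {α : ℝ} (hexp : IsExpansive f α) {Z : Set M}
    (hZ : MapsTo (f⁻¹ : M ≃ₜ M) Z Z) {N : ℕ} (h : ∀ F : Finset M, (F : Set M) ⊆ Z →
      (F : Set M).Pairwise (fun x y => y ∉ WsLoc f α x) → F.card ≤ N) : Z.Finite := by
  classical
  by_contra hinf
  obtain ⟨F, hFZ, hF⟩ := Set.Infinite.exists_subset_card_eq hinf (N + 1)
  have hiter (k : ℕ) : MapsTo ⇑(f⁻¹ ^ k) Z Z := by
    rw [hom_coe_pow DFunLike.coe rfl (fun _ _ => rfl) f⁻¹ k]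
    exact hZ.iterate k
  have hpair (k : ℕ) : ∃ x : F × F, x.1 ≠ x.2 ∧
      (f⁻¹ ^ k) (x.2 : M) ∈ WsLoc f α ((f⁻¹ ^ k) (x.1 : M)) := by
    by_contra! hcon
    have hle := h (F.image fun x => (f⁻¹ ^ k) x) ?_ ?_
    · rw [Finset.card_image_of_injective _ (f⁻¹ ^ k).injective, hF] at hle
      exact hle.not_gt N.lt_succ_self
    · rw [Finset.coe_image, image_subset_iff]
      exact fun x hx => hiter k (hFZ hx)
    · rw [Finset.coe_image]
      rintro _ ⟨x, hx, rfl⟩ _ ⟨y, hy, rfl⟩ hxy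
      exact hcon (⟨x, hx⟩, ⟨y, hy⟩) fun h => hxy (congrArg (fun z : F => (f⁻¹ ^ k) (z : M)) h)
  choose x hx hxk using hpair
  obtain ⟨y, hy⟩ := Finite.exists_infinite_fiber x
  have hfreq : ∃ᶠ n : ℕ in Filter.atTop, x n = y :=
    Nat.frequently_atTop_iff_infinite.2 (infinite_coe_iff.1 hy)
  obtain ⟨n, hn⟩ := hfreq.exists
  refine hx n (Subtype.ext (hn ▸ hexp.eq_of_frequently_mem_WsLoc (hfreq.mono ?_)))
  rintro k rfl
  exact hxk k

/-! ### The index -/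

/-- The topologically hyperbolic periodic points with contracting dimension `r` and expanding
dimension `s`. Both dimensions are recorded, so that passing to `f⁻¹` merely swaps them. -/
def hyperbolicPts (f : M ≃ₜ M) (r s : ℕ) : Set M :=
  {p | ∃ l ≠ 0, ∃ g : (Fin r → ℝ) × (Fin s → ℝ) → M, IsLinearization (f ^ l) p g}

theorem PerHr_subset_hyperbolicPts (f : M ≃ₜ M) (n r : ℕ) :
    PerHr f n r ⊆ hyperbolicPts f r (n - r) :=
  fun _ hp => exists_isLinearization_of_mem_PerHr hp

theorem hyperbolicPts_subset_inv (f : M ≃ₜ M) (r s : ℕ) :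
    hyperbolicPts f r s ⊆ hyperbolicPts f⁻¹ s r :=
  fun _ ⟨l, hl, g, h⟩ => ⟨l, hl, g ∘ Prod.swap, inv_pow f l ▸ h.swap⟩

theorem hyperbolicPts_inv (f : M ≃ₜ M) (r s : ℕ) : hyperbolicPts f⁻¹ s r = hyperbolicPts f r s :=
  Subset.antisymm (by simpa only [inv_inv] using hyperbolicPts_subset_inv f⁻¹ s r)
    (hyperbolicPts_subset_inv f r s)

theorem hyperbolicPts_subset_periodicPts (f : M ≃ₜ M) (r s : ℕ) :
    hyperbolicPts f r s ⊆ Function.periodicPts f := by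
  rintro p ⟨l, hl, g, h⟩
  refine ⟨l, Nat.pos_of_ne_zero hl, ?_⟩
  rw [Function.IsPeriodicPt, Function.IsFixedPt, ← hom_coe_pow DFunLike.coe rfl (fun _ _ => rfl)]
  exact h.apply_self

theorem mapsTo_inv_hyperbolicPts (f : M ≃ₜ M) (r s : ℕ) :
    MapsTo (f⁻¹ : M ≃ₜ M) (hyperbolicPts f r s) (hyperbolicPts f r s) := by
  rintro p ⟨l, hl, g, h⟩
  refine ⟨l, hl, (f⁻¹ : M ≃ₜ M) ∘ g, ?_, ?_, fun ha hb => ?_⟩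
  · exact congrArg _ h.map_zero
  · exact (IsOpenEmbeddingOn.of_homeomorph f⁻¹ isOpen_univ).comp h.isOpenEmbeddingOn
      (mapsTo_univ _ _)
  · have hcomm : f ^ l * f⁻¹ = f⁻¹ * f ^ l := ((Commute.refl f).pow_left l).inv_right.eq
    rw [Function.comp_apply, ← Homeomorph.mul_apply, hcomm, Homeomorph.mul_apply, h.apply_map ha hb,
      Function.comp_apply]

theorem IsLinearization.tendsto_pow_apply {Es Eu : Type*} [NormedAddCommGroup Es]
    [NormedSpace ℝ Es] [NormedAddCommGroup Eu] [NormedSpace ℝ Eu] [Subsingleton Eu] {F : M ≃ₜ M}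
    {p : M} {g : Es × Eu → M} (h : IsLinearization F p g) {x : Es × Eu} (hx : x ∈ ball 0 4) :
    Filter.Tendsto (fun i : ℕ => (F ^ i) (g x)) Filter.atTop (𝓝 p) := by
  obtain ⟨a, b⟩ := x
  have ha : ‖a‖ < 4 := (norm_fst_le (a, b)).trans_lt (mem_ball_zero_iff.1 hx)
  have hg : ContinuousAt g 0 :=
    h.isOpenEmbeddingOn.continuousOn.continuousAt (ball_mem_nhds _ (by norm_num))
  have hpow : Filter.Tendsto (fun i : ℕ => (2⁻¹ : ℝ) ^ i • a) Filter.atTop (𝓝 0) := by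
    simpa only [zero_smul] using (tendsto_pow_atTop_nhds_zero_of_lt_one (r := (2⁻¹ : ℝ))
      (by norm_num) (by norm_num)).smul_const a
  have hlim : Filter.Tendsto (fun i : ℕ => g ((2⁻¹ : ℝ) ^ i • a, 0)) Filter.atTop (𝓝 p) :=
    h.map_zero ▸ hg.tendsto.comp (hpow.prodMk_nhds tendsto_const_nhds)
  refine hlim.congr fun i => ?_
  rw [Subsingleton.elim b 0, h.pow_apply i ha (by simp), smul_zero]

theorem hyperbolicPts_zero_right_eq_empty [PerfectSpace M] {f : M ≃ₜ M}
    (hdense : Dense (Function.periodicPts f)) (r : ℕ) : hyperbolicPts f r 0 = ∅ := by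
  refine eq_empty_of_forall_notMem fun p ⟨l, _, g, h⟩ => ?_
  have hp : g '' ball 0 4 ∈ 𝓝 p := (h.isOpenEmbeddingOn.isOpen_image Subset.rfl
    isOpen_ball).mem_nhds ⟨0, mem_ball_self (by norm_num), h.map_zero⟩
  obtain ⟨_, ⟨⟨m, hm, hper⟩, hne⟩, x, hx, rfl⟩ :=
    (hdense.sdiff_singleton p).inter_nhds_nonempty hp
  have hfix (i : ℕ) : ((f ^ l) ^ (m * i)) (g x) = g x := by
    rw [← pow_mul, hom_coe_pow DFunLike.coe rfl (fun _ _ => rfl)]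
    exact (hper.mul_const i).const_mul l
  have hlim := (h.tendsto_pow_apply hx).comp (Filter.tendsto_id.const_mul_atTop' hm)
  exact hne (tendsto_nhds_unique (tendsto_const_nhds.congr fun i => (hfix i).symm) hlim)

theorem IsExpansive.exists_forall_nonempty_plaqueChart [CompactSpace M] {f : M ≃ₜ M} {α : ℝ}
    (hα : 0 < α) (hexp : IsExpansive f α) :
    ∃ ε > 0, ∃ δ > 0, IsExpansive f (2 * ε) ∧ ∀ r s, ∀ p ∈ hyperbolicPts f r s,
      Nonempty (PlaqueChart (Fin r → ℝ) (Fin s → ℝ) f ε δ p) := by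
  have hexp' : IsExpansive f (α / 2) := hexp.mono (by linarith)
  obtain ⟨δ, hδ, hf⟩ := hexp'.exists_isStrictScale (half_pos hα)
  obtain ⟨δ', hδ', hf'⟩ := hexp'.inv.exists_isStrictScale (half_pos hα)
  refine ⟨α / 2, half_pos hα, min δ δ', lt_min hδ hδ', by rwa [mul_div_cancel₀ _ two_ne_zero], ?_⟩
  rintro r s p ⟨l, hl, g, h⟩
  exact h.nonempty_plaqueChart hl (half_pos hα) hexp' (hf.mono (min_le_left δ δ'))
    (hf'.mono (min_le_right δ δ'))

theorem disjoint_hyperbolicPts_closure_lt_left [CompactSpace M] {f : M ≃ₜ M} {α : ℝ} (hα : 0 < α)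
    (hexp : IsExpansive f α) (r s : ℕ) :
    Disjoint (hyperbolicPts f r s) (closure {q | ∃ r' < r, ∃ s', q ∈ hyperbolicPts f r' s'}) := by
  obtain ⟨ε, hε, δ, hδ, hexp', hchart⟩ := hexp.exists_forall_nonempty_plaqueChart hα
  refine disjoint_left.2 fun p hp hcl => ?_
  obtain ⟨H⟩ := hchart r s p hp
  obtain ⟨q, ⟨r', hr', s', hq⟩, hle⟩ := ((mem_closure_iff_frequently.1 hcl).and_eventually
    (H.eventually_finrank_le hε.le hδ hexp')).exists
  obtain ⟨H'⟩ := hchart r' s' q hq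
  have hrr' := hle _ _ H'
  simp only [Module.finrank_fin_fun] at hrr'
  exact hrr'.not_gt hr'

theorem disjoint_hyperbolicPts_closure_lt_right [CompactSpace M] {f : M ≃ₜ M} {α : ℝ} (hα : 0 < α)
    (hexp : IsExpansive f α) (r s : ℕ) :
    Disjoint (hyperbolicPts f r s) (closure {q | ∃ s' < s, ∃ r', q ∈ hyperbolicPts f r' s'}) := by
  simpa only [hyperbolicPts_inv] using disjoint_hyperbolicPts_closure_lt_left hα hexp.inv s r

theorem IsExpansive.finite_closure_inter_closure [CompactSpace M] {n : ℕ}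
    [ChartedSpace (EuclideanSpace ℝ (Fin n)) M] {f : M ≃ₜ M} {α : ℝ} (hα : 0 < α)
    (hexp : IsExpansive f α) {r : ℕ} {R : Set M}
    (hR : R ⊆ {q | ∃ r', ∃ s' > 1, q ∈ hyperbolicPts f r' s'})
    (hfR : MapsTo (f⁻¹ : M ≃ₜ M) R R) (hPR : Disjoint (hyperbolicPts f r 1) R) :
    (closure (hyperbolicPts f r 1) ∩ closure R).Finite := by
  have : LocallyConnectedSpace M :=
    ChartedSpace.locallyConnectedSpace (EuclideanSpace ℝ (Fin n)) M
  obtain ⟨ε, hε, δ, hδ, hexp', hchart⟩ := hexp.exists_forall_nonempty_plaqueChart hα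
  have hlocal (v : M) : ∃ U ∈ 𝓝 v, ∃ N : ℕ, ∀ F : Finset M,
      (F : Set M) ⊆ closure (hyperbolicPts f r 1) ∩ closure R ∩ U →
      (F : Set M).Pairwise (fun x y => y ∉ WsLoc f ε x) → F.card ≤ N := by
    obtain ⟨γ, hγ, hγv, hγN⟩ := exists_isOpenEmbeddingOn_univ (E := EuclideanSpace ℝ (Fin n))
      (ball_mem_nhds v (half_pos hδ))
    refine exists_mem_nhds_card_le_of_pairwise_notMem_WsLoc hε.le hexp' hδ
      (hyperbolicPts_subset_periodicPts f r 1) (fun q hq => ?_) hPR (hchart r 1)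
      (ContinuousLinearEquiv.funUnique (Fin 1) ℝ ℝ) (fun q hq => ?_) hγ (fun x hx y hy => ?_)
      ⟨0, hγv⟩
    · obtain ⟨r', s', -, hq⟩ := hR hq
      exact hyperbolicPts_subset_periodicPts f r' s' hq
    · obtain ⟨r', s', hs', hq⟩ := hR hq
      obtain ⟨H⟩ := hchart r' s' q hq
      exact ⟨s', hs', H.unstable, H.isUnstablePlaque⟩
    · linarith [dist_triangle_right x y v, mem_ball.1 (hγN hx), mem_ball.1 (hγN hy)]
  obtain ⟨N, hN⟩ := exists_card_le_of_forall_exists_mem_nhds hlocal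
  exact (hexp'.mono (by linarith)).finite_of_card_le (((mapsTo_inv_hyperbolicPts f r 1).closure
    f⁻¹.continuous).inter_inter (hfR.closure f⁻¹.continuous)) hN

theorem IsExpansive.eq_empty_of_dense_hyperbolicPts_union [CompactSpace M] [ConnectedSpace M]
    {n : ℕ} (hn : 2 ≤ n) [ChartedSpace (EuclideanSpace ℝ (Fin n)) M] {f : M ≃ₜ M} {α : ℝ}
    (hα : 0 < α) (hexp : IsExpansive f α) {r : ℕ} (hne : (hyperbolicPts f r 1).Nonempty)
    (hdense : Dense (hyperbolicPts f r 1 ∪ {q | ∃ r' < r, ∃ s' > 1, q ∈ hyperbolicPts f r' s'})) :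
    {q | ∃ r' < r, ∃ s' > 1, q ∈ hyperbolicPts f r' s'} = ∅ := by
  set P : Set M := hyperbolicPts f r 1
  set R : Set M := {q | ∃ r' < r, ∃ s' > 1, q ∈ hyperbolicPts f r' s'}
  have hPR : Disjoint P (closure R) := by
    refine (disjoint_hyperbolicPts_closure_lt_left hα hexp r 1).mono_right (closure_mono ?_)
    rintro q ⟨r', hr', s', -, hq⟩
    exact ⟨r', hr', s', hq⟩
  have hRP : Disjoint R (closure P) := by
    rw [disjoint_left]
    rintro q ⟨r', -, s', hs', hq⟩
    refine disjoint_left.1 ((disjoint_hyperbolicPts_closure_lt_right hα hexp r' s').mono_right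
      (closure_mono ?_)) hq
    exact fun p hp => ⟨1, hs', r, hp⟩
  have hfR : MapsTo (f⁻¹ : M ≃ₜ M) R R := by
    rintro q ⟨r', hr', s', hs', hq⟩
    exact ⟨r', hr', s', hs', mapsTo_inv_hyperbolicPts f r' s' hq⟩
  have hRsub : R ⊆ {q | ∃ r', ∃ s' > 1, q ∈ hyperbolicPts f r' s'} := by
    rintro q ⟨r', -, hq⟩
    exact ⟨r', hq⟩
  have hrank : 1 < Module.rank ℝ (EuclideanSpace ℝ (Fin n)) := by
    rw [← Module.finrank_eq_rank, finrank_euclideanSpace_fin]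
    exact_mod_cast hn
  by_contra hR
  exact infinite_closure_inter_closure (fun _ _ => exists_isPreconnected_sdiff_singleton hrank) hne
    (nonempty_iff_ne_empty.2 hR) hPR hRP hdense
    (hexp.finite_closure_inter_closure (n := n) hα hRsub hfR (hPR.mono_right subset_closure))

theorem IsExpansive.hyperbolicPts_eq_empty_of_nonempty [CompactSpace M] [ConnectedSpace M] {d : ℕ}
    [ChartedSpace (EuclideanSpace ℝ (Fin (d + 1))) M] {f : M ≃ₜ M} {α : ℝ} (hα : 0 < α)
    (hexp : IsExpansive f α) (hsink : hyperbolicPts f (d + 1) 0 = ∅)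
    (hdense : Dense {p | ∃ r s, r + s = d + 1 ∧ p ∈ hyperbolicPts f r s})
    (hne : (hyperbolicPts f d 1).Nonempty) {r s : ℕ} (hrs : r + s = d + 1) (hr : r ≠ d) :
    hyperbolicPts f r s = ∅ := by
  have hcases {r s : ℕ} (hrs : r + s = d + 1) {p : M} (hp : p ∈ hyperbolicPts f r s) :
      r = d ∧ s = 1 ∨ ∃ r' < d, ∃ s' > 1, p ∈ hyperbolicPts f r' s' := by
    by_cases hr : r = d
    · exact .inl ⟨hr, by omega⟩
    · have hs : s ≠ 0 := by
        rintro rfl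
        obtain rfl : r = d + 1 := hrs
        exact hsink.subset hp
      exact .inr ⟨r, by omega, s, by omega, hp⟩
  refine eq_empty_of_forall_notMem fun q hq => ?_
  obtain ⟨r', hr', hq'⟩ := (hcases hrs hq).resolve_left fun h => hr h.1
  refine (hexp.eq_empty_of_dense_hyperbolicPts_union (n := d + 1) (by omega) hα hne ?_).subset
    ⟨r', hr', hq'⟩
  refine hdense.mono ?_
  rintro p ⟨r, s, hrs, hp⟩
  refine (hcases hrs hp).imp_left ?_
  rintro ⟨rfl, rfl⟩
  exact hp

theorem IsExpansive.exists_forall_hyperbolicPts_eq_empty [CompactSpace M] [ConnectedSpace M]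
    {d : ℕ} (hd : d ≤ 3) [ChartedSpace (EuclideanSpace ℝ (Fin (d + 1))) M] {f : M ≃ₜ M} {α : ℝ}
    (hα : 0 < α) (hexp : IsExpansive f α)
    (hdense : Dense {p | ∃ r s, r + s = d + 1 ∧ p ∈ hyperbolicPts f r s}) :
    ∃ r₀ ≤ d + 1, ∀ r s, r + s = d + 1 → r ≠ r₀ → hyperbolicPts f r s = ∅ := by
  have : Nontrivial M := nontrivial_of_chartedSpace (EuclideanSpace ℝ (Fin (d + 1))) M
  have hdense' : Dense {p | ∃ r s, r + s = d + 1 ∧ p ∈ hyperbolicPts f⁻¹ r s} := by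
    refine hdense.mono ?_
    rintro p ⟨r, s, hrs, hp⟩
    exact ⟨s, r, add_comm s r ▸ hrs, hyperbolicPts_subset_inv f r s hp⟩
  have hsink : hyperbolicPts f (d + 1) 0 = ∅ := by
    refine hyperbolicPts_zero_right_eq_empty (hdense.mono ?_) (d + 1)
    rintro p ⟨r, s, -, hp⟩
    exact hyperbolicPts_subset_periodicPts f r s hp
  have hsource : hyperbolicPts f⁻¹ (d + 1) 0 = ∅ := by
    refine hyperbolicPts_zero_right_eq_empty (hdense'.mono ?_) (d + 1)
    rintro p ⟨r, s, -, hp⟩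
    exact hyperbolicPts_subset_periodicPts f⁻¹ r s hp
  rcases (hyperbolicPts f d 1).eq_empty_or_nonempty with hs | hs
  · rcases (hyperbolicPts f⁻¹ d 1).eq_empty_or_nonempty with hu | hu
    · rw [hyperbolicPts_inv] at hu hsource
      refine ⟨min 2 (d + 1), min_le_right _ _, fun r s hrs hr => ?_⟩
      obtain ⟨rfl, rfl⟩ | ⟨rfl, rfl⟩ | ⟨rfl, rfl⟩ | ⟨rfl, rfl⟩ :
          r = 0 ∧ s = d + 1 ∨ r = 1 ∧ s = d ∨ r = d ∧ s = 1 ∨ r = d + 1 ∧ s = 0 := by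
        omega
      all_goals assumption
    · refine ⟨1, by omega, fun r s hrs hr => ?_⟩
      rw [← hyperbolicPts_inv]
      exact hexp.inv.hyperbolicPts_eq_empty_of_nonempty hα hsource hdense' hu (by omega) (by omega)
  · exact ⟨d, by omega, fun r s hrs hr =>
      hexp.hyperbolicPts_eq_empty_of_nonempty hα hsink hdense hs hrs hr⟩

theorem mem_PerH_iff {f : M ≃ₜ M} {n : ℕ} {x : M} : x ∈ PerH f n ↔ ∃ r ≤ n, x ∈ PerHr f n r := by
  simp [PerH]

theorem stmt2_general {M : Type*} [MetricSpace M] [CompactSpace M] [ConnectedSpace M]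
    (n : ℕ) [ChartedSpace (EuclideanSpace ℝ (Fin n)) M] (hn : n ≤ 4)
    (f : M ≃ₜ M) (α : ℝ) (hα : 0 < α) (hexp : IsExpansive f α)
    (hdense : closure (PerH f n) = Set.univ) :
    ∃ r : ℕ, PerH f n = PerHr f n r := by
  obtain _ | d := n
  · exact ⟨0, by simp [PerH]⟩
  have hdense' : Dense {p | ∃ r s, r + s = d + 1 ∧ p ∈ hyperbolicPts f r s} := by
    refine (dense_iff_closure_eq.2 hdense).mono fun x hx => ?_
    obtain ⟨r, hr, hx⟩ := mem_PerH_iff.1 hx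
    exact ⟨r, d + 1 - r, by omega, PerHr_subset_hyperbolicPts f (d + 1) r hx⟩
  obtain ⟨r₀, hr₀, hempty⟩ :=
    hexp.exists_forall_hyperbolicPts_eq_empty (by omega) hα hdense'
  refine ⟨r₀, Subset.antisymm (fun x hx => ?_) fun x hx => mem_PerH_iff.2 ⟨r₀, hr₀, hx⟩⟩
  obtain ⟨r, hr, hx⟩ := mem_PerH_iff.1 hx
  by_contra hx₀
  have hne : r ≠ r₀ := by
    rintro rfl
    exact hx₀ hx
  exact (hempty r (d + 1 - r) (by omega) hne).subset (PerHr_subset_hyperbolicPts f (d + 1) r hx)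

/-- **Corollary.** An expansive homeomorphism of a compact connected boundaryless manifold
of dimension `3` or `4` with dense topologically hyperbolic periodic points has all its
topologically hyperbolic periodic points of the same index. -/
theorem stmt2 {M : Type*} [MetricSpace M] [CompactSpace M] [ConnectedSpace M]
    (n : ℕ) [ChartedSpace (EuclideanSpace ℝ (Fin n)) M] (hn : n = 3 ∨ n = 4)
    (f : M ≃ₜ M) (α : ℝ) (hα : 0 < α) (hexp : IsExpansive f α)
    (hdense : closure (PerH f n) = Set.univ) :
    ∃ r : ℕ, PerH f n = PerHr f n r :=
  stmt2_general n (by omega) f α hα hexp hdense
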